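/- arXiv:1511.07317 — 5 statements merged into one kernel-verified Lean document; each statement's English description precedes it below -/
import Mathlib

section
/- Let k ≥ 1 be an integer and let p be an odd prime with p ≥ k. Then E_{(a,b,c)∈(ℤ/pℤ)³} ∏_{i=0}^{k−1} Λ_p(a + i(b²+c²)) equals (1 + 1/(p−1))^k·(1 − k/p + 2(k−1)/p² − (k−1)/p³) if p ≡ 1 (mod 4), and equals (1 + 1/(p−1))^k·(1 − k/p + (k−1)/p³) if p ≡ 3 (mod 4). -/
noncomputable def localVM (q : ℕ) (n : ℤ) : ℝ :=
  if Int.gcd n q = 1 then (q : ℝ) / (Nat.totient q : ℝ) else 0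

/-- E_{(a,b,c)∈(ℤ/pℤ)³} ∏_{i=0}^{k−1} Λ_p(a + i(b²+c²)). -/
noncomputable def betapAP (k p : ℕ) : ℝ :=
  (∑ a : Fin p, ∑ b : Fin p, ∑ c : Fin p,
      ∏ i ∈ Finset.range k,
        localVM p ((a : ℤ) + (i : ℤ) * ((b : ℤ) ^ 2 + (c : ℤ) ^ 2))) / (p : ℝ) ^ 3

theorem aux_a (k p : ℕ) [Fact p.Prime] (hk : 1 ≤ k) (hpk : k ≤ p) (D : ZMod p) (C : ℝ) :
    (∑ a : ZMod p, if ∀ i ∈ Finset.range k, a + (i : ZMod p) * D ≠ 0 then C else 0) =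
      C * ((p : ℝ) - k + (if D = 0 then (1:ℝ) else 0) * (k - 1)) := by
  classical
  have hfil : (Finset.univ.filter (fun a : ZMod p => ∀ i ∈ Finset.range k, a + (i : ZMod p) * D ≠ 0))
      = ((Finset.range k).image (fun i : ℕ => -((i : ZMod p) * D)))ᶜ := by
    ext a
    simp only [Finset.mem_filter, Finset.mem_univ, true_and, Finset.mem_compl, Finset.mem_image,
      not_exists, not_and]
    refine forall_congr' fun i => forall_congr' fun _ => ?_
    rw [Ne, not_iff_not, add_eq_zero_iff_eq_neg, eq_comm]
  rw [← Finset.sum_filter, hfil, Finset.sum_const, Finset.card_compl, ZMod.card, nsmul_eq_mul]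
  by_cases hD : D = 0
  · have : ((Finset.range k).image (fun i : ℕ => -((i : ZMod p) * D))) = {0} := by
      subst hD
      ext x
      simp only [mul_zero, neg_zero, Finset.mem_image, Finset.mem_range, Finset.mem_singleton]
      exact ⟨fun ⟨_, _, h⟩ => h.symm, fun h => ⟨0, hk, h.symm⟩⟩
    rw [this, Finset.card_singleton, Nat.cast_sub (hk.trans hpk)]
    simp [hD]; ring
  · rw [Finset.card_image_of_injOn, Finset.card_range, Nat.cast_sub hpk]
    · simp [hD]; ring
    · intro i hi j hj h
      simp only [neg_inj] at h
      have h2 := mul_right_cancel₀ hD h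
      rw [ZMod.natCast_eq_natCast_iff'] at h2
      simp only [Finset.coe_range, Set.mem_Iio] at hi hj
      rwa [Nat.mod_eq_of_lt (by omega), Nat.mod_eq_of_lt (by omega)] at h2

theorem aux_bc (p : ℕ) [Fact p.Prime] (hodd : Odd p) :
    (∑ b : ZMod p, ∑ c : ZMod p, if b ^ 2 + c ^ 2 = 0 then (1:ℝ) else 0) =
      if p % 4 = 1 then 2 * (p : ℝ) - 1 else 1 := by
  classical
  have hp2 : p % 4 ≠ 3 ↔ p % 4 = 1 := by
    have := Nat.odd_iff.1 hodd
    omega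
  have hex := ZMod.exists_sq_eq_neg_one_iff (p := p)
  rw [hp2] at hex
  split_ifs with h
  · obtain ⟨s, hs⟩ := hex.2 h
    have hs0 : s ≠ 0 := by rintro rfl; simp at hs
    have h2 : (2 : ZMod p) ≠ 0 := by
      intro h2
      have : ((2:ℕ) : ZMod p) = 0 := by exact_mod_cast h2
      rw [ZMod.natCast_eq_zero_iff] at this
      have := Nat.le_of_dvd (by norm_num) this
      have := (Fact.out : p.Prime).two_le
      have h3 : p = 2 := by omega
      subst h3
      simp at h
    have key : ∀ b : ZMod p, (∑ c : ZMod p, if b ^ 2 + c ^ 2 = 0 then (1:ℝ) else 0) =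
        2 - if b = 0 then 1 else 0 := by
      intro b
      rw [← Finset.sum_filter]
      have : Finset.univ.filter (fun c : ZMod p => b ^ 2 + c ^ 2 = 0) = {s * b, -(s * b)} := by
        ext c
        simp only [Finset.mem_filter, Finset.mem_univ, true_and, Finset.mem_insert,
          Finset.mem_singleton]
        rw [← sq_eq_sq_iff_eq_or_eq_neg]
        have : (s * b) ^ 2 = - b ^ 2 := by linear_combination (-b ^ 2) * hs
        rw [this]
        constructor <;> intro h <;> linear_combination h
      rw [this]
      by_cases hb : b = 0
      · subst hb; simp; norm_num
      · rw [Finset.sum_pair]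
        · simp [hb]; norm_num
        · intro h
          have : 2 * (s * b) = 0 := by linear_combination h
          exact (mul_ne_zero h2 (mul_ne_zero hs0 hb)) this
    simp_rw [key]
    simp [Finset.sum_sub_distrib, ZMod.card]
    ring
  · have hiff : ∀ b c : ZMod p, b ^ 2 + c ^ 2 = 0 ↔ b = 0 ∧ c = 0 := by
      intro b c
      constructor
      · intro hbc
        have hc : c = 0 := by
          by_contra hc
          exact h (hex.1 ⟨b / c, by field_simp; linear_combination -hbc⟩)
        subst hc
        simpa using hbc
      · rintro ⟨rfl, rfl⟩; simp
    simp_rw [hiff, ite_and]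
    simp

theorem localVM_eq (p : ℕ) [hp : Fact p.Prime] (n : ℤ) :
    localVM p n = if (n : ZMod p) ≠ 0 then (p : ℝ) / ((p : ℝ) - 1) else 0 := by
  unfold localVM
  have : Int.gcd n p = 1 ↔ (n : ZMod p) ≠ 0 := by
    rw [Ne, ZMod.intCast_zmod_eq_zero_iff_dvd, Int.gcd_comm, ← Int.isCoprime_iff_gcd_eq_one,
      (Nat.prime_iff_prime_int.1 hp.out).coprime_iff_not_dvd]
  simp only [this, Nat.totient_prime hp.out, Nat.cast_sub hp.out.one_le, Nat.cast_one]

theorem prod_eq (p k : ℕ) [hp : Fact p.Prime] (a D : ℤ) :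
    ∏ i ∈ Finset.range k, localVM p (a + (i : ℤ) * D) =
      if ∀ i ∈ Finset.range k, (a : ZMod p) + (i : ZMod p) * (D : ZMod p) ≠ 0 then
        ((p : ℝ) / ((p : ℝ) - 1)) ^ k else 0 := by
  simp_rw [localVM_eq]
  rw [Finset.prod_ite_zero]
  simp [div_pow]

theorem sum_fin (p : ℕ) [NeZero p] (f : ZMod p → ℝ) :
    ∑ a : Fin p, f ((a : ℤ) : ZMod p) = ∑ a : ZMod p, f a := by
  obtain ⟨n, rfl⟩ := Nat.exists_eq_succ_of_ne_zero (NeZero.ne p)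
  refine Finset.sum_congr rfl fun a _ => ?_
  congr 1
  have := ZMod.natCast_zmod_val (n := n + 1) a
  rw [Int.cast_natCast]
  exact this

/-- explicit value of the local factor for primes p ≥ k. -/
theorem statement3 (k p : ℕ) (hk : 1 ≤ k) (hp : p.Prime) (hodd : Odd p) (hpk : k ≤ p) :
    betapAP k p =
      if p % 4 = 1 then
        (1 + 1 / ((p : ℝ) - 1)) ^ k *
          (1 - (k : ℝ) / (p : ℝ) + 2 * ((k : ℝ) - 1) / (p : ℝ) ^ 2
            - ((k : ℝ) - 1) / (p : ℝ) ^ 3)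
      else
        (1 + 1 / ((p : ℝ) - 1)) ^ k *
          (1 - (k : ℝ) / (p : ℝ) + ((k : ℝ) - 1) / (p : ℝ) ^ 3) := by
  haveI : Fact p.Prime := ⟨hp⟩
  have hp1 : (p : ℝ) - 1 ≠ 0 := by
    have : (1:ℝ) < p := by exact_mod_cast hp.one_lt
    linarith
  have hp0 : (p : ℝ) ≠ 0 := by exact_mod_cast hp.ne_zero
  have hC : (1 + 1 / ((p : ℝ) - 1)) = (p : ℝ) / ((p : ℝ) - 1) := by field_simp; ring
  unfold betapAP
  simp_rw [prod_eq, hC]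
  push_cast
  set C := ((p : ℝ) / ((p : ℝ) - 1)) ^ k with hCdef
  have e : (∑ a : Fin p, ∑ b : Fin p, ∑ c : Fin p,
      if ∀ i ∈ Finset.range k, (((a : ℤ) : ZMod p)) + (i : ZMod p) * ((((b : ℤ) : ZMod p)) ^ 2 + (((c : ℤ) : ZMod p)) ^ 2) ≠ 0
        then C else 0) = ∑ b : ZMod p, ∑ c : ZMod p, ∑ a : ZMod p,
      if ∀ i ∈ Finset.range k, a + (i : ZMod p) * (b ^ 2 + c ^ 2) ≠ 0 then C else 0 := by
    rw [sum_fin p (fun a => ∑ b : Fin p, ∑ c : Fin p,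
      if ∀ i ∈ Finset.range k, a + (i : ZMod p) * ((((b : ℤ) : ZMod p)) ^ 2 + (((c : ℤ) : ZMod p)) ^ 2) ≠ 0
        then C else 0)]
    have h1 : ∀ a : ZMod p, (∑ b : Fin p, ∑ c : Fin p,
      if ∀ i ∈ Finset.range k, a + (i : ZMod p) * ((((b : ℤ) : ZMod p)) ^ 2 + (((c : ℤ) : ZMod p)) ^ 2) ≠ 0
        then C else 0) = ∑ b : ZMod p, ∑ c : ZMod p,
      if ∀ i ∈ Finset.range k, a + (i : ZMod p) * (b ^ 2 + c ^ 2) ≠ 0 then C else 0 := by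
      intro a
      rw [sum_fin p (fun b => ∑ c : Fin p,
        if ∀ i ∈ Finset.range k, a + (i : ZMod p) * (b ^ 2 + (((c : ℤ) : ZMod p)) ^ 2) ≠ 0
        then C else 0)]
      refine Finset.sum_congr rfl fun b _ => ?_
      exact sum_fin p (fun c =>
        if ∀ i ∈ Finset.range k, a + (i : ZMod p) * (b ^ 2 + c ^ 2) ≠ 0
        then C else 0)
    simp_rw [h1]
    rw [Finset.sum_comm]
    refine Finset.sum_congr rfl fun b _ => ?_
    rw [Finset.sum_comm]
  have e2 : (∑ b : ZMod p, ∑ c : ZMod p, ∑ a : ZMod p,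
      if ∀ i ∈ Finset.range k, a + (i : ZMod p) * (b ^ 2 + c ^ 2) ≠ 0 then C else 0) =
      C * ((p : ℝ) ^ 2 * (p - k) + (if p % 4 = 1 then 2 * (p : ℝ) - 1 else 1) * (k - 1)) := by
    simp_rw [aux_a k p hk hpk]
    rw [← aux_bc p hodd]
    simp_rw [← Finset.mul_sum, Finset.sum_add_distrib, ← Finset.sum_mul]
    simp only [Finset.sum_const, Finset.card_univ, ZMod.card, nsmul_eq_mul]
    ring
  simp only [Int.cast_natCast] at e
  rw [e, e2]
  split_ifs <;> field_simp <;> ring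
end

section
/- Let k ≥ 2 be an integer. For every odd prime p with p ≤ k, E_{(a,b,c)∈(ℤ/pℤ)³} ∏_{i=0}^{k−1} Λ_p(a + i(b²+c²)) equals (p/(p−1))^k·(p−1)(2p−1)/p³ if p ≡ 1 (mod 4), and equals (p/(p−1))^k·(p−1)/p³ if p ≡ 3 (mod 4). Moreover E_{(a,b,c)∈(ℤ/2ℤ)³} ∏_{i=0}^{k−1} Λ_2(a + i(b²+c²)) = 2^{k−2}. -/
lemma sum_fin_zmod (p : ℕ) [Fact p.Prime] (f : ZMod p → ℝ) :
    ∑ a : Fin p, f (((a : ℕ) : ℤ) : ZMod p) = ∑ x : ZMod p, f x := by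
  have hp : p ≠ 0 := (Fact.out : p.Prime).ne_zero
  obtain ⟨n, rfl⟩ := Nat.exists_eq_succ_of_ne_zero hp
  refine Finset.sum_congr rfl ?_
  intro a _
  congr 1
  rw [Int.cast_natCast]
  exact ZMod.natCast_zmod_val (n := n+1) a

lemma localVM_prime (p : ℕ) [hp : Fact p.Prime] (n : ℤ) :
    localVM p n = if (n : ZMod p) = 0 then 0 else (p : ℝ) / ((p : ℝ) - 1) := by
  unfold localVM
  rw [Nat.totient_prime hp.out, Nat.cast_sub hp.out.one_le, Nat.cast_one]
  have h : Int.gcd n p = 1 ↔ ¬ ((n : ZMod p) = 0) := by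
    rw [ZMod.intCast_zmod_eq_zero_iff_dvd, Int.gcd_comm, ← Int.isCoprime_iff_gcd_eq_one]
    exact (Nat.prime_iff_prime_int.mp hp.out).coprime_iff_not_dvd
  by_cases h0 : (n : ZMod p) = 0 <;> simp [h, h0]

lemma prod_val (k p : ℕ) [hp : Fact p.Prime] (hpk : p ≤ k) (x s : ZMod p) :
    ∏ i ∈ Finset.range k, (if x + (i : ZMod p) * s = 0 then (0:ℝ) else (p : ℝ) / ((p : ℝ) - 1))
      = (if x = 0 then 0 else ((p : ℝ) / ((p : ℝ) - 1)) ^ k) * (if s = 0 then 1 else 0) := by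
  by_cases hs : s = 0
  · subst hs
    have hk : k ≠ 0 := by have := hp.out.pos; omega
    by_cases hx : x = 0 <;> simp [hx, hk, div_pow]
  · simp only [hs, if_false, mul_zero]
    refine Finset.prod_eq_zero (i := (-x / s).val) ?_ ?_
    · exact Finset.mem_range.mpr (lt_of_lt_of_le (ZMod.val_lt _) hpk)
    · rw [if_pos]
      rw [ZMod.natCast_zmod_val]
      field_simp
      ring

lemma beta_val (k p : ℕ) [hp : Fact p.Prime] (hpk : p ≤ k) :
    betapAP k p = ((p : ℝ) - 1) * ((p : ℝ) / ((p : ℝ) - 1)) ^ k *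
      (∑ b : ZMod p, ∑ c : ZMod p, if b ^ 2 + c ^ 2 = 0 then (1:ℝ) else 0) / (p : ℝ) ^ 3 := by
  unfold betapAP
  congr 1
  have h1 : ∀ a b c : Fin p, ∏ i ∈ Finset.range k,
        localVM p ((a : ℤ) + (i : ℤ) * ((b : ℤ) ^ 2 + (c : ℤ) ^ 2)) =
      (fun x y z : ZMod p => (if x = 0 then 0 else ((p : ℝ) / ((p : ℝ) - 1)) ^ k) *
        (if y ^ 2 + z ^ 2 = 0 then (1:ℝ) else 0)) (((a : ℕ) : ℤ) : ZMod p)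
        (((b : ℕ) : ℤ) : ZMod p) (((c : ℕ) : ℤ) : ZMod p) := by
    intro a b c
    simp only []
    rw [← prod_val k p hpk]
    refine Finset.prod_congr rfl ?_
    intro i _
    rw [localVM_prime]
    push_cast
    rfl
  simp only [h1]
  generalize hF : (fun x y z : ZMod p => (if x = 0 then 0 else ((p : ℝ) / ((p : ℝ) - 1)) ^ k) *
        (if y ^ 2 + z ^ 2 = 0 then (1:ℝ) else 0)) = F
  have e : ∑ a : Fin p, ∑ b : Fin p, ∑ c : Fin p, F (((a : ℕ) : ℤ) : ZMod p)
        (((b : ℕ) : ℤ) : ZMod p) (((c : ℕ) : ℤ) : ZMod p) = ∑ x, ∑ y, ∑ z, F x y z := by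
    rw [← sum_fin_zmod p (fun x => ∑ y, ∑ z, F x y z)]
    refine Finset.sum_congr rfl fun a _ => ?_
    rw [← sum_fin_zmod p (fun y => ∑ z, F _ y z)]
    refine Finset.sum_congr rfl fun b _ => ?_
    rw [← sum_fin_zmod p (fun z => F _ _ z)]
  refine Eq.trans ?_ (e.trans ?_)
  · subst hF; rfl
  · subst hF
    simp only [← Finset.mul_sum]
    rw [← Finset.sum_mul]
    congr 1
    have : ∀ x : ZMod p, (if x = 0 then (0:ℝ) else ((p : ℝ) / ((p : ℝ) - 1)) ^ k) =
      ((p : ℝ) / ((p : ℝ) - 1)) ^ k - if x = 0 then ((p : ℝ) / ((p : ℝ) - 1)) ^ k else 0 := by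
      intro x; split_ifs <;> simp
    simp only [this, Finset.sum_sub_distrib]
    simp [ZMod.card]
    ring

lemma count_one (p : ℕ) [hp : Fact p.Prime] (h2 : Odd p) (h : p % 4 = 1) :
    (∑ b : ZMod p, ∑ c : ZMod p, if b ^ 2 + c ^ 2 = 0 then (1:ℝ) else 0) = 2 * (p:ℝ) - 1 := by
  obtain ⟨j, hj⟩ := (ZMod.exists_sq_eq_neg_one_iff (p := p)).mpr (by omega)
  have h20 : (2 : ZMod p) ≠ 0 := by
    intro h0
    have : ((2:ℕ) : ZMod p) = 0 := by exact_mod_cast h0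
    rw [ZMod.natCast_eq_zero_iff] at this
    have := Nat.le_of_dvd (by norm_num) this
    have := hp.out.two_le
    omega
  have hj0 : j ≠ 0 := by rintro rfl; simp at hj
  have key : ∀ b : ZMod p, (∑ c : ZMod p, if b ^ 2 + c ^ 2 = 0 then (1:ℝ) else 0) =
      2 - if b = 0 then 1 else 0 := by
    intro b
    by_cases hb : b = 0
    · subst hb; simp; norm_num
    · have hne : j * b ≠ -(j * b) := by
        intro h
        have : 2 * (j * b) = 0 := by linear_combination h
        simp [h20, hj0, hb] at this
      have : ∀ c : ZMod p, b ^ 2 + c ^ 2 = 0 ↔ c ∈ ({j * b, -(j * b)} : Finset (ZMod p)) := by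
        intro c
        rw [Finset.mem_insert, Finset.mem_singleton, ← sq_eq_sq_iff_eq_or_eq_neg]
        constructor
        · intro h; linear_combination h + b^2 * hj
        · intro h; linear_combination h - b^2 * hj
      simp only [this, Finset.sum_ite_mem, Finset.univ_inter, Finset.sum_pair hne, hb, if_false]
      norm_num
  simp only [key, Finset.sum_sub_distrib]
  simp [ZMod.card]
  ring

lemma count_three (p : ℕ) [hp : Fact p.Prime] (h : p % 4 = 3) :
    (∑ b : ZMod p, ∑ c : ZMod p, if b ^ 2 + c ^ 2 = 0 then (1:ℝ) else 0) = 1 := by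
  have hns : ¬ IsSquare (-1 : ZMod p) := by
    rw [ZMod.exists_sq_eq_neg_one_iff]; omega
  have key : ∀ b : ZMod p, (∑ c : ZMod p, if b ^ 2 + c ^ 2 = 0 then (1:ℝ) else 0) =
      if b = 0 then 1 else 0 := by
    intro b
    by_cases hb : b = 0
    · subst hb; simp
    · rw [if_neg hb]
      refine Finset.sum_eq_zero fun c _ => if_neg fun h0 => hns ⟨c / b, ?_⟩
      field_simp
      linear_combination -h0
  simp [key]

/-- explicit value of the local factor for primes p ≤ k. -/
theorem statement4 (k : ℕ) (hk : 2 ≤ k) :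
    (∀ p : ℕ, p.Prime → Odd p → p ≤ k →
      betapAP k p =
        if p % 4 = 1 then
          ((p : ℝ) / ((p : ℝ) - 1)) ^ k * (((p : ℝ) - 1) * (2 * (p : ℝ) - 1) / (p : ℝ) ^ 3)
        else
          ((p : ℝ) / ((p : ℝ) - 1)) ^ k * (((p : ℝ) - 1) / (p : ℝ) ^ 3)) ∧
    betapAP k 2 = 2 ^ (k - 2) := by
  constructor
  · intro p hp hodd hpk
    have : Fact p.Prime := ⟨hp⟩
    rw [beta_val k p hpk]
    split_ifs with h
    · rw [count_one p hodd h]; ring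
    · rw [count_three p (by obtain ⟨m, rfl⟩ := hodd; omega)]; ring
  · rw [beta_val k 2 hk]
    have : (∑ b : ZMod 2, ∑ c : ZMod 2, if b ^ 2 + c ^ 2 = 0 then (1:ℝ) else 0) = 2 := by
      have e : ∀ b c : ZMod 2, b ^ 2 + c ^ 2 = 0 ↔ b = c := by decide
      simp only [e]
      simp [ZMod.card]
    rw [this]
    obtain ⟨m, rfl⟩ := Nat.exists_eq_add_of_le hk
    rw [Nat.add_sub_cancel_left, pow_add]
    norm_num
    ring
end

section
/- Let R(n) = #{(x,y) ∈ ℤ² : x² + y² = n} be the number of representations of n as a sum of two squares. Then Σ_{n ≤ N} Λ(n)·R(n) = 4N + o(N) as N → ∞. -/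
open Filter

/-- R(n): the number of representations of n as an ordered sum of two squares
of integers. -/
noncomputable def sumTwoSquaresRep (n : ℕ) : ℕ :=
  Set.ncard {p : ℤ × ℤ | p.1 ^ 2 + p.2 ^ 2 = (n : ℤ)}

section
open MeasureTheory Set Topology


noncomputable def fej (u : ℝ) : ℝ := Real.sinc (u / 2) ^ 2

lemma fej_nonneg (u : ℝ) : 0 ≤ fej u := sq_nonneg _

lemma fej_cont : Continuous fej := by
  unfold fej
  exact (Real.continuous_sinc.comp (continuous_id.div_const 2)).pow 2

lemma fej_neg (u : ℝ) : fej (-u) = fej u := by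
  unfold fej
  rw [neg_div, Real.sinc_neg]

lemma fej_eq {u : ℝ} (hu : u ≠ 0) : fej u = 2 * (1 - Real.cos u) / u ^ 2 := by
  unfold fej
  rw [Real.sinc_of_ne_zero (by positivity), div_pow, Real.sin_sq_eq_half_sub]
  rw [mul_div_cancel₀ _ two_ne_zero]
  field_simp

lemma fej_le (u : ℝ) : fej u ≤ 5 * (1 + u ^ 2)⁻¹ := by
  rw [← div_eq_mul_inv, le_div_iff₀ (by positivity)]
  have h1 : fej u ≤ 1 := by
    unfold fej
    rw [← sq_abs]
    exact pow_le_one₀ (abs_nonneg _) (Real.abs_sinc_le_one _)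
  have h2 : fej u * u ^ 2 ≤ 4 := by
    by_cases hu : u = 0
    · simp [hu]
    · rw [fej_eq hu, div_mul_cancel₀ _ (by positivity)]
      linarith [Real.neg_one_le_cos u]
  linarith

lemma fej_int : Integrable fej := by
  refine (integrable_inv_one_add_sq.const_mul 5).mono' fej_cont.aestronglyMeasurable ?_
  refine Eventually.of_forall fun u => ?_
  rw [Real.norm_of_nonneg (fej_nonneg u)]
  exact fej_le u

lemma fej_int_pos : 0 < ∫ u, fej u := by
  rw [integral_pos_iff_support_of_nonneg fej_nonneg fej_int]
  apply IsOpen.measure_pos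
  · exact fej_cont.isOpen_support
  · exact ⟨0, by simp [fej]⟩

lemma fej_fourier (u : ℝ) :
    ∫ t in (-1:ℝ)..1, ((1 - |t| : ℝ) : ℂ) * Complex.exp (Complex.I * u * t) = fej u := by
  have e1 : ∀ t : ℝ, ((1 - |t| : ℝ) : ℂ) * Complex.exp (Complex.I * u * t)
      = (((1 - |t|) * Real.cos (u * t) : ℝ) : ℂ) + (((1 - |t|) * Real.sin (u * t) : ℝ) : ℂ) * Complex.I := by
    intro t
    rw [show Complex.I * u * t = ((u * t : ℝ) : ℂ) * Complex.I by push_cast; ring, Complex.exp_mul_I]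
    push_cast
    ring
  have hc : Continuous fun t : ℝ => (1 - |t|) * Real.cos (u * t) := by fun_prop
  have hs : Continuous fun t : ℝ => (1 - |t|) * Real.sin (u * t) := by fun_prop
  simp_rw [e1]
  rw [intervalIntegral.integral_add, intervalIntegral.integral_mul_const, intervalIntegral.integral_ofReal,
    intervalIntegral.integral_ofReal]
  rotate_left
  · exact (Complex.continuous_ofReal.comp hc).intervalIntegrable _ _
  · exact ((Complex.continuous_ofReal.comp hs).mul continuous_const).intervalIntegrable _ _
  have hs0 : ∫ t in (-1:ℝ)..1, (1 - |t|) * Real.sin (u * t) = 0 := by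
    have := intervalIntegral.integral_comp_neg (a := (-1:ℝ)) (b := 1) (fun t => (1 - |t|) * Real.sin (u * t))
    simp only [abs_neg, mul_neg, Real.sin_neg, neg_neg, intervalIntegral.integral_neg] at this
    linarith
  have hpos : ∫ t in (0:ℝ)..1, (1 - |t|) * Real.cos (u * t) = fej u / 2 := by
    have : ∫ t in (0:ℝ)..1, (1 - |t|) * Real.cos (u * t) = ∫ t in (0:ℝ)..1, (1 - t) * Real.cos (u * t) := by
      apply intervalIntegral.integral_congr
      intro t ht
      rw [uIcc_of_le zero_le_one] at ht
      simp only
      rw [abs_of_nonneg ht.1]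
    rw [this]
    by_cases hu : u = 0
    · subst hu
      simp only [zero_mul, Real.cos_zero, mul_one, fej, zero_div, Real.sinc_zero]
      rw [intervalIntegral.integral_sub (by simp) (by simp)]
      simp
      norm_num
    · have hd : ∀ t ∈ uIcc (0:ℝ) 1, HasDerivAt (fun t : ℝ => (1 - t) * (Real.sin (u * t) / u) - Real.cos (u * t) / u ^ 2)
          ((1 - t) * Real.cos (u * t)) t := by
        intro t _
        have h1 : HasDerivAt (fun t : ℝ => u * t) u t := by simpa using (hasDerivAt_id t).const_mul u
        have h2 := (((hasDerivAt_id t).const_sub 1).mul (h1.sin.div_const u)).sub (h1.cos.div_const (u^2))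
        refine HasDerivAt.congr_deriv (f := fun t : ℝ => (1 - t) * (Real.sin (u * t) / u) - Real.cos (u * t) / u ^ 2) h2 ?_
        simp only [id]
        field_simp
        ring
      rw [intervalIntegral.integral_eq_sub_of_hasDerivAt hd (Continuous.intervalIntegrable (by fun_prop) _ _), fej_eq hu]
      simp
      field_simp
      ring
  have hneg : ∫ t in (-1:ℝ)..0, (1 - |t|) * Real.cos (u * t) = fej u / 2 := by
    have := intervalIntegral.integral_comp_neg (a := (0:ℝ)) (b := 1) (fun t => (1 - |t|) * Real.cos (u * t))
    simp only [abs_neg, mul_neg, Real.cos_neg, neg_zero] at this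
    rw [← this, hpos]
  rw [hs0, ← intervalIntegral.integral_add_adjacent_intervals (hc.intervalIntegrable _ _) (hc.intervalIntegrable _ _) (b := 0), hpos, hneg]
  simp


lemma conv_fubini (h : ℝ → ℝ) (M : ℝ) (hm : Measurable h) (hb : ∀ u, |h u| ≤ M) (G : ℂ → ℂ)
    (hT : ∀ z : ℂ, 0 < z.re → ∫ u in Ioi (0:ℝ), (h u : ℂ) * Complex.exp (-z * u) = G z)
    (δ : ℝ) (hδ : 0 < δ) (y : ℝ) :
    ((∫ u in Ioi (0:ℝ), h u * Real.exp (-δ * u) * fej (u - y) : ℝ) : ℂ) =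
      ∫ t in (-1:ℝ)..1, ((1 - |t| : ℝ) : ℂ) * Complex.exp (Complex.I * y * t) * G (δ + Complex.I * t) := by
  have hG : ∀ t : ℝ, G (δ + Complex.I * t) =
      ∫ u in Ioi (0:ℝ), (h u : ℂ) * Complex.exp (-(δ + Complex.I * t) * u) := by
    intro t
    rw [hT]
    simpa using hδ
  simp_rw [hG, ← integral_const_mul]
  rw [intervalIntegral.integral_of_le (by norm_num), integral_integral_swap]
  · rw [← integral_complex_ofReal]
    congr 1
    ext u
    rw [← intervalIntegral.integral_of_le (by norm_num)]
    have : ∀ t : ℝ, ((1 - |t| : ℝ) : ℂ) * Complex.exp (Complex.I * y * t) *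
        ((h u : ℂ) * Complex.exp (-(δ + Complex.I * t) * u)) =
        (h u * Real.exp (-δ * u) : ℝ) * (((1 - |t| : ℝ) : ℂ) * Complex.exp (Complex.I * (y - u : ℝ) * t)) := by
      intro t
      push_cast
      rw [show -((δ:ℂ) + Complex.I * t) * u = -δ * u + (- Complex.I * t * u) by ring, Complex.exp_add,
        show Complex.I * ((y:ℂ) - u) * t = Complex.I * y * t + (- Complex.I * t * u) by ring, Complex.exp_add]
      ring
    simp_rw [this]
    rw [intervalIntegral.integral_const_mul, fej_fourier, ← fej_neg (u - y), neg_sub]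
    push_cast
    ring
  · have hM : 0 ≤ M := (abs_nonneg _).trans (hb 0)
    have h1 : Integrable (fun t : ℝ => (1:ℝ)) (volume.restrict (Ioc (-1:ℝ) 1)) := integrable_const _
    have h2 : Integrable (fun u : ℝ => M * Real.exp (-δ * u)) (volume.restrict (Ioi (0:ℝ))) :=
      (integrableOn_exp_mul_Ioi (by linarith) 0).const_mul M
    refine (h1.mul_prod h2).mono' ?_ ?_
    · apply Measurable.aestronglyMeasurable
      unfold Function.uncurry
      fun_prop
    · have : ∀ᵐ z : ℝ × ℝ ∂((volume.restrict (Ioc (-1:ℝ) 1)).prod (volume.restrict (Ioi (0:ℝ)))), z ∈ Ioc (-1:ℝ) 1 ×ˢ Ioi (0:ℝ) := by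
        rw [Measure.prod_restrict]
        exact ae_restrict_mem (measurableSet_Ioc.prod measurableSet_Ioi)
      filter_upwards [this] with z hz
      obtain ⟨t, u⟩ := z
      obtain ⟨ht, hu⟩ := hz
      simp only [Function.uncurry, norm_mul, Complex.norm_real, Complex.norm_exp, Real.norm_eq_abs] at *
      have e1 : |(1 - |t|)| ≤ 1 := by
        have : |t| ≤ 1 := abs_le.2 ⟨ht.1.le, ht.2⟩
        rw [abs_of_nonneg (by linarith)]
        linarith [abs_nonneg t]
      simp only [Complex.mul_re, Complex.I_re, Complex.I_im, Complex.ofReal_re, Complex.ofReal_im,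
        Complex.neg_re, Complex.neg_im, Complex.add_re, Complex.add_im, Complex.mul_im]
      simp only [zero_mul, one_mul, sub_zero, zero_sub, mul_zero, add_zero, neg_zero, Real.exp_zero, mul_one]
      calc |(1 - |t|)| * (|h u| * Real.exp (-δ * u)) ≤ 1 * (M * Real.exp (-δ * u)) := by
            gcongr
            exact hb u
        _ = _ := one_mul _

lemma conv_limit (h : ℝ → ℝ) (M : ℝ) (hm : Measurable h) (hb : ∀ u, |h u| ≤ M) (G : ℂ → ℂ)
    (hG : ContinuousOn G {z | 0 ≤ z.re})
    (hT : ∀ z : ℂ, 0 < z.re → ∫ u in Ioi (0:ℝ), (h u : ℂ) * Complex.exp (-z * u) = G z) (y : ℝ) :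
    ((∫ u in Ioi (0:ℝ), h u * fej (u - y) : ℝ) : ℂ) =
      ∫ t in (-1:ℝ)..1, ((1 - |t| : ℝ) : ℂ) * Complex.exp (Complex.I * y * t) * G (Complex.I * t) := by
  have hM : 0 ≤ M := (abs_nonneg _).trans (hb 0)
  have hl : Tendsto (fun δ : ℝ => ((∫ u in Ioi (0:ℝ), h u * Real.exp (-δ * u) * fej (u - y) : ℝ) : ℂ))
      (𝓝[>] 0) (𝓝 ((∫ u in Ioi (0:ℝ), h u * fej (u - y) : ℝ) : ℂ)) := by
    refine (Complex.continuous_ofReal.tendsto _).comp ?_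
    refine tendsto_integral_filter_of_dominated_convergence (fun u => M * fej (u - y)) ?_ ?_ ?_ ?_
    · refine Eventually.of_forall fun δ => Measurable.aestronglyMeasurable ?_
      have := fej_cont.measurable
      fun_prop
    · filter_upwards [self_mem_nhdsWithin] with δ hδ
      filter_upwards [ae_restrict_mem measurableSet_Ioi] with u hu
      rw [mem_Ioi] at hδ hu
      rw [norm_mul, norm_mul, Real.norm_of_nonneg (fej_nonneg _), Real.norm_of_nonneg (Real.exp_pos _).le]
      have : Real.exp (-δ * u) ≤ 1 := Real.exp_le_one_iff.2 (by nlinarith)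
      have h3 := hb u
      have : ‖h u‖ * Real.exp (-δ * u) ≤ M * 1 := by
        gcongr
        exact h3
      rw [mul_one] at this
      exact mul_le_mul_of_nonneg_right this (fej_nonneg _)
    · exact ((fej_int.comp_sub_right y).const_mul M).integrableOn
    · refine Eventually.of_forall fun u => ?_
      have : Continuous fun δ : ℝ => h u * Real.exp (-δ * u) * fej (u - y) := by fun_prop
      simpa using (this.tendsto 0).mono_left nhdsWithin_le_nhds
  have hr : Tendsto (fun δ : ℝ => ∫ t in (-1:ℝ)..1, ((1 - |t| : ℝ) : ℂ) * Complex.exp (Complex.I * y * t) * G (δ + Complex.I * t))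
      (𝓝[>] 0) (𝓝 (∫ t in (-1:ℝ)..1, ((1 - |t| : ℝ) : ℂ) * Complex.exp (Complex.I * y * t) * G (Complex.I * t))) := by
    have hcG : ContinuousOn (fun p : ℝ × ℝ => ((1 - |p.2| : ℝ) : ℂ) * Complex.exp (Complex.I * y * p.2) * G (p.1 + Complex.I * p.2))
        (Icc 0 1 ×ˢ Icc (-1) 1) := by
      refine ContinuousOn.mul (Continuous.continuousOn (by fun_prop)) (hG.comp (Continuous.continuousOn (by fun_prop)) ?_)
      rintro ⟨a, b⟩ ⟨ha, hb⟩
      simpa using ha.1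
    obtain ⟨B, hB⟩ := (isCompact_Icc.prod isCompact_Icc).exists_bound_of_continuousOn hcG
    refine intervalIntegral.tendsto_integral_filter_of_dominated_convergence (fun _ => B) ?_ ?_ ?_ ?_
    · filter_upwards [Ioc_mem_nhdsGT (zero_lt_one (α := ℝ))] with δ hδ
      refine ContinuousOn.aestronglyMeasurable ?_ measurableSet_uIoc
      refine ContinuousOn.comp (g := fun p : ℝ × ℝ => ((1 - |p.2| : ℝ) : ℂ) * Complex.exp (Complex.I * y * p.2) * G (p.1 + Complex.I * p.2)) (f := fun t : ℝ => (δ, t)) hcG (Continuous.continuousOn (by fun_prop)) ?_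
      intro t ht
      rw [uIoc_of_le (by norm_num)] at ht
      exact ⟨⟨hδ.1.le, hδ.2⟩, ⟨ht.1.le, ht.2⟩⟩
    · filter_upwards [Ioc_mem_nhdsGT (zero_lt_one (α := ℝ))] with δ hδ
      refine Eventually.of_forall fun t ht => ?_
      rw [uIoc_of_le (by norm_num)] at ht
      exact hB (δ, t) ⟨⟨hδ.1.le, hδ.2⟩, ⟨ht.1.le, ht.2⟩⟩
    · simp
    · refine Eventually.of_forall fun t ht => ?_
      refine Tendsto.mul tendsto_const_nhds ?_
      have h0 := hG (Complex.I * t) (by simp)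
      refine h0.tendsto.comp (tendsto_nhdsWithin_iff.2 ⟨?_, ?_⟩)
      · have : Continuous fun δ : ℝ => (δ:ℂ) + Complex.I * t := by fun_prop
        simpa using (this.tendsto 0).mono_left nhdsWithin_le_nhds
      · filter_upwards [self_mem_nhdsWithin] with δ hδ
        rw [mem_Ioi] at hδ
        simpa using hδ.le
  refine tendsto_nhds_unique hl (hr.congr' ?_)
  filter_upwards [self_mem_nhdsWithin] with δ hδ
  exact (conv_fubini h M hm hb G hT δ hδ y).symm

lemma conv_zero (h : ℝ → ℝ) (M : ℝ) (hm : Measurable h) (hb : ∀ u, |h u| ≤ M) (G : ℂ → ℂ)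
    (hG : ContinuousOn G {z | 0 ≤ z.re})
    (hT : ∀ z : ℂ, 0 < z.re → ∫ u in Ioi (0:ℝ), (h u : ℂ) * Complex.exp (-z * u) = G z) :
    Tendsto (fun y => ∫ u in Ioi (0:ℝ), h u * fej (u - y)) atTop (𝓝 0) := by
  have key := Real.tendsto_integral_exp_smul_cocompact
    ((Ioc (-1:ℝ) 1).indicator fun t : ℝ => ((1 - |t| : ℝ) : ℂ) * G (Complex.I * t))
  have hy : Tendsto (fun y : ℝ => - y / (2 * Real.pi)) atTop (cocompact ℝ) := by
    have : Tendsto (fun y : ℝ => - y / (2 * Real.pi)) atTop atBot :=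
      tendsto_neg_atTop_atBot.atBot_div_const (by positivity)
    exact this.mono_right atBot_le_cocompact
  have k2 := key.comp hy
  have : Tendsto (fun y => ((∫ u in Ioi (0:ℝ), h u * fej (u - y) : ℝ) : ℂ)) atTop (𝓝 0) := by
    refine k2.congr fun y => ?_
    rw [conv_limit h M hm hb G hG hT, intervalIntegral.integral_of_le (by norm_num),
      ← integral_indicator measurableSet_Ioc]
    simp only [Function.comp]
    congr 1
    ext t
    by_cases ht : t ∈ Ioc (-1:ℝ) 1
    · simp only [indicator_of_mem ht]
      rw [Circle.smul_def, Real.fourierChar_apply, smul_eq_mul]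
      rw [show (((2 * Real.pi * -(t * (-y / (2 * Real.pi))) : ℝ) : ℂ) * Complex.I) = Complex.I * y * t by
        rw [show 2 * Real.pi * -(t * (-y / (2 * Real.pi))) = y * t by field_simp]
        push_cast; ring]
      ring
    · simp only [indicator_of_notMem ht, smul_zero]
  have h2 := (Complex.continuous_re.tendsto _).comp this
  simpa [Function.comp_def] using h2


lemma conv_zero_scaled (h : ℝ → ℝ) (M : ℝ) (hm : Measurable h) (hb : ∀ u, |h u| ≤ M) (G : ℂ → ℂ)
    (hG : ContinuousOn G {z | 0 ≤ z.re})
    (hT : ∀ z : ℂ, 0 < z.re → ∫ u in Ioi (0:ℝ), (h u : ℂ) * Complex.exp (-z * u) = G z)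
    (l : ℝ) (hl : 0 < l) :
    Tendsto (fun y => ∫ u in Ioi (0:ℝ), h u * fej (l * (u - y))) atTop (𝓝 0) := by
  have h1 := conv_zero (fun u => h (u / l)) M (by fun_prop) (fun u => hb _) (fun z => l * G (l * z)) ?_ ?_
  · have h2 := (h1.comp (tendsto_id.const_mul_atTop hl)).const_mul l⁻¹
    rw [mul_zero] at h2
    refine h2.congr fun y => ?_
    have := integral_comp_mul_left_Ioi (fun x => h (x / l) * fej (x - l * y)) 0 hl
    rw [mul_zero, smul_eq_mul] at this
    simp only [Function.comp, id]
    rw [← this]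
    congr 1
    ext u
    rw [mul_div_cancel_left₀ _ hl.ne', mul_sub]
  · refine continuousOn_const.mul (hG.comp (Continuous.continuousOn (by fun_prop)) ?_)
    intro z hz
    simp only [mem_ofPred_eq] at hz ⊢
    rw [Complex.re_ofReal_mul]
    positivity
  · intro z hz
    have := integral_comp_mul_left_Ioi (fun x : ℝ => (h (x / l) : ℂ) * Complex.exp (-z * x)) 0 hl
    rw [mul_zero, Complex.real_smul] at this
    rw [← hT (l * z) (by rw [Complex.re_ofReal_mul]; positivity)]
    have h3 : ∫ u in Ioi (0:ℝ), (h u : ℂ) * Complex.exp (-(l * z) * u) = ((l⁻¹ : ℝ) : ℂ) * ∫ x in Ioi (0:ℝ), (h (x / l) : ℂ) * Complex.exp (-z * x) := by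
      rw [← this]
      congr 1
      ext u
      rw [mul_div_cancel_left₀ _ hl.ne']
      congr 2
      push_cast
      ring
    rw [h3]
    have : (l:ℂ) ≠ 0 := by exact_mod_cast hl.ne'
    push_cast
    field_simp

lemma fej_scaled_int (l : ℝ) (hl : 0 < l) (y : ℝ) : Integrable fun u => fej (l * (u - y)) :=
  (fej_int.comp_mul_left' hl.ne').comp_sub_right y

lemma fej_scaled_integral (l : ℝ) (hl : 0 < l) (y : ℝ) :
    ∫ u, fej (l * (u - y)) = l⁻¹ * ∫ u, fej u := by
  rw [integral_sub_right_eq_self (fun u => fej (l * u)), Measure.integral_comp_mul_left, abs_of_pos (by positivity)]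
  rfl

lemma fej_scaled_tendsto (l : ℝ) (hl : 0 < l) :
    Tendsto (fun y => ∫ u in Ioi (0:ℝ), fej (l * (u - y))) atTop (𝓝 (l⁻¹ * ∫ u, fej u)) := by
  have h0 : Integrable fun u => fej (l * u) := fej_int.comp_mul_left' hl.ne'
  have h1 : ∀ y, ∫ u in Ioi (0:ℝ), fej (l * (u - y)) = ∫ u in Ioi (-y), fej (l * u) := by
    intro y
    rw [← integral_indicator measurableSet_Ioi, ← integral_indicator measurableSet_Ioi,
      ← integral_sub_right_eq_self ((Ioi (-y)).indicator fun u => fej (l * u)) y]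
    congr 1
    ext u
    by_cases hu : 0 < u
    · rw [indicator_of_mem (by simpa using hu), indicator_of_mem (by simpa using hu)]
    · rw [indicator_of_notMem (by simpa using hu), indicator_of_notMem (by simpa using hu)]
  simp_rw [h1]
  have h2 : AECover (volume : Measure ℝ) atTop (fun y : ℝ => Ioi (-y)) :=
    aecover_Ioi tendsto_neg_atTop_atBot
  have h3 := h2.integral_tendsto_of_countably_generated h0
  have h4 := fej_scaled_integral l hl 0
  simp only [sub_zero] at h4
  rwa [h4] at h3

lemma fej_local (l η y : ℝ) (hl : 0 < l) (hη : 0 < η) :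
    ∫ u in Ioc (y - η) (y + η), fej (l * (u - y)) = l⁻¹ * ∫ u in (-(l * η))..(l * η), fej u := by
  rw [← intervalIntegral.integral_of_le (by linarith)]
  have := intervalIntegral.integral_comp_mul_sub (a := y - η) (b := y + η) fej hl.ne' (l * y)
  simp_rw [mul_sub]
  rw [this, smul_eq_mul]
  congr 2 <;> ring

theorem tauber (S : ℝ → ℝ) (M c : ℝ) (hc : 0 ≤ c) (hm : Measurable S) (h0 : ∀ u, 0 ≤ S u) (hb : ∀ u, S u ≤ M)
    (hmono : ∀ u v, u ≤ v → S u * Real.exp u ≤ S v * Real.exp v) (G : ℂ → ℂ)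
    (hG : ContinuousOn G {z | 0 ≤ z.re})
    (hT : ∀ z : ℂ, 0 < z.re → ∫ u in Ioi (0:ℝ), ((S u - c : ℝ) : ℂ) * Complex.exp (-z * u) = G z) :
    Tendsto S atTop (𝓝 c) := by
  have hM : 0 ≤ M := (h0 0).trans (hb 0)
  set I := ∫ u, fej u with hI
  have hIpos : 0 < I := fej_int_pos
  -- convolution
  have hint : ∀ l : ℝ, 0 < l → ∀ y, Integrable fun u => S u * fej (l * (u - y)) := by
    intro l hl y
    refine ((fej_scaled_int l hl y).const_mul M).mono' (hm.aestronglyMeasurable.mul (fej_scaled_int l hl y).1) ?_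
    refine Eventually.of_forall fun u => ?_
    rw [Real.norm_of_nonneg (mul_nonneg (h0 _) (fej_nonneg _))]
    exact mul_le_mul_of_nonneg_right (hb u) (fej_nonneg _)
  have hconv : ∀ l : ℝ, 0 < l → Tendsto (fun y => l * ∫ u in Ioi (0:ℝ), S u * fej (l * (u - y))) atTop (𝓝 (c * I)) := by
    intro l hl
    have a1 := conv_zero_scaled (fun u => S u - c) (M + c) (by fun_prop) (fun u => by
      rw [abs_le]; constructor <;> linarith [h0 u, hb u]) G hG hT l hl
    have a2 := (fej_scaled_tendsto l hl).const_mul c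
    have a3 := (a1.add a2).const_mul l
    have e : l * (0 + c * (l⁻¹ * I)) = c * I := by field_simp; ring
    rw [← hI, e] at a3
    refine a3.congr fun y => ?_
    rw [← integral_const_mul, ← integral_add]
    · congr 1
      congr 1
      ext u
      ring
    · have := ((hint l hl y).sub ((fej_scaled_int l hl y).const_mul c)).integrableOn (s := Ioi (0:ℝ))
      refine this.congr (Eventually.of_forall fun u => ?_)
      simp only [Pi.sub_apply]
      ring
    · exact ((fej_scaled_int l hl y).const_mul c).integrableOn
  set J : ℝ → ℝ := fun T => ∫ u in (-T)..T, fej u with hJ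
  have hJI : Tendsto J atTop (𝓝 I) := intervalIntegral_tendsto_integral fej_int tendsto_neg_atTop_atBot tendsto_id
  have upper : ∀ l η y : ℝ, 0 < l → 0 < η → η < y →
      S (y - η) * Real.exp (-(2 * η)) * J (l * η) ≤ l * ∫ u in Ioi (0:ℝ), S u * fej (l * (u - y)) := by
    intro l η y hl hη hy
    have b1 : ∫ u in Ioc (y - η) (y + η), S (y - η) * Real.exp (-(2 * η)) * fej (l * (u - y))
        ≤ ∫ u in Ioc (y - η) (y + η), S u * fej (l * (u - y)) := by
      refine setIntegral_mono_on ((fej_scaled_int l hl y).const_mul _).integrableOn (hint l hl y).integrableOn measurableSet_Ioc ?_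
      intro u hu
      refine mul_le_mul_of_nonneg_right ?_ (fej_nonneg _)
      have q := hmono (y - η) u hu.1.le
      have q2 : S (y - η) * Real.exp (-(2 * η)) ≤ S (y - η) * Real.exp (y - η - u) := by
        refine mul_le_mul_of_nonneg_left (Real.exp_le_exp.2 (by linarith [hu.2])) (h0 _)
      refine q2.trans ?_
      rw [Real.exp_sub, ← mul_div_assoc, div_le_iff₀ (Real.exp_pos _)]
      exact q
    have b2 : ∫ u in Ioc (y - η) (y + η), S u * fej (l * (u - y)) ≤ ∫ u in Ioi (0:ℝ), S u * fej (l * (u - y)) := by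
      refine setIntegral_mono_set (hint l hl y).integrableOn (Eventually.of_forall fun u => mul_nonneg (h0 _) (fej_nonneg _)) ?_
      refine LE.le.eventuallyLE ?_
      intro u hu
      exact lt_trans (by linarith) hu.1
    rw [integral_const_mul, fej_local l η y hl hη] at b1
    have := mul_le_mul_of_nonneg_left (b1.trans b2) hl.le
    refine le_trans (le_of_eq ?_) this
    simp only [hJ]
    field_simp
  have lower : ∀ l η y : ℝ, 0 < l → 0 < η → η < y →
      l * ∫ u in Ioi (0:ℝ), S u * fej (l * (u - y)) ≤ M * (I - J (l * η)) + S (y + η) * Real.exp (2 * η) * J (l * η) := by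
    intro l η y hl hη hy
    set B := S (y + η) * Real.exp (2 * η) with hB
    have i1 : Integrable fun u => M * fej (l * (u - y)) := (fej_scaled_int l hl y).const_mul _
    have i2 : Integrable ((Ioc (y - η) (y + η)).indicator fun u => (B - M) * fej (l * (u - y))) :=
      ((fej_scaled_int l hl y).const_mul _).indicator measurableSet_Ioc
    have b1 : ∫ u in Ioi (0:ℝ), S u * fej (l * (u - y)) ≤ ∫ u, S u * fej (l * (u - y)) :=
      setIntegral_le_integral (hint l hl y) (Eventually.of_forall fun u => mul_nonneg (h0 _) (fej_nonneg _))
    have b2 : ∫ u, S u * fej (l * (u - y)) ≤ ∫ u, (M * fej (l * (u - y)) + (Ioc (y - η) (y + η)).indicator (fun u => (B - M) * fej (l * (u - y))) u) := by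
      refine integral_mono (hint l hl y) (i1.add i2) fun u => ?_
      by_cases hu : u ∈ Ioc (y - η) (y + η)
      · simp only [indicator_of_mem hu]
        rw [← add_mul]
        refine mul_le_mul_of_nonneg_right ?_ (fej_nonneg _)
        have q := hmono u (y + η) hu.2
        have q2 : S (y + η) * Real.exp (y + η - u) ≤ B := by
          refine mul_le_mul_of_nonneg_left (Real.exp_le_exp.2 (by linarith [hu.1])) (h0 _)
        have q3 : S u ≤ S (y + η) * Real.exp (y + η - u) := by
          rw [Real.exp_sub, ← mul_div_assoc, le_div_iff₀ (Real.exp_pos _)]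
          exact q
        linarith
      · simp only [indicator_of_notMem hu, add_zero]
        exact mul_le_mul_of_nonneg_right (hb u) (fej_nonneg _)
    rw [integral_add i1 i2, integral_indicator measurableSet_Ioc, integral_const_mul, integral_const_mul,
      fej_local l η y hl hη, fej_scaled_integral l hl y] at b2
    have := mul_le_mul_of_nonneg_left (b1.trans b2) hl.le
    refine le_trans this (le_of_eq ?_)
    simp only [hJ, hI]
    field_simp
    ring
  -- choose parameters
  have hn : Tendsto (fun n : ℕ => (n : ℝ) + 1) atTop atTop := tendsto_atTop_add_const_right _ _ tendsto_natCast_atTop_atTop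
  have hn1 : Tendsto (fun n : ℕ => ((n : ℝ) + 1)⁻¹) atTop (𝓝 0) := tendsto_inv_atTop_zero.comp hn
  have hJn : Tendsto (fun n : ℕ => J ((n : ℝ) + 1)) atTop (𝓝 I) := hJI.comp hn
  rw [Metric.tendsto_nhds]
  intro ε hε
  have U : ∀ᶠ y in atTop, S y < c + ε := by
    have t1 : Tendsto (fun n : ℕ => (c + ε) * Real.exp (-(2 * ((n:ℝ) + 1)⁻¹)) * J ((n:ℝ) + 1)) atTop (𝓝 ((c + ε) * Real.exp (-(2 * 0)) * I)) :=
      (((Real.continuous_exp.tendsto _).comp ((hn1.const_mul 2).neg)).const_mul (c + ε)).mul hJn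
    have t2 : c * I < (c + ε) * Real.exp (-(2 * 0)) * I := by
      simp; nlinarith
    obtain ⟨n, hn2, hJ0⟩ := ((t1.eventually (lt_mem_nhds t2)).and (hJn.eventually (lt_mem_nhds hIpos))).exists
    set m : ℝ := (n:ℝ) + 1 with hmdef
    have hmp : 0 < m := by positivity
    have hev := (hconv (m * m) (by positivity)).eventually (gt_mem_nhds hn2)
    have hsh : Tendsto (fun y : ℝ => y + m⁻¹) atTop atTop := tendsto_atTop_add_const_right _ _ tendsto_id
    filter_upwards [hsh.eventually hev, eventually_gt_atTop 0] with y h1 h2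
    have h3 := upper (m * m) m⁻¹ (y + m⁻¹) (by positivity) (by positivity) (by linarith)
    rw [add_sub_cancel_right, mul_assoc m m, mul_inv_cancel₀ hmp.ne', mul_one] at h3
    have h4 := lt_of_le_of_lt h3 h1
    have h5 := lt_of_mul_lt_mul_right h4 hJ0.le
    exact lt_of_mul_lt_mul_right h5 (Real.exp_pos _).le
  have Lw : ∀ᶠ y in atTop, c - ε < S y := by
    have t1 : Tendsto (fun n : ℕ => M * (I - J ((n:ℝ) + 1)) + (c - ε) * Real.exp ((2 * ((n:ℝ) + 1)⁻¹)) * J ((n:ℝ) + 1)) atTop (𝓝 (M * (I - I) + (c - ε) * Real.exp ((2 * 0)) * I)) :=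
      ((hJn.const_sub I).const_mul M).add ((((Real.continuous_exp.tendsto _).comp ((hn1.const_mul 2))).const_mul (c - ε)).mul hJn)
    have t2 : M * (I - I) + (c - ε) * Real.exp ((2 * 0)) * I < c * I := by
      simp; nlinarith
    obtain ⟨n, hn2, hJ0⟩ := ((t1.eventually (gt_mem_nhds t2)).and (hJn.eventually (lt_mem_nhds hIpos))).exists
    set m : ℝ := (n:ℝ) + 1 with hmdef
    have hmp : 0 < m := by positivity
    have hev := (hconv (m * m) (by positivity)).eventually (lt_mem_nhds hn2)
    have hsh : Tendsto (fun y : ℝ => y - m⁻¹) atTop atTop := tendsto_atTop_add_const_right _ _ tendsto_id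
    filter_upwards [hsh.eventually hev, eventually_gt_atTop (2 * m⁻¹)] with y h1 h2
    have h3 := lower (m * m) m⁻¹ (y - m⁻¹) (by positivity) (by positivity) (by linarith)
    rw [sub_add_cancel, mul_assoc m m m⁻¹, mul_inv_cancel₀ hmp.ne', mul_one] at h3
    have h4 := lt_of_lt_of_le h1 h3
    have h5 := lt_of_mul_lt_mul_right (lt_of_add_lt_add_left h4) hJ0.le
    exact lt_of_mul_lt_mul_right h5 (Real.exp_pos _).le
  filter_upwards [U, Lw] with y h1 h2
  rw [Real.dist_eq, abs_lt]
  constructor <;> linarith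


open ArithmeticFunction.vonMangoldt in
theorem pnt_ap {q : ℕ} [NeZero q] (a : ZMod q) (ha : IsUnit a) :
    Tendsto (fun N : ℕ => (∑ n ∈ Finset.Icc 1 N, residueClass a n) / (N : ℝ)) atTop (𝓝 ((q.totient : ℝ)⁻¹)) := by
  set c : ℝ := (q.totient : ℝ)⁻¹ with hc
  set A : ℕ → ℝ := fun N => ∑ n ∈ Finset.Icc 1 N, residueClass a n with hA
  have hA0 : ∀ N, 0 ≤ A N := fun N => Finset.sum_nonneg fun n _ => residueClass_nonneg a n
  have hAmono : Monotone A := by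
    intro m n hmn
    refine Finset.sum_le_sum_of_subset_of_nonneg (Finset.Icc_subset_Icc_right hmn) fun n _ _ => residueClass_nonneg a n
  set K : ℝ := Real.log 4 + 4 with hK
  have hAle : ∀ N : ℕ, A N ≤ K * N := by
    intro N
    refine le_trans ?_ (Chebyshev.psi_le_const_mul_self (x := N) (by positivity))
    rw [Chebyshev.psi, Nat.floor_natCast]
    exact Finset.sum_le_sum fun n _ => residueClass_le a n
  have hK0 : 0 ≤ K := by have := Real.log_nonneg (x := 4) (by norm_num); positivity
  set S : ℝ → ℝ := fun u => A ⌊Real.exp u⌋₊ * Real.exp (-u) with hS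
  have hSm : Measurable S := by
    have : Measurable A := measurable_from_nat
    have h2 : Measurable fun u : ℝ => ⌊Real.exp u⌋₊ := Nat.measurable_floor.comp Real.measurable_exp
    exact (this.comp h2).mul (by fun_prop)
  have hSb : ∀ u, S u ≤ K := by
    intro u
    simp only [hS]
    rw [Real.exp_neg, ← div_eq_mul_inv, div_le_iff₀ (Real.exp_pos _)]
    refine (hAle _).trans ?_
    gcongr
    exact Nat.floor_le (Real.exp_pos _).le
  have hSt : Tendsto S atTop (𝓝 c) := by
    refine tauber S K c (by positivity) hSm (fun u => mul_nonneg (hA0 _) (Real.exp_pos _).le) ?_ ?_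
      (fun z => (LFunctionResidueClassAux a (1 + z) - c) / (1 + z)) ?_ ?_
    · exact hSb
    · intro u v huv
      simp only [hS]
      rw [mul_assoc, mul_assoc, ← Real.exp_add, ← Real.exp_add, neg_add_cancel, neg_add_cancel, Real.exp_zero, mul_one, mul_one]
      exact hAmono (Nat.floor_mono (Real.exp_le_exp.2 huv))
    · refine ContinuousOn.div (ContinuousOn.sub ?_ continuousOn_const) (by fun_prop) ?_
      · refine (continuousOn_LFunctionResidueClassAux a).comp (by fun_prop) ?_
        intro z hz
        simp only [mem_ofPred_eq] at hz ⊢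
        simpa using hz
      · intro z hz h
        simp only [mem_ofPred_eq] at hz
        have := congrArg Complex.re h
        simp at this
        linarith
    · intro z hz
      have hs : 1 < (1 + z).re := by simpa using hz
      have e1 := eqOn_LFunctionResidueClassAux ha (show (1 + z) ∈ {s : ℂ | 1 < s.re} from hs)
      simp only [add_sub_cancel_left] at e1
      have hO : (fun n : ℕ => ∑ k ∈ Finset.Icc 1 n, residueClass a k) =O[atTop] fun n : ℕ => (n : ℝ) ^ (1:ℝ) := by
        refine Asymptotics.IsBigO.of_bound K (Eventually.of_forall fun n => ?_)
        rw [Real.norm_of_nonneg (hA0 n), Real.rpow_one, Real.norm_of_nonneg (by positivity)]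
        exact hAle n
      have e2 := LSeries_eq_mul_integral_of_nonneg (residueClass a) zero_le_one hs hO (residueClass_nonneg a)
      have e3 := integral_image_eq_integral_abs_deriv_smul (measurableSet_Ioi (a := (0:ℝ)))
        (fun x _ => (Real.hasDerivAt_exp x).hasDerivWithinAt) (Real.exp_injective.injOn)
        (fun t : ℝ => (∑ k ∈ Finset.Icc 1 ⌊t⌋₊, (residueClass a k : ℂ)) * (t:ℂ) ^ (-((1 + z) + 1)))
      rw [Real.image_exp_Ioi, Real.exp_zero] at e3
      rw [e3] at e2
      have e4 : ∫ u in Ioi (0:ℝ), |Real.exp u| • ((∑ k ∈ Finset.Icc 1 ⌊Real.exp u⌋₊, (residueClass a k : ℂ)) * (Real.exp u:ℂ) ^ (-((1 + z) + 1)))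
         = ∫ u in Ioi (0:ℝ), ((S u : ℝ) : ℂ) * Complex.exp (-z * u) := by
        congr 1
        ext u
        rw [abs_of_pos (Real.exp_pos _), Complex.real_smul]
        have hne : ((Real.exp u : ℝ) : ℂ) ≠ 0 := by exact_mod_cast (Real.exp_pos u).ne'
        rw [Complex.cpow_def_of_ne_zero hne, ← Complex.ofReal_log (Real.exp_pos u).le, Real.log_exp]
        simp only [hS, hA]
        push_cast
        rw [show (u:ℂ) * (-(1 + z + 1)) = -u + (-z * u + -u) by ring, Complex.exp_add, Complex.exp_add]
        have : Complex.exp u * Complex.exp (-u) = 1 := by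
          rw [← Complex.exp_add]; simp
        linear_combination ((∑ k ∈ Finset.Icc 1 ⌊Real.exp u⌋₊, (residueClass a k : ℂ)) * Complex.exp (-z * u) * Complex.exp (-u)) * this
      rw [e4] at e2
      have i1 : IntegrableOn (fun u : ℝ => Complex.exp (-z * u)) (Ioi 0) :=
        integrableOn_exp_mul_complex_Ioi (by simpa using hz) 0
      have i2 : IntegrableOn (fun u : ℝ => ((S u : ℝ) : ℂ) * Complex.exp (-z * u)) (Ioi 0) := by
        refine i1.bdd_mul (c := K) (Complex.measurable_ofReal.comp hSm).aestronglyMeasurable ?_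
        refine Eventually.of_forall fun u => ?_
        rw [Complex.norm_real, Real.norm_of_nonneg (mul_nonneg (hA0 _) (Real.exp_pos _).le)]
        exact hSb u
      have e5 : ∫ u in Ioi (0:ℝ), Complex.exp (-z * u) = 1 / z := by
        rw [integral_exp_mul_complex_Ioi (by simpa using hz)]
        simp
      have hz0 : z ≠ 0 := by rintro rfl; simp at hz
      have hz1 : 1 + z ≠ 0 := by intro h; rw [h] at hs; simp at hs; linarith
      have : ∀ u : ℝ, ((S u - c : ℝ) : ℂ) * Complex.exp (-z * u) = ((S u : ℝ) : ℂ) * Complex.exp (-z * u) - c * Complex.exp (-z * u) := by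
        intro u; push_cast; ring
      simp_rw [this]
      rw [integral_sub i2 (i1.const_mul _), integral_const_mul, e5, e1, e2]
      simp only [hc]
      push_cast
      field_simp
      ring
  have hlog : Tendsto (fun N : ℕ => Real.log N) atTop atTop := Real.tendsto_log_atTop.comp tendsto_natCast_atTop_atTop
  refine (hSt.comp hlog).congr' ?_
  filter_upwards [eventually_gt_atTop 0] with N hN
  have : (0:ℝ) < N := by exact_mod_cast hN
  simp only [Function.comp, hS, hA]
  rw [Real.exp_neg, Real.exp_log this, Nat.floor_natCast, div_eq_mul_inv]

end

lemma rep_three (p : ℕ) (hp : p % 4 = 3) : sumTwoSquaresRep p = 0 := by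
  unfold sumTwoSquaresRep
  convert Set.ncard_empty (ℤ × ℤ)
  ext ⟨x, y⟩
  simp only [Set.mem_ofPred_eq, Set.mem_empty_iff_false, iff_false]
  intro h
  have h2 : ((x:ZMod 4)) ^ 2 + (y:ZMod 4) ^ 2 = 3 := by
    have : ((x ^ 2 + y ^ 2 : ℤ) : ZMod 4) = ((p : ℕ) : ZMod 4) := by rw [h]; simp
    push_cast at this
    rw [this, ← Nat.mod_add_div p 4, hp]
    push_cast
    rw [show (4 : ZMod 4) = 0 from rfl]
    simp
  revert h2
  generalize (x : ZMod 4) = a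
  generalize (y : ZMod 4) = b
  revert a b
  decide

lemma rep_one (p : ℕ) (hpp : p.Prime) (hp : p % 4 = 1) : sumTwoSquaresRep p = 8 := by
  have : Fact p.Prime := ⟨hpp⟩
  obtain ⟨a', b', hab'⟩ := Nat.Prime.sq_add_sq (p := p) (by omega)
  obtain ⟨a, ha⟩ : ∃ a : ℤ, a = a' := ⟨_, rfl⟩
  obtain ⟨b, hb⟩ : ∃ b : ℤ, b = b' := ⟨_, rfl⟩
  have ha0 : 0 ≤ a := by omega
  have hb0 : 0 ≤ b := by omega
  have hab : a ^ 2 + b ^ 2 = p := by rw [ha, hb]; exact_mod_cast hab'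
  have hP : Prime (p : ℤ) := Nat.prime_iff_prime_int.1 hpp
  have hsq : ∀ x : ℤ, x ^ 2 ≠ p := by
    intro x hx
    have : IsSquare (p : ℤ) := ⟨x, by rw [← hx]; ring⟩
    exact hP.irreducible.not_isSquare this
  have hane : a ≠ 0 := by rintro rfl; exact hsq b (by linarith)
  have hbne : b ≠ 0 := by rintro rfl; exact hsq a (by linarith)
  have hne : a ≠ b := by
    rintro rfl
    have : (p : ℤ) % 4 = 1 := by exact_mod_cast hp
    omega
  have hp0 : (p : ℤ) ≠ 0 := hP.ne_zero
  have key : ∀ x y : ℤ, x ^ 2 + y ^ 2 = p → (p : ℤ) ∣ a * y - b * x →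
      (x = a ∧ y = b) ∨ (x = -a ∧ y = -b) ∨ (x = -b ∧ y = a) ∨ (x = b ∧ y = -a) := by
    intro x y hxy hd
    have hd2 : (p : ℤ) ∣ a * x + b * y := by
      have h1 : (p:ℤ) ∣ (a * x + b * y) ^ 2 := by
        have : (a * x + b * y) ^ 2 = p * p - (a * y - b * x) ^ 2 := by
          nth_rw 1 [← hab]; rw [← hxy]; ring
        rw [this]
        exact dvd_sub (dvd_mul_right _ _) (dvd_pow hd two_ne_zero)
      exact hP.dvd_of_dvd_pow h1
    obtain ⟨s, hs⟩ := hd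
    obtain ⟨t, ht⟩ := hd2
    have hst : s ^ 2 + t ^ 2 = 1 := by
      have : (p:ℤ) ^ 2 * (s ^ 2 + t ^ 2) = p ^ 2 * 1 := by
        have e : (a * y - b * x) ^ 2 + (a * x + b * y) ^ 2 = (a ^ 2 + b ^ 2) * (x ^ 2 + y ^ 2) := by ring
        rw [hs, ht, hab, hxy] at e
        linear_combination e
      exact mul_left_cancel₀ (pow_ne_zero 2 hp0) this
    have hx : x = a * t - b * s := by
      apply mul_left_cancel₀ hp0
      linear_combination a * ht - b * hs - x * hab
    have hy : y = b * t + a * s := by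
      apply mul_left_cancel₀ hp0
      linear_combination b * ht + a * hs - y * hab
    have hs1 : s ^ 2 ≤ 1 := by nlinarith [sq_nonneg t]
    have ht1 : t ^ 2 ≤ 1 := by nlinarith [sq_nonneg s]
    have hsl : -1 ≤ s := by nlinarith
    have hsu : s ≤ 1 := by nlinarith
    have htl : -1 ≤ t := by nlinarith
    have htu : t ≤ 1 := by nlinarith
    have hc : (s = 0 ∧ t = 1) ∨ (s = 0 ∧ t = -1) ∨ (s = 1 ∧ t = 0) ∨ (s = -1 ∧ t = 0) := by
      clear hs ht hx hy hs1 ht1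
      interval_cases s <;> interval_cases t <;> simp at hst ⊢
    rcases hc with ⟨h1, h2⟩ | ⟨h1, h2⟩ | ⟨h1, h2⟩ | ⟨h1, h2⟩ <;> rw [h1, h2] at hx hy <;> rw [hx, hy] <;> simp
  have hset : {q : ℤ × ℤ | q.1 ^ 2 + q.2 ^ 2 = (p : ℤ)} =
      (({(a, b), (-a, -b), (-b, a), (b, -a), (a, -b), (-a, b), (b, a), (-b, -a)} : Finset (ℤ × ℤ)) : Set (ℤ × ℤ)) := by
    ext ⟨x, y⟩
    simp only [Set.mem_ofPred_eq, Finset.coe_insert, Finset.coe_singleton, Set.mem_insert_iff, Set.mem_singleton_iff, Prod.mk.injEq]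
    constructor
    · intro h
      have hd : (p:ℤ) ∣ (a * y - b * x) * (a * y + b * x) := by
        refine ⟨a ^ 2 - x ^ 2, ?_⟩
        linear_combination a ^ 2 * h - x ^ 2 * hab
      rcases hP.dvd_or_dvd hd with h1 | h1
      · rcases key x y h h1 with h | h | h | h <;> simp [h]
      · have := key (-x) y (by linarith) (by simpa using h1)
        have e1 : ∀ r : ℤ, -x = r ↔ x = -r := fun r => neg_eq_iff_eq_neg
        simp only [e1, neg_neg] at this
        rcases this with h | h | h | h <;> simp [h]
    · rintro (⟨rfl, rfl⟩ | ⟨rfl, rfl⟩ | ⟨rfl, rfl⟩ | ⟨rfl, rfl⟩ | ⟨rfl, rfl⟩ | ⟨rfl, rfl⟩ | ⟨rfl, rfl⟩ | ⟨rfl, rfl⟩) <;> linarith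
  unfold sumTwoSquaresRep
  rw [hset, Set.ncard_coe_finset]
  have hap : 0 < a := lt_of_le_of_ne ha0 hane.symm
  have hbp : 0 < b := lt_of_le_of_ne hb0 hbne.symm
  repeat rw [Finset.card_insert_of_notMem (by simp only [Finset.mem_insert, Finset.mem_singleton, Prod.mk.injEq]; omega)]
  simp

lemma gauss_units_card (u : GaussianInt) (hu : IsUnit u) :
    u ∈ ({⟨1, 0⟩, ⟨-1, 0⟩, ⟨0, 1⟩, ⟨0, -1⟩} : Finset GaussianInt) := by
  have h := (Zsqrtd.norm_eq_one_iff' (d := -1) (by norm_num) u).2 hu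
  obtain ⟨s, t⟩ := u
  simp only [Zsqrtd.norm_def] at h
  have hs1 : s ^ 2 ≤ 1 := by nlinarith [sq_nonneg t]
  have ht1 : t ^ 2 ≤ 1 := by nlinarith [sq_nonneg s]
  have hsl : -1 ≤ s := by nlinarith
  have hsu : s ≤ 1 := by nlinarith
  have htl : -1 ≤ t := by nlinarith
  have htu : t ≤ 1 := by nlinarith
  interval_cases s <;> interval_cases t <;> simp_all

/-- divisors of a product of two prime powers -/
lemma gauss_dvd {P Q z : GaussianInt} (hP : Prime P) (hQ : Prime Q) (k : ℕ) (h : z ∣ P ^ k * Q ^ k) :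
    ∃ i ≤ k, ∃ j ≤ k, ∃ u : GaussianInt, IsUnit u ∧ z = P ^ i * Q ^ j * u := by
  obtain ⟨x, y, hx, hy, rfl⟩ := exists_dvd_and_dvd_of_dvd_mul h
  obtain ⟨i, hi, hxi⟩ := (dvd_prime_pow hP k).1 hx
  obtain ⟨j, hj, hyj⟩ := (dvd_prime_pow hQ k).1 hy
  obtain ⟨u, hu⟩ := hxi.symm
  obtain ⟨v, hv⟩ := hyj.symm
  exact ⟨i, hi, j, hj, u * v, (u * v).isUnit, by rw [← hu, ← hv]; ring⟩

lemma rep_pow (p : ℕ) (hpp : p.Prime) (k : ℕ) : sumTwoSquaresRep (p ^ k) ≤ 4 * (k + 1) ^ 2 := by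
  have : Fact p.Prime := ⟨hpp⟩
  obtain ⟨P, Q, hP, hQ, hd⟩ : ∃ P Q : GaussianInt, Prime P ∧ Prime Q ∧ (p : GaussianInt) ∣ P * Q := by
    by_cases h : Prime (p : GaussianInt)
    · exact ⟨p, p, h, h, dvd_mul_right _ _⟩
    · obtain ⟨a, b, hab⟩ := GaussianInt.sq_add_sq_of_nat_prime_of_not_irreducible p
        (fun h' => h h'.prime)
      have hpr : ∀ z : GaussianInt, z.norm = p → Prime z := by
        intro z hz
        refine Irreducible.prime ⟨?_, ?_⟩
        · intro hu
          have := (Zsqrtd.norm_eq_one_iff' (d := -1) (by norm_num) z).2 hu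
          rw [hz] at this
          exact hpp.one_lt.ne' (by exact_mod_cast this)
        · intro x y hxy
          have h1 : x.norm * y.norm = p := by rw [← Zsqrtd.norm_mul, ← hxy, hz]
          have hI : Irreducible (p : ℤ) := (Nat.prime_iff_prime_int.1 hpp).irreducible
          rcases hI.isUnit_or_isUnit h1.symm with h2 | h2
          · left
            exact Zsqrtd.norm_eq_one_iff.1 (Int.isUnit_iff_natAbs_eq.1 h2)
          · right
            exact Zsqrtd.norm_eq_one_iff.1 (Int.isUnit_iff_natAbs_eq.1 h2)
      have hab' : (a:ℤ) ^ 2 + (b:ℤ) ^ 2 = p := by exact_mod_cast hab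
      refine ⟨⟨a, b⟩, ⟨a, -b⟩, hpr _ ?_, hpr _ ?_, ?_⟩
      · simp only [Zsqrtd.norm_def]; linarith
      · simp only [Zsqrtd.norm_def]; linarith
      · refine Eq.dvd ?_
        rw [Zsqrtd.ext_iff]
        constructor
        · simp; linarith
        · simp; ring
  set U : Finset GaussianInt := {⟨1, 0⟩, ⟨-1, 0⟩, ⟨0, 1⟩, ⟨0, -1⟩} with hU
  set F : Finset (ℤ × ℤ) := ((Finset.range (k + 1) ×ˢ Finset.range (k + 1)) ×ˢ U).image
    (fun w => ((P ^ w.1.1 * Q ^ w.1.2 * w.2).re, (P ^ w.1.1 * Q ^ w.1.2 * w.2).im)) with hF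
  have hsub : {q : ℤ × ℤ | q.1 ^ 2 + q.2 ^ 2 = ((p ^ k : ℕ) : ℤ)} ⊆ (F : Set (ℤ × ℤ)) := by
    rintro ⟨x, y⟩ h
    simp only [Set.mem_ofPred_eq] at h
    set z : GaussianInt := ⟨x, y⟩ with hz
    have hn : z.norm = p ^ k := by
      simp only [Zsqrtd.norm_def, hz]
      push_cast at h
      linarith
    have hzd : z ∣ P ^ k * Q ^ k := by
      rw [← mul_pow]
      refine dvd_trans ?_ (pow_dvd_pow_of_dvd hd k)
      refine ⟨star z, ?_⟩
      rw [← Zsqrtd.norm_eq_mul_conj, hn]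
      push_cast
      rfl
    obtain ⟨i, hi, j, hj, u, hu, he⟩ := gauss_dvd hP hQ k hzd
    rw [hF, Finset.coe_image]
    refine ⟨((i, j), u), ?_, ?_⟩
    · simp only [Finset.coe_product, Set.mem_prod, Finset.mem_coe, Finset.mem_range]
      exact ⟨⟨by omega, by omega⟩, gauss_units_card u hu⟩
    · simp only
      rw [← he]
  unfold sumTwoSquaresRep
  refine (Set.ncard_le_ncard hsub (Finset.finite_toSet F)).trans ?_
  rw [Set.ncard_coe_finset]
  refine Finset.card_image_le.trans ?_
  rw [Finset.card_product, Finset.card_product, Finset.card_range]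
  have : U.card ≤ 4 := Finset.card_le_four
  nlinarith [Nat.mul_le_mul_left ((k+1)*(k+1)) this]

section
open Topology

lemma diff_bound (N n : ℕ) (hn : 1 ≤ n) (hnN : n ≤ N) (h2 : n ≠ 2) :
    |ArithmeticFunction.vonMangoldt n * (sumTwoSquaresRep n : ℝ) - 8 * ArithmeticFunction.vonMangoldt.residueClass (1 : ZMod 4) n| ≤
      if ¬ n.Prime then 8 * ((Nat.log 2 N : ℝ) + 1) ^ 2 * ArithmeticFunction.vonMangoldt n else 0 := by
  by_cases hp : n.Prime
  · rw [if_neg (not_not.2 hp)]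
    have hodd := hp.eq_two_or_odd
    have : n % 4 = 1 ∨ n % 4 = 3 := by omega
    rcases this with h | h
    · have : (n : ZMod 4) = 1 := by
        rw [← Nat.mod_add_div n 4, h]; push_cast; rw [show (4 : ZMod 4) = 0 from rfl]; simp
      rw [rep_one n hp h, ArithmeticFunction.vonMangoldt.residueClass, Set.indicator_of_mem (by simpa using this)]
      rw [abs_nonpos_iff]
      push_cast
      ring
    · have : (n : ZMod 4) ≠ 1 := by
        rw [← Nat.mod_add_div n 4, h]; push_cast; rw [show (4 : ZMod 4) = 0 from rfl]
        simp
        decide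
      rw [rep_three n h, ArithmeticFunction.vonMangoldt.residueClass, Set.indicator_of_notMem (by simpa using this)]
      simp
  · rw [if_pos hp]
    have hL0 : 0 ≤ ArithmeticFunction.vonMangoldt n := ArithmeticFunction.vonMangoldt_nonneg
    by_cases hpp : IsPrimePow n
    · obtain ⟨p, k, hpr, hk, rfl⟩ := (isPrimePow_nat_iff n).1 hpp
      set L := ArithmeticFunction.vonMangoldt (p ^ k) with hL
      have hr : (sumTwoSquaresRep (p ^ k) : ℝ) ≤ 4 * ((k : ℝ) + 1) ^ 2 := by exact_mod_cast rep_pow p hpr k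
      have hkN : k ≤ Nat.log 2 N := by
        apply Nat.le_log_of_pow_le (by norm_num)
        exact (Nat.pow_le_pow_left hpr.two_le k).trans hnN
      have hkN' : (k:ℝ) ≤ Nat.log 2 N := by exact_mod_cast hkN
      have hr2 : (sumTwoSquaresRep (p ^ k) : ℝ) ≤ 8 * ((Nat.log 2 N : ℝ) + 1) ^ 2 := by
        refine hr.trans ?_
        gcongr
        norm_num
      have h8 : 8 ≤ 8 * ((Nat.log 2 N : ℝ) + 1) ^ 2 := by
        have : (0:ℝ) ≤ Nat.log 2 N := by positivity
        nlinarith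
      have c1 := ArithmeticFunction.vonMangoldt.residueClass_nonneg (1 : ZMod 4) (p ^ k)
      have c2 := ArithmeticFunction.vonMangoldt.residueClass_le (1 : ZMod 4) (p ^ k)
      have d1 := mul_le_mul_of_nonneg_left hr2 hL0
      have d2 := mul_le_mul_of_nonneg_right h8 hL0
      have d3 : 0 ≤ L * (sumTwoSquaresRep (p ^ k) : ℝ) := by positivity
      rw [abs_le]
      constructor <;> nlinarith
    · have h0 : ArithmeticFunction.vonMangoldt n = 0 := by
        rw [ArithmeticFunction.vonMangoldt_apply, if_neg hpp]
      have c1 := ArithmeticFunction.vonMangoldt.residueClass_nonneg (1 : ZMod 4) n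
      have c2 := ArithmeticFunction.vonMangoldt.residueClass_le (1 : ZMod 4) n
      have c3 : ArithmeticFunction.vonMangoldt.residueClass (1 : ZMod 4) n = 0 := le_antisymm (by linarith) c1
      rw [c3, h0]
      simp

lemma total_bound : ∃ C : ℝ, ∀ N : ℕ, 3 ≤ N →
    |∑ n ∈ Finset.Icc 1 N, (ArithmeticFunction.vonMangoldt n * (sumTwoSquaresRep n : ℝ) - 8 * ArithmeticFunction.vonMangoldt.residueClass (1 : ZMod 4) n)| ≤
      C + 144 * (√N * Real.log N ^ 3) := by
  set f : ℕ → ℝ := fun n => ArithmeticFunction.vonMangoldt n * (sumTwoSquaresRep n : ℝ) - 8 * ArithmeticFunction.vonMangoldt.residueClass (1 : ZMod 4) n with hf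
  refine ⟨|f 2|, fun N hN => ?_⟩
  have hN' : (3:ℝ) ≤ N := by exact_mod_cast hN
  refine (Finset.abs_sum_le_sum_abs _ _).trans ?_
  rw [← Finset.add_sum_erase _ _ (show 2 ∈ Finset.Icc 1 N by simp; omega)]
  refine add_le_add le_rfl ?_
  set g : ℕ → ℝ := fun n => if ¬ n.Prime then 8 * ((Nat.log 2 N : ℝ) + 1) ^ 2 * ArithmeticFunction.vonMangoldt n else 0 with hg
  have hg0 : ∀ n, 0 ≤ g n := by
    intro n
    simp only [hg]
    split_ifs
    · exact le_rfl
    · have : 0 ≤ ArithmeticFunction.vonMangoldt n := ArithmeticFunction.vonMangoldt_nonneg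
      positivity
  have s1 : ∑ n ∈ (Finset.Icc 1 N).erase 2, |f n| ≤ ∑ n ∈ Finset.Icc 1 N, g n := by
    refine (Finset.sum_le_sum fun n hn => ?_).trans (Finset.sum_le_sum_of_subset_of_nonneg (Finset.erase_subset _ _) fun n _ _ => hg0 n)
    · rw [Finset.mem_erase, Finset.mem_Icc] at hn
      exact diff_bound N n hn.2.1 hn.2.2 hn.1
  refine s1.trans ?_
  have s2 : ∑ n ∈ Finset.Icc 1 N, g n = 8 * ((Nat.log 2 N : ℝ) + 1) ^ 2 * (Chebyshev.psi N - Chebyshev.theta N) := by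
    rw [Chebyshev.psi_sub_theta_eq_sum_not_prime, Nat.floor_natCast, Finset.mul_sum, Finset.sum_filter]
    rfl
  rw [s2]
  have hpt := Chebyshev.psi_sub_theta_le (x := N) (by linarith)
  have hlog1 : 1 ≤ Real.log N := by
    rw [Real.le_log_iff_exp_le (by linarith)]
    linarith [Real.exp_one_lt_d9]
  have hlg : (Nat.log 2 N : ℝ) ≤ 2 * Real.log N := by
    have h1 : (2:ℝ) ^ (Nat.log 2 N) ≤ N := by exact_mod_cast Nat.pow_log_le_self 2 (by omega)
    have h2 := Real.log_le_log (by positivity) h1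
    rw [Real.log_pow] at h2
    have h3 := Real.log_two_gt_d9
    have : (0:ℝ) ≤ Nat.log 2 N := by positivity
    nlinarith
  calc 8 * ((Nat.log 2 N : ℝ) + 1) ^ 2 * (Chebyshev.psi N - Chebyshev.theta N)
      ≤ 8 * (3 * Real.log N) ^ 2 * (2 * √N * Real.log N) := by
        gcongr
        · linarith [Chebyshev.theta_le_psi (N:ℝ)]
        · linarith
    _ = _ := by ring

end

/-- Σ_{n ≤ N} Λ(n)·R(n) = 4N + o(N). -/
theorem statement5 :
    Tendsto (fun N : ℕ =>
        ((∑ n ∈ Finset.Icc 1 N,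
            ArithmeticFunction.vonMangoldt n * (sumTwoSquaresRep n : ℝ))
          - 4 * (N : ℝ)) / (N : ℝ))
      atTop (nhds 0) := by
  obtain ⟨C, hC⟩ := total_bound
  have hpnt := pnt_ap (1 : ZMod 4) isUnit_one
  have htot : (Nat.totient 4 : ℝ)⁻¹ = 1 / 2 := by
    rw [show Nat.totient 4 = 2 by decide]; norm_num
  rw [htot] at hpnt
  have hmain := (hpnt.const_mul 8).sub_const 4
  have e0 : (8 * (1 / 2) - 4 : ℝ) = 0 := by norm_num
  rw [e0] at hmain
  set D : ℕ → ℝ := fun N => ∑ n ∈ Finset.Icc 1 N, (ArithmeticFunction.vonMangoldt n * (sumTwoSquaresRep n : ℝ) - 8 * ArithmeticFunction.vonMangoldt.residueClass (1 : ZMod 4) n) with hD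
  have hDt : Tendsto (fun N : ℕ => D N / N) atTop (nhds 0) := by
    have hl : Tendsto (fun x : ℝ => Real.log x ^ (3:ℝ) / x ^ (1/2:ℝ)) atTop (nhds 0) :=
      (isLittleO_log_rpow_rpow_atTop (3:ℝ) (by norm_num : (0:ℝ) < 1/2)).tendsto_div_nhds_zero
    have hl2 := (hl.comp tendsto_natCast_atTop_atTop).const_mul 144
    have hl3 : Tendsto (fun N : ℕ => C / (N:ℝ)) atTop (nhds 0) := tendsto_const_div_atTop_nhds_zero_nat C
    have hl4 := hl3.add hl2
    rw [mul_zero, add_zero] at hl4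
    refine squeeze_zero_norm' ?_ hl4
    filter_upwards [eventually_ge_atTop 3] with N hN
    have hNp : (0:ℝ) < N := by positivity
    rw [norm_div, Real.norm_eq_abs, Real.norm_of_nonneg hNp.le, div_le_iff₀ hNp]
    refine (hC N hN).trans (le_of_eq ?_)
    simp only [Function.comp]
    rw [← Real.sqrt_eq_rpow, show (3:ℝ) = ((3:ℕ):ℝ) by norm_num, Real.rpow_natCast]
    have hs : √(N:ℝ) ≠ 0 := by positivity
    have hs2 : √(N:ℝ) * √(N:ℝ) = N := Real.mul_self_sqrt hNp.le
    rw [add_mul, div_mul_cancel₀ _ hNp.ne']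
    congr 1
    have hq : (N:ℝ) / √(N:ℝ) = √(N:ℝ) := by rw [div_eq_iff hs]; exact hs2.symm
    calc 144 * (√(N:ℝ) * Real.log N ^ 3) = 144 * Real.log N ^ 3 * (N / √(N:ℝ)) := by rw [hq]; ring
      _ = _ := by ring
  have := hDt.add hmain
  rw [add_zero] at this
  refine this.congr' ?_
  filter_upwards [eventually_ge_atTop 1] with N hN
  have hNp : (0:ℝ) < N := by positivity
  simp only [hD]
  rw [Finset.sum_sub_distrib, ← Finset.mul_sum]
  field_simp
  ring
end

section
/- For every integer D with D ≡ 0 or 1 (mod 4) and D < 0, there exists a set of primes 𝒫_D which is a union of congruence classes modulo |D| and has natural density 1/2 in the primes, such that, setting 𝒫_D* = 𝒫_D ∪ {p prime : p ∣ D} and 𝒬_D = 𝒫 ∖ 𝒫_D*, there is a constant C(D) with the following property: for every PDBQF f of discriminant D and every positive integer n, R_f(n) ≤ C(D)·τ_D(n)·Σ_{m ∈ ⟨𝒬_D⟩, m² ∣ n} 1_{⟨𝒫_D*⟩}(n/m²). -/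
open Filter
open scoped Classical

structure PDBQF where
  a : ℤ
  b : ℤ
  c : ℤ
  disc_neg : b ^ 2 - 4 * a * c < 0

def PDBQF.disc (f : PDBQF) : ℤ := f.b ^ 2 - 4 * f.a * f.c

def PDBQF.form (f : PDBQF) (x y : ℤ) : ℤ := f.a * x ^ 2 + f.b * x * y + f.c * y ^ 2

noncomputable def PDBQF.R (f : PDBQF) (n : ℤ) : ℕ :=
  Set.ncard {p : ℤ × ℤ | f.form p.1 p.2 = n}

/-- n lies in ⟨𝒜⟩, i.e. all prime factors of n lie in 𝒜. -/
def inSpan (A : Set ℕ) (n : ℕ) : Prop := ∀ p : ℕ, p.Prime → p ∣ n → p ∈ A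

open MeasureTheory in
lemma ker_exists : ∃ k : ℝ → ℝ, (∀ w, 0 ≤ k w) ∧ Integrable k ∧ 0 < ∫ w, k w ∧
    Continuous k ∧
    ∀ w : ℝ, (∫ t in (-1:ℝ)..1, ((1-|t|:ℝ):ℂ) * Complex.exp (Complex.I * w * t)) = (k w : ℂ) := by
  set k : ℝ → ℝ := fun w => ∫ t in (-1:ℝ)..1, (1-|t|) * Real.cos (w * t) with hk
  have hcont : Continuous k := by
    apply intervalIntegral.continuous_parametric_intervalIntegral_of_continuous' (by fun_prop)
  have hform : ∀ w : ℝ, w ≠ 0 → k w = 2 * (1 - Real.cos w) / w ^ 2 := by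
    intro w hw
    have h1 : ∫ t in (0:ℝ)..1, (1-|t|) * Real.cos (w * t) = (1 - Real.cos w) / w ^ 2 := by
      have : ∫ t in (0:ℝ)..1, (1-|t|) * Real.cos (w * t) = ∫ t in (0:ℝ)..1, (1-t) * Real.cos (w * t) := by
        apply intervalIntegral.integral_congr
        intro t ht
        rw [Set.uIcc_of_le (by norm_num)] at ht
        simp only [abs_of_nonneg ht.1]
      rw [this, intervalIntegral.integral_eq_sub_of_hasDerivAt (f := fun t => (1-t) * Real.sin (w*t) / w - Real.cos (w*t)/w^2)]
      · simp; field_simp; ring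
      · intro t _
        have e1 : HasDerivAt (fun t => w * t) w t := by simpa using (hasDerivAt_id t).const_mul w
        have e2 : HasDerivAt (fun t:ℝ => 1 - t) (-1) t := by simpa using (hasDerivAt_id t).const_sub 1
        exact (((e2.mul e1.sin).div_const w).sub (e1.cos.div_const (w^2))).congr_deriv
          (by field_simp; ring)
      · apply Continuous.intervalIntegrable; fun_prop
    have h2 : ∫ t in (-1:ℝ)..0, (1-|t|) * Real.cos (w * t) = (1 - Real.cos w) / w ^ 2 := by
      rw [← h1]
      have := intervalIntegral.integral_comp_neg (a := (0:ℝ)) (b := 1) (fun t => (1-|t|) * Real.cos (w * t))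
      simp only [neg_zero] at this
      rw [← this]; simp
    rw [hk]
    show ∫ t in (-1:ℝ)..1, (1-|t|) * Real.cos (w * t) = _
    rw [← intervalIntegral.integral_add_adjacent_intervals (b := 0), h1, h2]
    · ring
    · apply Continuous.intervalIntegrable; fun_prop
    · apply Continuous.intervalIntegrable; fun_prop
  have hk0 : k 0 = 1 := by
    show ∫ t in (-1:ℝ)..1, (1-|t|) * Real.cos (0 * t) = 1
    rw [← intervalIntegral.integral_add_adjacent_intervals (b := 0)]
    · have h1 : ∫ t in (0:ℝ)..1, (1-|t|) * Real.cos (0 * t) = 1/2 := by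
        have : ∫ t in (0:ℝ)..1, (1-|t|) * Real.cos (0 * t) = ∫ t in (0:ℝ)..1, (1-t) := by
          apply intervalIntegral.integral_congr
          intro t ht
          rw [Set.uIcc_of_le (by norm_num)] at ht
          simp [abs_of_nonneg ht.1]
        rw [this, intervalIntegral.integral_sub (by simp) (by simp)]; simp; norm_num
      have h2 : ∫ t in (-1:ℝ)..0, (1-|t|) * Real.cos (0 * t) = 1/2 := by
        rw [← h1]
        have := intervalIntegral.integral_comp_neg (a := (0:ℝ)) (b := 1) (fun t => (1-|t|) * Real.cos (0 * t))
        simp only [neg_zero] at this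
        rw [← this]; simp
      rw [h1,h2]; norm_num
    · apply Continuous.intervalIntegrable; fun_prop
    · apply Continuous.intervalIntegrable; fun_prop
  have hnn : ∀ w, 0 ≤ k w := by
    intro w
    by_cases hw : w = 0
    · rw [hw, hk0]; norm_num
    · rw [hform w hw]
      have := Real.cos_le_one w
      apply div_nonneg <;> nlinarith [sq_nonneg w]
  have hint : Integrable k := by
    apply Integrable.mono' (integrable_inv_one_add_sq.const_mul 8) hcont.aestronglyMeasurable
    refine Eventually.of_forall fun w => ?_
    rw [Real.norm_eq_abs, abs_of_nonneg (hnn w)]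
    by_cases hw : w = 0
    · rw [hw, hk0]; norm_num
    rw [hform w hw]
    have hw2 : 0 < w^2 := by positivity
    rw [← div_eq_mul_inv, div_le_div_iff₀ hw2 (by positivity)]
    have h1 := Real.neg_one_le_cos w
    have h2 := Real.one_sub_sq_div_two_le_cos (x := w)
    nlinarith
  refine ⟨k, hnn, hint, ?_, hcont, ?_⟩
  · rw [integral_pos_iff_support_of_nonneg hnn hint]
    apply IsOpen.measure_pos
    · exact hcont.isOpen_support
    · exact ⟨0, by simp [hk0]⟩
  · intro w
    have hs : ∫ t in (-1:ℝ)..1, (1-|t|) * Real.sin (w * t) = 0 := by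
      have := intervalIntegral.integral_comp_neg (a := (-1:ℝ)) (b := 1) (fun t => (1-|t|) * Real.sin (w * t))
      simp at this
      linarith
    have : (∫ t in (-1:ℝ)..1, ((1-|t|:ℝ):ℂ) * Complex.exp (Complex.I * w * t)) =
       (∫ t in (-1:ℝ)..1, (((1-|t|) * Real.cos (w * t) : ℝ) : ℂ)) + Complex.I * (∫ t in (-1:ℝ)..1, (((1-|t|) * Real.sin (w * t) : ℝ) : ℂ)) := by
      rw [← intervalIntegral.integral_const_mul, ← intervalIntegral.integral_add]
      · apply intervalIntegral.integral_congr
        intro t _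
        simp only
        rw [show Complex.I * w * t = ((w * t : ℝ):ℂ) * Complex.I by push_cast; ring, Complex.exp_mul_I]
        push_cast; ring
      · apply Continuous.intervalIntegrable; fun_prop
      · apply Continuous.intervalIntegrable; fun_prop
    rw [this, intervalIntegral.integral_ofReal, intervalIntegral.integral_ofReal, hs]
    simp [hk]

open MeasureTheory in
lemma taub_conv (k : ℝ → ℝ) (hk0 : ∀ w, 0 ≤ k w) (hki : Integrable k) (hkc : Continuous k)
    (hkf : ∀ w : ℝ, (∫ t in (-1:ℝ)..1, ((1-|t|:ℝ):ℂ) * Complex.exp (Complex.I * w * t)) = (k w : ℂ))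
    (φ : ℝ → ℝ) (hφm : Measurable φ) (M : ℝ) (hM : ∀ v, |φ v| ≤ M) (hφ0 : ∀ v < 0, φ v = 0)
    (H : ℂ → ℂ) (hH : ContinuousOn H {z | 0 ≤ z.re})
    (hHφ : ∀ z : ℂ, 0 < z.re → ∫ v : ℝ, (φ v : ℂ) * Complex.exp (-z * v) = H z) :
    Tendsto (fun y : ℝ => ∫ v, φ v * k (y - v)) atTop (nhds 0) := by
  have hM0 : 0 ≤ M := (abs_nonneg _).trans (hM 0)
  -- integrability of exponential-damped φ
  have hexpI : ∀ δ : ℝ, 0 < δ → Integrable (fun v : ℝ => φ v * Real.exp (-δ * v)) := by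
    intro δ hδ
    have h1 : IntegrableOn (fun v : ℝ => M * Real.exp (-δ * v)) (Set.Ioi 0) :=
      (integrableOn_exp_mul_Ioi (by linarith) 0).const_mul M
    have h1' : Integrable ((Set.Ici 0).indicator (fun v : ℝ => M * Real.exp (-δ * v))) := by
      rw [integrable_indicator_iff measurableSet_Ici, integrableOn_Ici_iff_integrableOn_Ioi]
      exact h1
    apply h1'.mono' (by fun_prop)
    refine Eventually.of_forall fun v => ?_
    by_cases hv : v < 0
    · rw [hφ0 v hv, Set.indicator_of_notMem (by simpa using hv)]; simp
    · rw [Set.indicator_of_mem (by simpa using hv)]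
      rw [Real.norm_eq_abs, abs_mul, abs_of_pos (Real.exp_pos _)]
      exact mul_le_mul_of_nonneg_right (hM v) (Real.exp_pos _).le
  have hfub : ∀ (y δ : ℝ), 0 < δ →
      (∫ t in (-1:ℝ)..1, ((1-|t|:ℝ):ℂ) * Complex.exp (Complex.I * y * t) * H (δ + t * Complex.I)) =
      ((∫ v, φ v * Real.exp (-δ * v) * k (y - v) : ℝ) : ℂ) := by
    intro y δ hδ
    have e1 : ∀ t : ℝ, ((1-|t|:ℝ):ℂ) * Complex.exp (Complex.I * y * t) * H (δ + t * Complex.I) =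
        ∫ v : ℝ, ((φ v * Real.exp (-δ * v) : ℝ) : ℂ) * (((1-|t|:ℝ):ℂ) * Complex.exp (Complex.I * (y - v : ℝ) * t)) := by
      intro t
      rw [← hHφ _ (by simpa using hδ), ← integral_const_mul]
      congr 1
      ext v
      push_cast
      rw [show -(↑δ + ↑t * Complex.I) * (v:ℂ) = -δ * v + (-(t * Complex.I * v)) by ring,
        show Complex.I * (↑y - ↑v) * ↑t = Complex.I * y * t + (-(t * Complex.I * v)) by ring,
        Complex.exp_add, Complex.exp_add]
      ring
    simp_rw [e1]
    rw [intervalIntegral.integral_of_le (by norm_num), integral_integral_swap]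
    · rw [← integral_complex_ofReal]
      congr 1
      ext v
      rw [integral_const_mul, ← intervalIntegral.integral_of_le (by norm_num), hkf]
      push_cast; ring
    · have hA : Integrable (fun v : ℝ => ((φ v * Real.exp (-δ * v) : ℝ) : ℂ)) := (hexpI δ hδ).ofReal
      have hB : Integrable (fun t : ℝ => (1:ℂ)) (volume.restrict (Set.Ioc (-1:ℝ) 1)) := by
        apply integrable_const
      have hAB := hB.mul_prod hA
      refine hAB.mono ?_ ?_
      · apply Measurable.aestronglyMeasurable
        unfold Function.uncurry
        fun_prop
      · have : ∀ᵐ t ∂(volume.restrict (Set.Ioc (-1:ℝ) 1)), t ∈ Set.Ioc (-1:ℝ) 1 := 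
          ae_restrict_mem measurableSet_Ioc
        have h2 := (Measure.quasiMeasurePreserving_fst (μ := volume.restrict (Set.Ioc (-1:ℝ) 1)) (ν := (volume : Measure ℝ))).ae this
        filter_upwards [h2] with p hp
        simp only [Function.uncurry]
        rw [norm_mul, norm_mul, norm_mul, mul_comm]
        apply mul_le_mul_of_nonneg_right _ (norm_nonneg _)
        rw [show Complex.I * (y - p.2 : ℝ) * (p.1:ℂ) = (((y - p.2) * p.1 : ℝ) : ℂ) * Complex.I by push_cast; ring,
          Complex.norm_exp_ofReal_mul_I, Complex.norm_real, Real.norm_eq_abs]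
        have h3 : |p.1| ≤ 1 := abs_le.2 ⟨hp.1.le, hp.2⟩
        have := abs_nonneg p.1
        simp only [mul_one, norm_one]
        rw [abs_le]; constructor <;> linarith
  have hlim : ∀ y : ℝ, (∫ t in (-1:ℝ)..1, ((1-|t|:ℝ):ℂ) * Complex.exp (Complex.I * y * t) * H (t * Complex.I)) =
      ((∫ v, φ v * k (y - v) : ℝ) : ℂ) := by
    intro y
    have hcomp : IsCompact ((fun p : ℝ × ℝ => (p.1 + p.2 * Complex.I : ℂ)) '' (Set.Icc 0 1 ×ˢ Set.Icc (-1) 1)) :=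
      (isCompact_Icc.prod isCompact_Icc).image (by fun_prop)
    obtain ⟨C, hC⟩ := hcomp.exists_bound_of_continuousOn (hH.mono (by
      rintro _ ⟨p, hp, rfl⟩
      simpa using hp.1.1))
    have hC' : ∀ δ t : ℝ, 0 ≤ δ → δ ≤ 1 → -1 ≤ t → t ≤ 1 → ‖H (δ + t * Complex.I)‖ ≤ C := by
      intro δ t h1 h2 h3 h4
      exact hC _ ⟨(δ,t), ⟨⟨h1,h2⟩,⟨h3,h4⟩⟩, rfl⟩
    have hev : ∀ᶠ δ : ℝ in nhdsWithin 0 (Set.Ioi 0), 0 < δ ∧ δ ≤ 1 := by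
      filter_upwards [Ioc_mem_nhdsGT (zero_lt_one' ℝ)] with δ hδ using hδ
    have L1 : Tendsto (fun δ : ℝ => ∫ t in (-1:ℝ)..1, ((1-|t|:ℝ):ℂ) * Complex.exp (Complex.I * y * t) * H (δ + t * Complex.I))
        (nhdsWithin 0 (Set.Ioi 0)) (nhds (∫ t in (-1:ℝ)..1, ((1-|t|:ℝ):ℂ) * Complex.exp (Complex.I * y * t) * H (t * Complex.I))) := by
      apply intervalIntegral.tendsto_integral_filter_of_dominated_convergence (fun _ => C)
      · filter_upwards [hev] with δ hδ
        apply Continuous.aestronglyMeasurable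
        apply Continuous.mul (by fun_prop)
        apply hH.comp_continuous (by fun_prop)
        intro t; simpa using hδ.1.le
      · filter_upwards [hev] with δ hδ
        refine Eventually.of_forall fun t ht => ?_
        rw [Set.uIoc_of_le (by norm_num)] at ht
        rw [norm_mul, norm_mul, show Complex.I * y * (t:ℂ) = ((y * t : ℝ) : ℂ) * Complex.I by push_cast; ring,
          Complex.norm_exp_ofReal_mul_I, Complex.norm_real, Real.norm_eq_abs]
        have h3 : |t| ≤ 1 := abs_le.2 ⟨ht.1.le, ht.2⟩
        have := abs_nonneg t
        have h4 := hC' δ t hδ.1.le hδ.2 ht.1.le ht.2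
        rw [abs_of_nonneg (by linarith)]
        nlinarith [norm_nonneg (H (δ + t * Complex.I))]
      · simp
      · refine Eventually.of_forall fun t ht => ?_
        apply Tendsto.const_mul
        have h0 : ContinuousWithinAt H {z | 0 ≤ z.re} (t * Complex.I) := hH _ (by simp)
        apply h0.tendsto.comp
        rw [tendsto_nhdsWithin_iff]
        constructor
        · apply tendsto_nhdsWithin_of_tendsto_nhds
          have : Continuous (fun δ : ℝ => (δ + t * Complex.I : ℂ)) := by fun_prop
          simpa using this.tendsto 0
        · filter_upwards [hev] with δ hδ
          simpa using hδ.1.le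
    have L2 : Tendsto (fun δ : ℝ => ∫ v, φ v * Real.exp (-δ * v) * k (y - v))
        (nhdsWithin 0 (Set.Ioi 0)) (nhds (∫ v, φ v * k (y - v))) := by
      apply tendsto_integral_filter_of_dominated_convergence (fun v => M * k (y - v))
      · filter_upwards with δ
        apply Measurable.aestronglyMeasurable
        have := hkc.measurable
        fun_prop
      · filter_upwards [hev] with δ hδ
        refine Eventually.of_forall fun v => ?_
        rw [Real.norm_eq_abs, abs_mul, abs_mul, abs_of_nonneg (hk0 _), abs_of_pos (Real.exp_pos _)]
        apply mul_le_mul_of_nonneg_right _ (hk0 _)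
        by_cases hv : v < 0
        · rw [hφ0 v hv]; simpa using hM0
        · have : Real.exp (-δ * v) ≤ 1 := by
            rw [Real.exp_le_one_iff]; nlinarith [hδ.1]
          nlinarith [hM v, abs_nonneg (φ v), Real.exp_pos (-δ * v)]
      · exact (hki.comp_sub_left y).const_mul M
      · refine Eventually.of_forall fun v => ?_
        apply tendsto_nhdsWithin_of_tendsto_nhds
        have : Continuous (fun δ : ℝ => φ v * Real.exp (-δ * v) * k (y - v)) := by fun_prop
        simpa using this.tendsto 0
    refine tendsto_nhds_unique L1 ?_
    refine Tendsto.congr' ?_ (Complex.continuous_ofReal.continuousAt.tendsto.comp L2)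
    filter_upwards [hev] with δ hδ
    exact (hfub y δ hδ.1).symm
  -- Riemann-Lebesgue
  have RL := Real.tendsto_integral_exp_smul_cocompact
    ((Set.Ioc (-1:ℝ) 1).indicator (fun t : ℝ => ((1-|t|:ℝ):ℂ) * H (t * Complex.I)))
  have hy : Tendsto (fun y : ℝ => -y / (2 * Real.pi)) atTop (cocompact ℝ) := by
    have : Tendsto (fun y : ℝ => -y / (2 * Real.pi)) atTop atBot :=
      tendsto_neg_atTop_atBot.atBot_div_const (by positivity)
    exact this.mono_right atBot_le_cocompact
  have h3 := RL.comp hy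
  have h4 : Tendsto (fun y : ℝ => ((∫ v, φ v * k (y - v) : ℝ) : ℂ)) atTop (nhds 0) := by
    refine h3.congr fun y => ?_
    rw [← hlim, intervalIntegral.integral_of_le (by norm_num), ← integral_indicator measurableSet_Ioc]
    simp only [Function.comp]
    congr 1
    ext t
    by_cases ht : t ∈ Set.Ioc (-1:ℝ) 1
    · rw [Set.indicator_of_mem ht, Set.indicator_of_mem ht, Circle.smul_def, Real.fourierChar_apply, smul_eq_mul]
      have : (2 * Real.pi * (-(t * (-y / (2 * Real.pi))))) = t * y := by
        field_simp
      rw [this]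
      push_cast
      rw [show (t:ℂ) * y * Complex.I = Complex.I * y * t by ring]
      ring
    · rw [Set.indicator_of_notMem ht, Set.indicator_of_notMem ht, smul_zero]
  have h5 := (Complex.continuous_re.tendsto 0).comp h4
  simpa [Function.comp_def] using h5

open MeasureTheory in
lemma taub_interval
    (φ : ℝ → ℝ) (hφm : Measurable φ) (M : ℝ) (hM : ∀ v, |φ v| ≤ M) (hφ0 : ∀ v < 0, φ v = 0)
    (H : ℂ → ℂ) (hH : ContinuousOn H {z | 0 ≤ z.re})
    (hHφ : ∀ z : ℂ, 0 < z.re → ∫ v : ℝ, (φ v : ℂ) * Complex.exp (-z * v) = H z)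
    (η r : ℝ) (hη : 0 < η) (hr : 0 < r) :
    ∃ Y : ℝ, ∀ y ≥ Y, ¬ (∀ v ∈ Set.Icc (y - r) (y + r), η ≤ φ v) := by
  obtain ⟨k, hk0, hki, hkpos, hkc, hkf⟩ := ker_exists
  set I := ∫ w, k w with hI
  have hM0 : 0 ≤ M := (abs_nonneg _).trans (hM 0)
  have hJ : Tendsto (fun L : ℝ => (η + M) * ∫ w in (-L)..L, k w) atTop (nhds ((η + M) * I)) :=
    (intervalIntegral_tendsto_integral hki tendsto_neg_atTop_atBot tendsto_id).const_mul _
  have hlt : (M + η / 2) * I < (η + M) * I := by nlinarith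
  obtain ⟨L, hL, hLpos⟩ := ((hJ.eventually (lt_mem_nhds hlt)).and (eventually_gt_atTop 0)).exists
  set T := L / r with hT
  have hTpos : 0 < T := by positivity
  have hconv := taub_conv k hk0 hki hkc hkf (fun v => φ (v / T)) (by fun_prop) M (fun v => hM _)
    (fun v hv => hφ0 _ (div_neg_of_neg_of_pos hv hTpos)) (fun z => T * H (T * z))
    (by
      apply ContinuousOn.mul (by fun_prop)
      apply hH.comp (by fun_prop)
      intro z hz
      simp only [Set.mem_ofPred_eq] at hz ⊢
      simp only [Complex.mul_re, Complex.ofReal_re, Complex.ofReal_im, zero_mul, sub_zero]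
      positivity)
    (by
      intro z hz
      have h1 := Measure.integral_comp_div (fun u : ℝ => (φ u : ℂ) * Complex.exp (-(T * z) * u)) T
      rw [hHφ _ (by simp; positivity)] at h1
      rw [abs_of_pos hTpos] at h1
      rw [Complex.real_smul] at h1
      rw [← h1]
      congr 1
      ext v
      congr 2
      have : (T:ℂ) ≠ 0 := by exact_mod_cast hTpos.ne'
      push_cast
      field_simp)
  have hev := hconv.eventually (gt_mem_nhds (show (0:ℝ) < η / 2 * I by positivity))
  rw [eventually_atTop] at hev
  obtain ⟨Y, hY⟩ := hev
  refine ⟨Y / T, fun y hy hcon => ?_⟩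
  have h1 := hY (T * y) (by rw [ge_iff_le, div_le_iff₀ hTpos] at hy; linarith)
  have h2 : ∫ v, φ (v / T) * k (T * y - v) = ∫ w, φ ((T * y - w) / T) * k w := by
    have := integral_sub_left_eq_self (fun v => φ (v / T) * k (T * y - v)) volume (T * y)
    rw [← this]
    congr 1; ext w; congr 2; ring
  have h3 : ∫ w, ((-M) * k w + (η + M) * (Set.Ioc (-L) L).indicator k w) ≤ ∫ w, φ ((T * y - w) / T) * k w := by
    apply integral_mono
    · exact (hki.const_mul _).add ((hki.indicator measurableSet_Ioc).const_mul _)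
    · apply (hki.const_mul M).mono'
      · apply Measurable.aestronglyMeasurable
        have := hkc.measurable
        fun_prop
      · refine Eventually.of_forall fun w => ?_
        rw [Real.norm_eq_abs, abs_mul, abs_of_nonneg (hk0 _)]
        exact mul_le_mul_of_nonneg_right (hM _) (hk0 _)
    · intro w
      simp only
      by_cases hw : w ∈ Set.Ioc (-L) L
      · rw [Set.indicator_of_mem hw]
        have h5 : η ≤ φ ((T * y - w) / T) := by
          apply hcon
          have e : (T * y - w) / T = y - w / T := by field_simp
          have e2 : L / T = r := by rw [hT]; field_simp
          have e3 : w / T ≤ L / T := div_le_div_of_nonneg_right hw.2 hTpos.le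
          have e4 : (-L) / T ≤ w / T := div_le_div_of_nonneg_right hw.1.le hTpos.le
          rw [neg_div] at e4
          rw [e]; constructor <;> linarith
        nlinarith [hk0 w]
      · rw [Set.indicator_of_notMem hw]
        have := (abs_le.1 (hM ((T * y - w) / T))).1
        nlinarith [hk0 w]
  rw [integral_add (hki.const_mul _) ((hki.indicator measurableSet_Ioc).const_mul _), integral_const_mul,
    integral_const_mul, integral_indicator measurableSet_Ioc, ← intervalIntegral.integral_of_le (by linarith)] at h3
  rw [h2] at h1
  nlinarith

open MeasureTheory in
lemma taub_main (B : ℝ → ℝ) (hBm : Measurable B) (hB0 : ∀ v, 0 ≤ B v) (M : ℝ) (hBM : ∀ v, 0 ≤ v → B v ≤ M)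
    (hmono : ∀ v v', 0 ≤ v → v ≤ v' → B v * Real.exp (-(v' - v)) ≤ B v') (c : ℝ) (hc : 0 < c)
    (H : ℂ → ℂ) (hH : ContinuousOn H {z | 0 ≤ z.re})
    (hHφ : ∀ z : ℂ, 0 < z.re → ∫ v : ℝ in Set.Ioi 0, ((B v - c : ℝ) : ℂ) * Complex.exp (-z * v) = H z) :
    Tendsto B atTop (nhds c) := by
  set φ : ℝ → ℝ := (Set.Ioi 0).indicator (fun v => B v - c) with hφ
  have hφm : Measurable φ := (hBm.sub_const c).indicator measurableSet_Ioi
  have hφ0 : ∀ v < 0, φ v = 0 := fun v hv => Set.indicator_of_notMem (by simpa using hv.le) _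
  have hφM : ∀ v, |φ v| ≤ |M| + c := by
    intro v
    by_cases hv : 0 < v
    · rw [hφ, Set.indicator_of_mem (by simpa using hv), abs_le]
      have := hB0 v; have := hBM v hv.le; have := le_abs_self M
      constructor <;> linarith
    · rw [hφ, Set.indicator_of_notMem (by simpa using hv), abs_zero]; positivity
  have hφH : ∀ z : ℂ, 0 < z.re → ∫ v : ℝ, (φ v : ℂ) * Complex.exp (-z * v) = H z := by
    intro z hz
    rw [← hHφ z hz, ← integral_indicator measurableSet_Ioi]
    congr 1; ext v
    by_cases hv : v ∈ Set.Ioi (0:ℝ)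
    · rw [hφ, Set.indicator_of_mem hv, Set.indicator_of_mem hv]
    · rw [hφ, Set.indicator_of_notMem hv, Set.indicator_of_notMem hv]; simp
  rw [Metric.tendsto_atTop]
  intro η hη
  set r := η / (4 * (c + η)) with hr
  have hrpos : 0 < r := by positivity
  have hr2 : 2 * r * (c + η) = η / 2 := by rw [hr]; field_simp; norm_num
  have hexp : 1 - 2 * r ≤ Real.exp (-(2*r)) := by linarith [Real.add_one_le_exp (-(2*r))]
  obtain ⟨Y1, hY1⟩ := taub_interval φ hφm _ hφM hφ0 H hH hφH (η/2) r (by positivity) hrpos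
  obtain ⟨Y2, hY2⟩ := taub_interval (fun v => - φ v) hφm.neg (|M| + c) (by simpa using hφM)
    (fun v hv => by simp [hφ0 v hv]) (fun z => - H z) hH.neg
    (fun z hz => by rw [← hφH z hz, ← integral_neg]; simp) (η/2) r (by positivity) hrpos
  refine ⟨max (max Y1 (Y2 + r)) (2 * r + 1), fun y hy => ?_⟩
  have hyY1 : Y1 ≤ y := (le_max_left _ _).trans ((le_max_left _ _).trans hy)
  have hyY2 : Y2 + r ≤ y := (le_max_right _ _).trans ((le_max_left _ _).trans hy)
  have hy2 : 2 * r + 1 ≤ y := (le_max_right _ _).trans hy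
  rw [Real.dist_eq, abs_lt]
  constructor
  · by_contra hcon
    have hcon : B y ≤ c - η := by linarith
    refine hY2 (y - r) (by linarith) fun v hv => ?_
    have hv1 : y - 2 * r ≤ v := by linarith [hv.1]
    have hv2 : v ≤ y := by linarith [hv.2]
    simp only [hφ]
    rw [Set.indicator_of_mem (show v ∈ Set.Ioi (0:ℝ) by simp; linarith)]
    by_contra h6
    have h6 : c - η / 2 < B v := by linarith
    have h7 := hmono v y (by linarith) hv2
    have h8 : Real.exp (-(2*r)) ≤ Real.exp (-(y - v)) := Real.exp_le_exp.2 (by linarith)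
    have h9 : B v * (1 - 2 * r) ≤ B y := le_trans (mul_le_mul_of_nonneg_left (hexp.trans h8) (hB0 v)) h7
    have h10 := hB0 y
    have h11 : 2 * r < 1 := by nlinarith
    nlinarith
  · by_contra hcon
    have hcon : c + η ≤ B y := by linarith
    refine hY1 (y + r) (by linarith) fun v hv => ?_
    have hv1 : y ≤ v := by linarith [hv.1]
    have hv2 : v ≤ y + 2 * r := by linarith [hv.2]
    simp only [hφ]
    rw [Set.indicator_of_mem (show v ∈ Set.Ioi (0:ℝ) by simp; linarith)]
    have h7 := hmono y v (by linarith) hv1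
    have h8 : Real.exp (-(2*r)) ≤ Real.exp (-(v - y)) := Real.exp_le_exp.2 (by linarith)
    have h9 : B y * (1 - 2 * r) ≤ B v := le_trans (mul_le_mul_of_nonneg_left (hexp.trans h8) (hB0 y)) h7
    have h11 : 2 * r < 1 := by nlinarith
    nlinarith

open MeasureTheory ArithmeticFunction in
lemma wi_residue {q : ℕ} [NeZero q] {a : ZMod q} (ha : IsUnit a) :
    Tendsto (fun N : ℕ => (∑ k ∈ Finset.Icc 1 N, vonMangoldt.residueClass a k) / N) atTop
      (nhds ((q.totient : ℝ)⁻¹)) := by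
  set S : ℕ → ℝ := fun N => ∑ k ∈ Finset.Icc 1 N, vonMangoldt.residueClass a k with hS
  have hSmono : Monotone S := by
    intro m n hmn
    apply Finset.sum_le_sum_of_subset_of_nonneg
    · exact Finset.Icc_subset_Icc_right hmn
    · intro i _ _; exact vonMangoldt.residueClass_nonneg a i
  have hS0 : ∀ n, 0 ≤ S n := fun n => Finset.sum_nonneg fun i _ => vonMangoldt.residueClass_nonneg a i
  set K : ℝ := Real.log 4 + 4
  have hSle : ∀ n : ℕ, S n ≤ K * n := by
    intro n
    have h1 := Chebyshev.psi_le_const_mul_self (x := n) (by positivity)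
    refine le_trans ?_ h1
    rw [Chebyshev.psi_eq_sum_Icc, Nat.floor_natCast]
    refine (Finset.sum_le_sum fun i _ => vonMangoldt.residueClass_le a i).trans ?_
    apply Finset.sum_le_sum_of_subset_of_nonneg
    · exact Finset.Icc_subset_Icc_left (by norm_num)
    · intro i _ _; exact vonMangoldt_nonneg
  set B : ℝ → ℝ := fun v => S ⌊Real.exp v⌋₊ * Real.exp (-v) with hB
  set c : ℝ := ((q.totient : ℝ)⁻¹) with hc
  have hcpos : 0 < c := by
    rw [hc]; exact inv_pos.2 (by exact_mod_cast Nat.totient_pos.2 (NeZero.pos q))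
  have hBm : Measurable B := by
    apply Measurable.mul _ (by fun_prop)
    have : Monotone fun v : ℝ => S ⌊Real.exp v⌋₊ := fun u v huv => hSmono (Nat.floor_mono (Real.exp_le_exp.2 huv))
    exact this.measurable
  have hB0 : ∀ v, 0 ≤ B v := fun v => mul_nonneg (hS0 _) (Real.exp_pos _).le
  have hK : 0 ≤ K := by positivity
  have hBM : ∀ v, B v ≤ K := by
    intro v
    have h1 := hSle ⌊Real.exp v⌋₊
    have h2 := Nat.floor_le (Real.exp_pos v).le
    have h3 : S ⌊Real.exp v⌋₊ ≤ K * Real.exp v := h1.trans (mul_le_mul_of_nonneg_left h2 hK)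
    calc B v ≤ K * Real.exp v * Real.exp (-v) := mul_le_mul_of_nonneg_right h3 (Real.exp_pos _).le
      _ = K := by rw [mul_assoc, ← Real.exp_add]; simp
  have hmain : Tendsto B atTop (nhds c) := by
    refine taub_main B hBm hB0 K (fun v _ => hBM v) ?_ c hcpos
      (fun z => (vonMangoldt.LFunctionResidueClassAux a (1 + z) - c) / (1 + z)) ?_ ?_
    · intro v v' _ hv
      simp only [hB]
      rw [mul_assoc, ← Real.exp_add, show -v + -(v' - v) = -v' by ring]
      exact mul_le_mul_of_nonneg_right (hSmono (Nat.floor_mono (Real.exp_le_exp.2 hv))) (Real.exp_pos _).le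
    · apply ContinuousOn.div
      · apply ContinuousOn.sub _ (by fun_prop)
        apply (vonMangoldt.continuousOn_LFunctionResidueClassAux a).comp (by fun_prop)
        intro z hz
        simp only [Set.mem_ofPred_eq] at hz ⊢
        simpa using hz
      · fun_prop
      · intro z hz h0
        simp only [Set.mem_ofPred_eq] at hz
        have := congrArg Complex.re h0
        simp at this; linarith
    · intro z hz
      have hz0 : z ≠ 0 := by rintro rfl; simp at hz
      have hs : 1 < (1 + z).re := by simpa using hz
      have h1z : (1 + z) ≠ 0 := by intro h0; rw [h0] at hs; simp at hs; linarith
      have hL := LSeries_eq_mul_integral_of_nonneg (fun n => vonMangoldt.residueClass a n) (r := 1) (by norm_num) hs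
        (by
          rw [Asymptotics.isBigO_iff]
          refine ⟨K, Eventually.of_forall fun n => ?_⟩
          have := hSle n
          rw [Real.rpow_one, Real.norm_natCast, Real.norm_of_nonneg (hS0 n)]
          exact this) (fun n => vonMangoldt.residueClass_nonneg a n)
      have hG := vonMangoldt.eqOn_LFunctionResidueClassAux ha (x := 1 + z) hs
      simp only at hG
      have himg : Real.exp '' (Set.Ioi 0) = Set.Ioi 1 := by
        ext x; constructor
        · rintro ⟨y, hy, rfl⟩; exact Real.one_lt_exp_iff.2 hy
        · intro hx
          exact ⟨Real.log x, Real.log_pos hx, Real.exp_log (lt_trans one_pos hx)⟩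
      have hint : (∫ t in Set.Ioi (1 : ℝ), (∑ k ∈ Finset.Icc 1 ⌊t⌋₊, (vonMangoldt.residueClass a k : ℂ)) * (t:ℂ) ^ (-((1+z) + 1)))
          = ∫ v in Set.Ioi (0:ℝ), (B v : ℂ) * Complex.exp (-z * v) := by
        rw [← himg, integral_image_eq_integral_abs_deriv_smul (f' := Real.exp) measurableSet_Ioi
          (fun x _ => (Real.hasDerivAt_exp x).hasDerivWithinAt) Real.exp_injective.injOn]
        congr 1
        ext v
        rw [abs_of_pos (Real.exp_pos v), Complex.real_smul, Complex.cpow_def_of_ne_zero (by exact_mod_cast (Real.exp_pos v).ne'),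
          ← Complex.ofReal_log (Real.exp_pos v).le, Real.log_exp]
        simp only [hB, hS]
        push_cast
        rw [mul_comm, mul_assoc, mul_assoc, ← Complex.exp_add, ← Complex.exp_add]
        congr 2
        ring
      have hexpI : IntegrableOn (fun v : ℝ => Complex.exp (-z * v)) (Set.Ioi 0) :=
        integrableOn_exp_mul_complex_Ioi (by simpa using hz) 0
      have hBI : IntegrableOn (fun v : ℝ => (B v : ℂ) * Complex.exp (-z * v)) (Set.Ioi 0) := by
        refine Integrable.bdd_mul (c := K) hexpI ?_ ?_
        · exact (Complex.measurable_ofReal.comp hBm).aestronglyMeasurable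
        · refine Eventually.of_forall fun v => ?_
          rw [Complex.norm_real, Real.norm_of_nonneg (hB0 v)]; exact hBM v
      have hsub : ∫ v in Set.Ioi (0:ℝ), ((B v - c : ℝ) : ℂ) * Complex.exp (-z * v) =
          (∫ v in Set.Ioi (0:ℝ), (B v : ℂ) * Complex.exp (-z * v)) - c * (1 / z) := by
        have : ∫ v in Set.Ioi (0:ℝ), Complex.exp (-z * v) = 1 / z := by
          rw [integral_exp_mul_complex_Ioi (by simpa using hz)]
          simp
        rw [← this, ← integral_const_mul, ← integral_sub hBI (hexpI.const_mul _)]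
        congr 1; ext v; push_cast; ring
      rw [hint] at hL
      rw [hsub, hG, hL]
      have : (q.totient : ℂ)⁻¹ = (c:ℂ) := by rw [hc]; push_cast; rfl
      rw [this]
      have : 1 + z - 1 = z := by ring
      rw [this]
      field_simp
      ring
  have hlog : Tendsto (fun N : ℕ => Real.log N) atTop atTop := Real.tendsto_log_atTop.comp tendsto_natCast_atTop_atTop
  refine (hmain.comp hlog).congr' ?_
  filter_upwards [eventually_ge_atTop 1] with N hN
  have hNpos : (0:ℝ) < N := by exact_mod_cast hN
  simp only [Function.comp, hB]
  rw [Real.exp_neg, Real.exp_log hNpos, Nat.floor_natCast]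
  rfl

lemma cheb_E1 : Tendsto (fun N : ℕ => ((((Finset.range (N+1)).filter Nat.Prime).card : ℝ) * Real.log N
    - ∑ p ∈ (Finset.range (N+1)).filter Nat.Prime, Real.log p) / N) atTop (nhds 0) := by
  have h := Chebyshev.primeCounting_sub_theta_div_log_isBigO
  obtain ⟨C, hC⟩ := h.bound
  have hN : Tendsto (fun N : ℕ => (N:ℝ)) atTop atTop := tendsto_natCast_atTop_atTop
  have hb : Tendsto (fun N : ℕ => C * (Real.log N)⁻¹) atTop (nhds 0) := by
    have := (Real.tendsto_log_atTop.comp hN).inv_tendsto_atTop.const_mul C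
    simpa using this
  refine squeeze_zero_norm' ?_ hb
  filter_upwards [hN.eventually hC, eventually_ge_atTop 2] with N h1 h2
  have hN0 : (0:ℝ) < N := by positivity
  have hlog : 0 < Real.log N := Real.log_pos (by exact_mod_cast h2)
  rw [Nat.floor_natCast] at h1
  have e1 : (Nat.primeCounting N : ℝ) = (((Finset.range (N+1)).filter Nat.Prime).card : ℝ) := by
    rw [Nat.primeCounting, Nat.primeCounting', Nat.count_eq_card_filter_range]
  have e2 : Chebyshev.theta N = ∑ p ∈ (Finset.range (N+1)).filter Nat.Prime, Real.log p := by
    rw [Chebyshev.theta_eq_sum_Icc, Nat.floor_natCast]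
    apply Finset.sum_congr _ (fun _ _ => rfl)
    ext p; simp
  rw [e1, e2] at h1
  set X := (((Finset.range (N+1)).filter Nat.Prime).card : ℝ)
  set Y := ∑ p ∈ (Finset.range (N+1)).filter Nat.Prime, Real.log p
  have e3 : (X * Real.log N - Y) / N = (X - Y / Real.log N) * (Real.log N / N) := by field_simp
  rw [e3, norm_mul, Real.norm_of_nonneg (by positivity : 0 ≤ Real.log N / N)]
  rw [Real.norm_of_nonneg (by positivity : 0 ≤ (N:ℝ) / Real.log N ^ 2)] at h1
  calc _ ≤ C * (N / Real.log N ^ 2) * (Real.log N / N) := mul_le_mul_of_nonneg_right h1 (by positivity)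
    _ = _ := by field_simp

lemma cheb_E2 : Tendsto (fun N : ℕ => (∑ k ∈ (Finset.Icc 1 N).filter (fun k => ¬ k.Prime), ArithmeticFunction.vonMangoldt k) / (N:ℝ))
    atTop (nhds 0) := by
  have hN : Tendsto (fun N : ℕ => (N:ℝ)) atTop atTop := tendsto_natCast_atTop_atTop
  have h0 : Tendsto (fun x : ℝ => 2 * (Real.log x / x ^ (1/2:ℝ))) atTop (nhds 0) := by
    have := (isLittleO_log_rpow_atTop (show (0:ℝ) < 1/2 by norm_num)).tendsto_div_nhds_zero
    simpa using this.const_mul 2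
  refine squeeze_zero' ?_ ?_ (h0.comp hN)
  · refine Eventually.of_forall fun N => div_nonneg (Finset.sum_nonneg fun _ _ => ArithmeticFunction.vonMangoldt_nonneg) (by positivity)
  · filter_upwards [eventually_ge_atTop 1] with N h2
    have hN1 : (1:ℝ) ≤ N := by exact_mod_cast h2
    have h3 := Chebyshev.psi_sub_theta_le hN1
    rw [Chebyshev.psi_sub_theta_eq_sum_not_prime, Nat.floor_natCast] at h3
    have e : Finset.Icc 1 N = Finset.Ioc 0 N := by ext; simp [Nat.succ_le_iff]
    rw [e]
    simp only [Function.comp]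
    rw [div_le_iff₀ (by linarith)]
    refine h3.trans (le_of_eq ?_)
    rw [← Real.sqrt_eq_rpow]
    have : Real.sqrt N * Real.sqrt N = N := Real.mul_self_sqrt (by linarith)
    have h4 : 0 < Real.sqrt N := Real.sqrt_pos.2 (by linarith)
    field_simp
    linear_combination (Real.log N) * this

lemma cnt_of_vM (A : ℕ → Prop) (c : ℝ)
    (h : Tendsto (fun N : ℕ => (∑ k ∈ Finset.Icc 1 N, if A k then ArithmeticFunction.vonMangoldt k else 0) / (N:ℝ)) atTop (nhds c)) :
    Tendsto (fun N : ℕ => (((Finset.range (N+1)).filter (fun p => p.Prime ∧ A p)).card : ℝ) * Real.log N / N) atTop (nhds c) := by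
  have key : ∀ N : ℕ, 1 ≤ N →
      (((Finset.range (N+1)).filter (fun p => p.Prime ∧ A p)).card : ℝ) * Real.log N =
      (∑ k ∈ Finset.Icc 1 N, if A k then ArithmeticFunction.vonMangoldt k else 0)
      - (∑ k ∈ (Finset.Icc 1 N).filter (fun k => ¬ k.Prime), if A k then ArithmeticFunction.vonMangoldt k else 0)
      + ∑ p ∈ (Finset.range (N+1)).filter Nat.Prime, if A p then (Real.log N - Real.log p) else 0 := by
    intro N hN
    rw [← Finset.sum_filter_add_sum_filter_not (Finset.Icc 1 N) Nat.Prime, add_sub_cancel_right]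
    have e : (Finset.Icc 1 N).filter Nat.Prime = (Finset.range (N+1)).filter Nat.Prime := by
      ext p; simp only [Finset.mem_filter, Finset.mem_Icc, Finset.mem_range]
      constructor
      · rintro ⟨⟨_, h⟩, hp⟩; exact ⟨by omega, hp⟩
      · rintro ⟨h, hp⟩; exact ⟨⟨hp.one_lt.le, by omega⟩, hp⟩
    rw [e, ← Finset.sum_add_distrib, Finset.card_eq_sum_ones, ← Finset.filter_filter, Finset.sum_filter (p := A)]
    push_cast
    rw [Finset.sum_mul]
    apply Finset.sum_congr rfl
    intro p hp
    have hp := (Finset.mem_filter.1 hp).2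
    split_ifs
    · rw [ArithmeticFunction.vonMangoldt_apply_prime hp]; ring
    · simp
  have l2 : Tendsto (fun N : ℕ => (∑ k ∈ (Finset.Icc 1 N).filter (fun k => ¬ k.Prime), if A k then ArithmeticFunction.vonMangoldt k else 0) / (N:ℝ)) atTop (nhds 0) := by
    refine squeeze_zero (fun N => ?_) (fun N => ?_) cheb_E2
    · refine div_nonneg (Finset.sum_nonneg fun k _ => ?_) (by positivity)
      split_ifs
      · exact ArithmeticFunction.vonMangoldt_nonneg
      · rfl
    · refine div_le_div_of_nonneg_right (Finset.sum_le_sum fun k _ => ?_) (by positivity)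
      split_ifs
      · rfl
      · exact ArithmeticFunction.vonMangoldt_nonneg
  have hle : ∀ N p : ℕ, p ∈ (Finset.range (N+1)).filter Nat.Prime → 0 ≤ Real.log N - Real.log p := by
    intro N p hp
    rw [Finset.mem_filter, Finset.mem_range] at hp
    have : (p:ℝ) ≤ N := by exact_mod_cast (by omega)
    have := Real.log_le_log (by exact_mod_cast hp.2.pos) this
    linarith
  have l3 : Tendsto (fun N : ℕ => (∑ p ∈ (Finset.range (N+1)).filter Nat.Prime, if A p then (Real.log N - Real.log p) else 0) / (N:ℝ)) atTop (nhds 0) := by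
    refine squeeze_zero (fun N => ?_) (fun N => ?_) cheb_E1
    · refine div_nonneg (Finset.sum_nonneg fun p hp => ?_) (by positivity)
      split_ifs
      · exact hle N p hp
      · rfl
    · refine div_le_div_of_nonneg_right ?_ (by positivity)
      have : (((Finset.range (N+1)).filter Nat.Prime).card : ℝ) * Real.log N
    - ∑ p ∈ (Finset.range (N+1)).filter Nat.Prime, Real.log p = ∑ p ∈ (Finset.range (N+1)).filter Nat.Prime, (Real.log N - Real.log p) := by
        rw [Finset.sum_sub_distrib]; simp
      rw [this]
      refine Finset.sum_le_sum fun p hp => ?_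
      split_ifs
      · rfl
      · exact hle N p hp
  have := (h.sub l2).add l3
  simp only [sub_zero, add_zero] at this
  refine this.congr' ?_
  filter_upwards [eventually_ge_atTop 1] with N hN
  rw [key N hN]; ring

lemma density_classes (q : ℕ) [NeZero q] (Hs : Finset (ZMod q)) (hH : ∀ a ∈ Hs, IsUnit a) :
    Tendsto (fun x : ℕ =>
          (((Finset.range x).filter (fun p : ℕ => p.Prime ∧ (p : ZMod q) ∈ Hs)).card : ℝ) /
            (((Finset.range x).filter Nat.Prime).card : ℝ)) atTop (nhds (Hs.card / (q.totient : ℝ))) := by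
  have h1 : Tendsto (fun N : ℕ => (((Finset.range (N+1)).filter (fun p : ℕ => p.Prime ∧ (p : ZMod q) ∈ Hs)).card : ℝ) * Real.log N / N) atTop (nhds (Hs.card / (q.totient : ℝ))) := by
    have key := cnt_of_vM (fun p : ℕ => (p : ZMod q) ∈ Hs) (Hs.card / (q.totient : ℝ)) ?_
    · convert key
    have := tendsto_finsetSum Hs (fun a ha => wi_residue (hH a ha))
    rw [Finset.sum_const, nsmul_eq_mul, ← div_eq_mul_inv] at this
    refine this.congr fun N => ?_
    rw [← Finset.sum_div, Finset.sum_comm]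
    congr 1
    apply Finset.sum_congr rfl
    intro k _
    simp only [ArithmeticFunction.vonMangoldt.residueClass, Set.indicator_apply, Set.mem_ofPred_eq]
    rw [Finset.sum_ite_eq]
    congr
  have h2 : Tendsto (fun N : ℕ => (((Finset.range (N+1)).filter (fun p => p.Prime ∧ True)).card : ℝ) * Real.log N / N) atTop (nhds 1) := by
    have key := cnt_of_vM (fun _ => True) 1 ?_
    · convert key
    have := wi_residue (q := 1) (a := 0) (isUnit_of_subsingleton _)
    simp only [Nat.totient_one, Nat.cast_one, inv_one] at this
    refine this.congr fun N => ?_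
    congr 1
    apply Finset.sum_congr rfl
    intro k _
    simp only [ArithmeticFunction.vonMangoldt.residueClass, Set.indicator_apply, Set.mem_ofPred_eq]
    rw [if_pos (Subsingleton.elim _ _)]; simp
  rw [← tendsto_add_atTop_iff_nat 1]
  have h3 := h1.div h2 one_ne_zero
  rw [div_one] at h3
  refine h3.congr' ?_
  filter_upwards [eventually_ge_atTop 2] with N hN
  have hlog : 0 < Real.log N := Real.log_pos (by exact_mod_cast hN)
  have hN0 : (0:ℝ) < N := by positivity
  simp only [and_true, Pi.div_apply]
  rw [div_div_div_cancel_right₀ hN0.ne', mul_div_mul_right _ _ hlog.ne']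

lemma half_units (q : ℕ) [NeZero q] (κ : ZMod q → ℤ) (h1 : ∀ a, IsUnit a → κ a = 1 ∨ κ a = -1)
    (h2 : ∀ a, IsUnit a → κ (-a) = - κ a) :
    2 * (Finset.univ.filter (fun a : ZMod q => IsUnit a ∧ κ a = 1)).card = q.totient := by
  have e : (Finset.univ.filter (fun a : ZMod q => IsUnit a)).card = q.totient := by
    rw [← ZMod.card_units_eq_totient q, ← Finset.card_univ]
    symm
    apply Finset.card_bij (fun (u : (ZMod q)ˣ) _ => (u : ZMod q))
    · intro u _; simp
    · intro u _ v _ h; exact Units.ext h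
    · intro b hb
      obtain ⟨u, rfl⟩ := (Finset.mem_filter.1 hb).2
      exact ⟨u, by simp, rfl⟩
  rw [← e, ← Finset.card_filter_add_card_filter_not (s := Finset.univ.filter (fun a : ZMod q => IsUnit a)) (fun a => κ a = 1),
    Finset.filter_filter, two_mul]
  congr 1
  apply Finset.card_bij (fun a _ => -a)
  · intro a ha
    obtain ⟨h3, h4⟩ := (Finset.mem_filter.1 ha).2
    simp only [Finset.mem_filter, Finset.mem_univ, true_and]
    refine ⟨h3.neg, ?_⟩
    rw [h2 a h3, h4]; norm_num
  · intro a _ b _ h; exact neg_injective h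
  · intro b hb
    simp only [Finset.mem_filter, Finset.mem_univ, true_and] at hb
    refine ⟨-b, ?_, neg_neg b⟩
    simp only [Finset.mem_filter, Finset.mem_univ, true_and]
    refine ⟨hb.1.neg, ?_⟩
    rw [h2 b hb.1]
    rcases h1 b hb.1 with h | h
    · exact absurd h hb.2
    · rw [h]; norm_num

lemma unit_val_coprime {q : ℕ} (a : ZMod q) (ha : IsUnit a) : Nat.Coprime a.val q := by
  obtain ⟨u, rfl⟩ := ha
  exact ZMod.val_coe_unit_coprime u

lemma char_exists (D : ℤ) (hD : D < 0) (hD4 : D % 4 = 0 ∨ D % 4 = 1) [NeZero D.natAbs] :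
    ∃ Hs : Finset (ZMod D.natAbs), (∀ a ∈ Hs, IsUnit a) ∧ 2 * Hs.card = D.natAbs.totient ∧
      ∀ p : ℕ, p.Prime → ¬ ((p : ℤ) ∣ D) → (p ≠ 2 → IsSquare (D : ZMod p)) → (p = 2 → D % 8 = 1) →
        (p : ZMod D.natAbs) ∈ Hs := by
  have hcop : ∀ p : ℕ, p.Prime → ¬ ((p : ℤ) ∣ D) → Nat.Coprime p D.natAbs := by
    intro p hp hpD
    rw [hp.coprime_iff_not_dvd]
    intro h; exact hpD (Int.natCast_dvd.2 h)
  have hunit : ∀ p : ℕ, p.Prime → ¬ ((p : ℤ) ∣ D) → IsUnit (p : ZMod D.natAbs) := by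
    intro p hp hpD
    exact (ZMod.isUnit_iff_coprime p _).2 (hcop p hp hpD)
  have hleg : ∀ p : ℕ, p.Prime → ¬ ((p : ℤ) ∣ D) → IsSquare (D : ZMod p) → jacobiSym D p = 1 := by
    intro p hp hpD hs
    have := Fact.mk hp
    rw [← jacobiSym.legendreSym.to_jacobiSym, legendreSym.eq_one_iff p (by rwa [Ne, ZMod.intCast_zmod_eq_zero_iff_dvd])]
    exact hs
  set q := D.natAbs with hq
  have hqD : (q : ℤ) = -D := by omega
  rcases hD4 with h4 | h4
  · -- D = 4 d
    obtain ⟨d, hd⟩ : ∃ d, D = 4 * d := ⟨D / 4, by omega⟩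
    have hq4 : q = 4 * d.natAbs := by omega
    have hdpos : 0 < d.natAbs := by omega
    set e := d.natAbs with he
    have hde : d = -(e:ℤ) := by omega
    have hodd : ∀ a : ZMod q, IsUnit a → Odd a.val := by
      intro a ha
      have := unit_val_coprime a ha
      have h2 : Nat.Coprime a.val 2 := Nat.Coprime.coprime_dvd_right (by omega) this
      exact Nat.coprime_two_right.1 h2
    have hcopd : ∀ b : ℕ, Nat.Coprime b q → d.gcd b = 1 := by
      intro b hb
      rw [hq4] at hb
      have : Nat.Coprime b e := Nat.Coprime.coprime_dvd_right ⟨4, by ring⟩ hb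
      rw [Int.gcd, Int.natAbs_natCast]; exact this.symm
    have hneg1 : jacobiSym d (q - 1) = -1 := by
      have ho : Odd (q - 1) := by rw [Nat.odd_iff]; omega
      rw [hde, jacobiSym.neg _ ho, ZMod.χ₄_nat_three_mod_four (by omega)]
      have h1 : jacobiSym (4 * (e:ℤ)) (q - 1) = 1 := by
        have : (4 * (e:ℤ)) % ((q - 1 : ℕ) : ℤ) = 1 % ((q - 1 : ℕ) : ℤ) := by
          rw [show (4 * (e:ℤ)) = 1 + ((q-1 : ℕ) : ℤ) by omega]
          simp
        rw [jacobiSym.mod_left' this, jacobiSym.one_left]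
      rw [jacobiSym.mul_left, jacobiSym.at_four ho, one_mul] at h1
      rw [h1]; norm_num
    refine ⟨Finset.univ.filter (fun a : ZMod q => IsUnit a ∧ jacobiSym d a.val = 1), ?_, ?_, ?_⟩
    · intro a ha; exact (Finset.mem_filter.1 ha).2.1
    · apply half_units
      · intro a ha
        exact jacobiSym.eq_one_or_neg_one (hcopd _ (unit_val_coprime a ha))
      · intro a ha
        have h5 : jacobiSym d (a.val * (q-1)) = jacobiSym d ((a.val * (q-1)) % (4 * d.natAbs)) := by
          apply jacobiSym.mod_right
          apply (hodd a ha).mul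
          rw [Nat.odd_iff]; omega
        have hv0 : a.val ≠ 0 := by
          intro h0
          have := hodd a ha
          rw [h0] at this; simp at this
        rw [← he, ← hq4] at h5
        have h6 : (a.val * (q-1)) % q = (-a).val := by
          have : ((a.val * (q - 1) : ℕ) : ZMod q) = -a := by
            rw [Nat.cast_mul, Nat.cast_sub (by omega)]
            simp
          rw [← this, ZMod.val_natCast]
        rw [h6, jacobiSym.mul_right' _ hv0 (by omega), hneg1] at h5
        rw [← h5]; ring
    · intro p hp hpD hsq h2
      have hp2 : p ≠ 2 := by
        rintro rfl; exact hpD (by norm_num; omega)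
      simp only [Finset.mem_filter, Finset.mem_univ, true_and]
      refine ⟨hunit p hp hpD, ?_⟩
      have h7 := hleg p hp hpD (hsq hp2)
      have hpo := hp.odd_of_ne_two hp2
      rw [hd, jacobiSym.mul_left, jacobiSym.at_four hpo, one_mul] at h7
      rw [ZMod.val_natCast, hq4, he, ← jacobiSym.mod_right _ hpo, h7]
  · have hq4 : q % 4 = 3 := by omega
    have hqo : Odd q := by rw [Nat.odd_iff]; omega
    refine ⟨Finset.univ.filter (fun a : ZMod q => IsUnit a ∧ jacobiSym a.val q = 1), ?_, ?_, ?_⟩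
    · intro a ha; exact (Finset.mem_filter.1 ha).2.1
    · apply half_units
      · intro a ha
        apply jacobiSym.eq_one_or_neg_one
        exact unit_val_coprime a ha
      · intro a ha
        have : ((-a).val : ℤ) % q = (-(a.val : ℤ)) % q := by
          rw [← Int.ModEq, ← ZMod.intCast_eq_intCast_iff]
          simp
        rw [jacobiSym.mod_left' this, jacobiSym.neg _ hqo, ZMod.χ₄_nat_three_mod_four hq4]
        ring
    · intro p hp hpD hsq h2
      simp only [Finset.mem_filter, Finset.mem_univ, true_and]
      refine ⟨hunit p hp hpD, ?_⟩
      have hm : ((p : ZMod q).val : ℤ) % q = (p:ℤ) % q := by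
        rw [ZMod.val_natCast]; push_cast; simp
      rw [jacobiSym.mod_left' hm]
      by_cases hp2 : p = 2
      · subst hp2
        have h8 : D % 8 = 1 := h2 rfl
        have := jacobiSym.at_two hqo
        push_cast
        rw [this, ZMod.χ₈_nat_eq_if_mod_eight]
        rw [if_neg (by omega), if_pos (by omega)]
      · have h7 := hleg p hp hpD (hsq hp2)
        have hpo := hp.odd_of_ne_two hp2
        rw [show D = -(q:ℤ) by omega, jacobiSym.neg _ hpo] at h7
        have h9 : p % 4 = 1 ∨ p % 4 = 3 := by have := Nat.odd_iff.1 hpo; omega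
        rcases h9 with h9 | h9
        · rw [ZMod.χ₄_nat_one_mod_four h9, one_mul] at h7
          rw [jacobiSym.quadratic_reciprocity_one_mod_four h9 hqo, h7]
        · rw [ZMod.χ₄_nat_three_mod_four h9] at h7
          rw [jacobiSym.quadratic_reciprocity_three_mod_four h9 hq4]; linarith

lemma hensel_x (a b c D : ℤ) (hD : b ^ 2 - 4 * a * c = D) (p : ℤ) (hp : Prime p) (d l : ℕ)
    (hd : ¬ p ^ (d + 1) ∣ D) (x y x' y' : ℤ) (hx : ¬ p ∣ x) (hv : ¬ (p ∣ x' ∧ p ∣ y'))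
    (h1 : p ^ l ∣ a * x ^ 2 + b * x * y + c * y ^ 2)
    (h2 : p ^ l ∣ a * x' ^ 2 + b * x' * y' + c * y' ^ 2)
    (h3 : p ^ (d + 1) ∣ x * y' - x' * y) :
    p ^ l ∣ p ^ d * (x * y' - x' * y) := by
  by_cases hl : l ≤ d
  · exact Dvd.dvd.mul_right (pow_dvd_pow p hl) _
  have hp3 : p ∣ x * y' - x' * y := (dvd_pow_self p (Nat.succ_ne_zero d)).trans h3
  have hx' : ¬ p ∣ x' := by
    intro h
    have h5 : p ∣ x * y' := by
      have := dvd_add hp3 (h.mul_right y)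
      simpa using this
    rcases hp.dvd_or_dvd h5 with h6 | h6
    · exact hx h6
    · exact hv ⟨h, h6⟩
  set W := b * x * x' + c * (x' * y + x * y') with hW
  have hcan : ∀ z t : ℤ, ¬ p ∣ z → ∀ m : ℕ, p ^ m ∣ t * z → p ^ m ∣ t := by
    intro z t hz m hm
    exact (IsCoprime.pow_left ((Prime.coprime_iff_not_dvd hp).2 hz)).dvd_of_dvd_mul_right hm
  have hWn : ¬ p ^ (d + 1) ∣ W := by
    intro h
    have e1 : p ^ (d+1) ∣ (b * x + 2 * c * y) * x' := by
      have : (b * x + 2 * c * y) * x' = W - c * (x * y' - x' * y) := by rw [hW]; ring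
      rw [this]; exact dvd_sub h (h3.mul_left c)
    have e2 := hcan _ _ hx' _ e1
    have e3 : p ^ (d+1) ∣ D * x ^ 2 := by
      have : D * x ^ 2 = (b * x + 2 * c * y) * (b * x + 2 * c * y) - 4 * c * (a * x ^ 2 + b * x * y + c * y ^ 2) := by
        rw [← hD]; ring
      rw [this]
      exact dvd_sub (e2.mul_right _) (((pow_dvd_pow p (by omega)).trans h1).mul_left _)
    exact hd (hcan _ _ (fun h => hx (hp.dvd_of_dvd_pow h)) _ e3)
  have hdW : p ^ l ∣ (x * y' - x' * y) * W := by
    have : (x * y' - x' * y) * W = x ^ 2 * (a * x' ^ 2 + b * x' * y' + c * y' ^ 2) - x' ^ 2 * (a * x ^ 2 + b * x * y + c * y ^ 2) := by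
      rw [hW]; ring
    rw [this]; exact dvd_sub (h2.mul_left _) (h1.mul_left _)
  have hW0 : W ≠ 0 := by intro h; rw [h] at hWn; exact hWn (dvd_zero _)
  have hfin : FiniteMultiplicity p W := Int.finiteMultiplicity_iff.2 ⟨by
    intro h
    exact hp.not_isUnit (Int.isUnit_iff_natAbs_eq.2 h), hW0⟩
  obtain ⟨W', hW', hnd⟩ := hfin.exists_eq_pow_mul_and_not_dvd
  set e := multiplicity p W
  have hed : e ≤ d := by
    by_contra h
    apply hWn
    rw [hW']
    exact (pow_dvd_pow p (by omega)).mul_right _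
  rw [hW', ← mul_assoc] at hdW
  have h6 := hcan _ _ hnd _ hdW
  rw [mul_comm] at h6
  exact h6.trans (mul_dvd_mul_right (pow_dvd_pow p hed) _)

lemma hensel (a b c D : ℤ) (hD : b ^ 2 - 4 * a * c = D) (p : ℤ) (hp : Prime p) (d l : ℕ)
    (hd : ¬ p ^ (d + 1) ∣ D) (x y x' y' : ℤ) (hu : ¬ (p ∣ x ∧ p ∣ y)) (hv : ¬ (p ∣ x' ∧ p ∣ y'))
    (h1 : p ^ l ∣ a * x ^ 2 + b * x * y + c * y ^ 2)
    (h2 : p ^ l ∣ a * x' ^ 2 + b * x' * y' + c * y' ^ 2)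
    (h3 : p ^ (d + 1) ∣ x * y' - x' * y) :
    p ^ l ∣ p ^ d * (x * y' - x' * y) := by
  by_cases hx : p ∣ x
  · have hy : ¬ p ∣ y := fun h => hu ⟨hx, h⟩
    have := hensel_x c b a D (by rw [← hD]; ring) p hp d l hd y x y' x' hy (fun h => hv ⟨h.2, h.1⟩)
      (by convert h1 using 1; ring) (by convert h2 using 1; ring)
      (by rw [show y * x' - y' * x = -(x * y' - x' * y) by ring, dvd_neg]; exact h3)
    rw [show p ^ d * (y * x' - y' * x) = -(p ^ d * (x * y' - x' * y)) by ring, dvd_neg] at this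
    exact this
  · exact hensel_x a b c D hD p hp d l hd x y x' y' hx hv h1 h2 h3

lemma two_classes (a b c D : ℤ) (hD : b ^ 2 - 4 * a * c = D) (p : ℤ) (hp : Prime p) (hd : ¬ p ∣ D) :
    ∃ ε : ℤ → ℤ → ℕ, (∀ x y, ε x y ≤ 1) ∧ ∀ x y x' y' : ℤ, ¬ (p ∣ x ∧ p ∣ y) → ¬ (p ∣ x' ∧ p ∣ y') →
      p ∣ a * x ^ 2 + b * x * y + c * y ^ 2 → p ∣ a * x' ^ 2 + b * x' * y' + c * y' ^ 2 →
      ε x y = ε x' y' → p ∣ x * y' - x' * y := by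
  by_cases hex : ∃ x y, ¬ (p ∣ x ∧ p ∣ y) ∧ p ∣ a * x ^ 2 + b * x * y + c * y ^ 2
  swap
  · exact ⟨fun _ _ => 0, by simp, fun x y x' y' h _ h1 => (hex ⟨x, y, h, h1⟩).elim⟩
  obtain ⟨s, t, hst, hst0⟩ := hex
  refine ⟨fun x y => if p ∣ s * y - x * t then 1 else 0, fun x y => by simp only; split_ifs <;> simp, ?_⟩
  intro x y x' y' hu hv h1 h2 he
  simp only at he
  by_cases ha : p ∣ s * y - x * t
  · by_cases hb : p ∣ s * y' - x' * t
    · by_cases hs : p ∣ s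
      · have ht : ¬ p ∣ t := fun h => hst ⟨hs, h⟩
        have : p ∣ t * (x * y' - x' * y) := by
          have e : t * (x * y' - x' * y) = y * (s * y' - x' * t) - y' * (s * y - x * t) := by ring
          rw [e]; exact dvd_sub (hb.mul_left _) (ha.mul_left _)
        exact (hp.dvd_or_dvd this).resolve_left ht
      · have : p ∣ s * (x * y' - x' * y) := by
          have e : s * (x * y' - x' * y) = x * (s * y' - x' * t) - x' * (s * y - x * t) := by ring
          rw [e]; exact dvd_sub (hb.mul_left _) (ha.mul_left _)
        exact (hp.dvd_or_dvd this).resolve_left hs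
    · rw [if_pos ha, if_neg hb] at he; simp at he
  · by_cases hb : p ∣ s * y' - x' * t
    · rw [if_neg ha, if_pos hb] at he; simp at he
    · by_contra hcon
      -- B(u,v)
      have h3 : p ∣ (s * y - x * t) * ((s * y' - x' * t) * (2 * a * x * x' + b * (x * y' + x' * y) + 2 * c * y * y')) := by
        have e : (s * y - x * t) * ((s * y' - x' * t) * (2 * a * x * x' + b * (x * y' + x' * y) + 2 * c * y * y')) =
          (s * y' - x' * t) ^ 2 * (a * x ^ 2 + b * x * y + c * y ^ 2) + (s * y - x * t) ^ 2 * (a * x' ^ 2 + b * x' * y' + c * y' ^ 2)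
          - (x * y' - x' * y) ^ 2 * (a * s ^ 2 + b * s * t + c * t ^ 2) := by ring
        rw [e]; exact dvd_sub (dvd_add (h1.mul_left _) (h2.mul_left _)) (hst0.mul_left _)
      have h4 := (hp.dvd_or_dvd ((hp.dvd_or_dvd h3).resolve_left ha)).resolve_left hb
      have h5 : p ∣ D * (x * y' - x' * y) ^ 2 := by
        have e : D * (x * y' - x' * y) ^ 2 = (2 * a * x * x' + b * (x * y' + x' * y) + 2 * c * y * y') * (2 * a * x * x' + b * (x * y' + x' * y) + 2 * c * y * y')
          - 4 * (a * x' ^ 2 + b * x' * y' + c * y' ^ 2) * (a * x ^ 2 + b * x * y + c * y ^ 2) := by rw [← hD]; ring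
        rw [e]; exact dvd_sub (h4.mul_left _) (h1.mul_left _)
      exact hcon (hp.dvd_of_dvd_pow ((hp.dvd_or_dvd h5).resolve_left hd))

lemma prim_decomp (p : ℤ) (hp : Prime p) (x y : ℤ) (h : ¬ (x = 0 ∧ y = 0)) :
    ∃ (j : ℕ) (x' y' : ℤ), x = p ^ j * x' ∧ y = p ^ j * y' ∧ ¬ (p ∣ x' ∧ p ∣ y') := by
  have hg : (Int.gcd x y : ℤ) ≠ 0 := by
    intro h0
    have : Int.gcd x y = 0 := by exact_mod_cast h0
    rw [Int.gcd_eq_zero_iff] at this; exact h this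
  have hfin : FiniteMultiplicity p (Int.gcd x y : ℤ) := Int.finiteMultiplicity_iff.2 ⟨by
    intro h
    exact hp.not_isUnit (Int.isUnit_iff_natAbs_eq.2 h), hg⟩
  set j := multiplicity p (Int.gcd x y : ℤ)
  have hj : p ^ j ∣ (Int.gcd x y : ℤ) := pow_multiplicity_dvd _ _
  obtain ⟨x', hx'⟩ := hj.trans (Int.gcd_dvd_left x y)
  obtain ⟨y', hy'⟩ := hj.trans (Int.gcd_dvd_right x y)
  refine ⟨j, x', y', hx', hy', ?_⟩
  rintro ⟨h1, h2⟩
  have h3 : p ^ (j + 1) ∣ x := by rw [hx', pow_succ]; exact mul_dvd_mul_left _ h1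
  have h4 : p ^ (j + 1) ∣ y := by rw [hy', pow_succ]; exact mul_dvd_mul_left _ h2
  exact hfin.not_pow_dvd_of_multiplicity_lt (Nat.lt_succ_self j) (Int.dvd_coe_gcd h3 h4)

lemma inert_lemma (a b c D : ℤ) (hD : b ^ 2 - 4 * a * c = D) (p : ℕ) (hp : p.Prime) (hpD : ¬ (p : ℤ) ∣ D)
    (h : ¬ ((p ≠ 2 → IsSquare (D : ZMod p)) ∧ (p = 2 → D % 8 = 1))) (x y : ℤ)
    (hF : (p : ℤ) ∣ a * x ^ 2 + b * x * y + c * y ^ 2) : (p : ℤ) ∣ x ∧ (p : ℤ) ∣ y := by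
  haveI := Fact.mk hp
  by_cases h2 : p = 2
  · subst h2
    have h8 : D % 8 ≠ 1 := fun h8 => h ⟨fun h => (h rfl).elim, fun _ => h8⟩
    push_cast at hpD hF ⊢
    have hb : b % 2 = 1 := by
      rcases Int.emod_two_eq_zero_or_one b with hb | hb
      · exfalso; apply hpD; rw [← hD]
        exact dvd_sub ((Int.dvd_of_emod_eq_zero hb).pow two_ne_zero) ⟨2 * a * c, by ring⟩
      · exact hb
    have hb8 : b ^ 2 % 8 = 1 := by
      have : b % 8 = 1 ∨ b % 8 = 3 ∨ b % 8 = 5 ∨ b % 8 = 7 := by omega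
      rcases this with h | h | h | h <;> simp [pow_two, Int.mul_emod, h]
    have hac : a * c % 2 = 1 := by
      rcases Int.emod_two_eq_zero_or_one (a * c) with hb | hb
      · exfalso; apply h8
        have : D = b ^ 2 - 4 * (a * c) := by rw [← hD]; ring
        omega
      · exact hb
    have ha : a % 2 = 1 := by
      rcases Int.emod_two_eq_zero_or_one a with h | h
      · simp [Int.mul_emod, h] at hac
      · exact h
    have hc : c % 2 = 1 := by
      rcases Int.emod_two_eq_zero_or_one c with h | h
      · simp [Int.mul_emod, h] at hac
      · exact h
    have hF' := Int.emod_eq_zero_of_dvd hF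
    rcases Int.emod_two_eq_zero_or_one x with hx | hx <;> rcases Int.emod_two_eq_zero_or_one y with hy | hy
    · exact ⟨Int.dvd_of_emod_eq_zero hx, Int.dvd_of_emod_eq_zero hy⟩
    all_goals
      exfalso
      simp [pow_two, Int.add_emod, Int.mul_emod, ha, hb, hc, hx, hy] at hF'
  · have hns : ¬ IsSquare (D : ZMod p) := fun hs => h ⟨fun _ => hs, fun h => (h2 h).elim⟩
    have hF0 : (a * x ^ 2 + b * x * y + c * y ^ 2 : ZMod p) = 0 := by
      have := (ZMod.intCast_zmod_eq_zero_iff_dvd _ p).2 hF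
      push_cast at this; exact this
    have hD0 : (D : ZMod p) = b ^ 2 - 4 * a * c := by rw [← hD]; push_cast; ring
    constructor
    · by_contra hx
      have hx0 : (x : ZMod p) ≠ 0 := fun h => hx ((ZMod.intCast_zmod_eq_zero_iff_dvd _ p).1 h)
      apply hns
      refine ⟨(b * x + 2 * c * y) / x, ?_⟩
      field_simp
      rw [hD0]; linear_combination (-4 * c : ZMod p) * hF0
    · by_contra hx
      have hx0 : (y : ZMod p) ≠ 0 := fun h => hx ((ZMod.intCast_zmod_eq_zero_iff_dvd _ p).1 h)
      apply hns
      refine ⟨(2 * a * x + b * y) / y, ?_⟩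
      field_simp
      rw [hD0]; linear_combination (-4 * a : ZMod p) * hF0

lemma prim_rep (a b c : ℤ) (p : ℕ) (hp : p.Prime) (n : ℕ) (hn : n ≠ 0) (x y x' y' : ℤ) (j : ℕ)
    (hF : a * x ^ 2 + b * x * y + c * y ^ 2 = n) (hx : x = (p : ℤ) ^ j * x') (hy : y = (p : ℤ) ^ j * y') :
    2 * j ≤ n.factorization p ∧
      (p : ℤ) ^ (n.factorization p - 2 * j) ∣ a * x' ^ 2 + b * x' * y' + c * y' ^ 2 := by
  have e : (n : ℤ) = (p : ℤ) ^ (2 * j) * (a * x' ^ 2 + b * x' * y' + c * y' ^ 2) := by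
    rw [← hF, hx, hy]; ring
  have h1 : 2 * j ≤ n.factorization p := by
    rw [← hp.pow_dvd_iff_le_factorization hn]
    have : ((p ^ (2 * j) : ℕ) : ℤ) ∣ n := by rw [e]; push_cast; exact Dvd.intro _ rfl
    exact_mod_cast this
  refine ⟨h1, ?_⟩
  have h2 : (p : ℤ) ^ (n.factorization p) ∣ n := by exact_mod_cast Nat.ordProj_dvd n p
  rw [e] at h2
  have h3 : (p : ℤ) ^ (n.factorization p) = (p : ℤ) ^ (2 * j) * (p : ℤ) ^ (n.factorization p - 2 * j) := by
    rw [← pow_add]; congr 1; omega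
  rw [h3] at h2
  exact Int.dvd_of_mul_dvd_mul_left (pow_ne_zero _ (by exact_mod_cast hp.ne_zero)) h2

lemma det_lift (p : ℤ) (k d j : ℕ) (h : 2 * j ≤ k) (x y z w x' y' z' w' : ℤ) (hx : x = p ^ j * x')
    (hy : y = p ^ j * y') (hz : z = p ^ j * z') (hw : w = p ^ j * w')
    (hd : p ^ (k - 2 * j) ∣ p ^ d * (x' * w' - z' * y')) : p ^ k ∣ p ^ d * (x * w - z * y) := by
  have e : p ^ d * (x * w - z * y) = p ^ (2 * j) * (p ^ d * (x' * w' - z' * y')) := by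
    rw [hx, hy, hz, hw]; ring
  rw [e, show p ^ k = p ^ (2 * j) * p ^ (k - 2 * j) by rw [← pow_add]; congr 1; omega]
  exact mul_dvd_mul_left _ hd

lemma ne00 (a b c : ℤ) (n : ℕ) (hn : n ≠ 0) (x y : ℤ) (hF : a * x ^ 2 + b * x * y + c * y ^ 2 = n) :
    ¬ (x = 0 ∧ y = 0) := by
  rintro ⟨h1, h2⟩
  rw [h1, h2] at hF
  apply hn
  have : (n : ℤ) = 0 := by rw [← hF]; ring
  exact_mod_cast this

lemma inert_even (a b c : ℤ) (p : ℕ) (hp : p.Prime) (n : ℕ) (hn : n ≠ 0)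
    (hin : ∀ x y : ℤ, (p : ℤ) ∣ a * x ^ 2 + b * x * y + c * y ^ 2 → (p : ℤ) ∣ x ∧ (p : ℤ) ∣ y)
    (x y : ℤ) (hF : a * x ^ 2 + b * x * y + c * y ^ 2 = n) :
    ∃ j x' y', n.factorization p = 2 * j ∧ x = (p : ℤ) ^ j * x' ∧ y = (p : ℤ) ^ j * y' := by
  obtain ⟨j, x', y', hx, hy, hpr⟩ := prim_decomp p (Nat.prime_iff_prime_int.1 hp) x y (ne00 a b c n hn x y hF)
  obtain ⟨h1, h2⟩ := prim_rep a b c p hp n hn x y x' y' j hF hx hy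
  refine ⟨j, x', y', ?_, hx, hy⟩
  by_contra hne
  exact hpr (hin x' y' ((dvd_pow_self (p : ℤ) (by omega)).trans h2))

lemma color_inert (a b c : ℤ) (p : ℕ) (hp : p.Prime) (n : ℕ) (hn : n ≠ 0) (d : ℕ)
    (hin : ∀ x y : ℤ, (p : ℤ) ∣ a * x ^ 2 + b * x * y + c * y ^ 2 → (p : ℤ) ∣ x ∧ (p : ℤ) ∣ y) :
    ∃ (T : Finset (ℕ × ℤ × ℤ)) (col : ℤ × ℤ → ℕ × ℤ × ℤ), T.card ≤ 1 ∧
      (∀ u : ℤ × ℤ, a * u.1 ^ 2 + b * u.1 * u.2 + c * u.2 ^ 2 = n → col u ∈ T) ∧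
      ∀ u v : ℤ × ℤ, a * u.1 ^ 2 + b * u.1 * u.2 + c * u.2 ^ 2 = n →
        a * v.1 ^ 2 + b * v.1 * v.2 + c * v.2 ^ 2 = n → col u = col v →
        (p : ℤ) ^ (n.factorization p) ∣ (p : ℤ) ^ d * (u.1 * v.2 - v.1 * u.2) := by
  refine ⟨{(0, 0, 0)}, fun _ => (0, 0, 0), by simp, by simp, ?_⟩
  intro u v hu hv _
  obtain ⟨j, x, y, hj, hx, hy⟩ := inert_even a b c p hp n hn hin u.1 u.2 hu
  obtain ⟨j', z, w, hj', hz, hw⟩ := inert_even a b c p hp n hn hin v.1 v.2 hv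
  have : j' = j := by omega
  subst this
  refine det_lift p _ d j' (by omega) _ _ _ _ x y z w hx hy hz hw ?_
  rw [hj]; simp

lemma color_split (a b c D : ℤ) (hD : b ^ 2 - 4 * a * c = D) (p : ℕ) (hp : p.Prime) (n : ℕ) (hn : n ≠ 0)
    (hpD : ¬ (p : ℤ) ∣ D) :
    ∃ (T : Finset (ℕ × ℤ × ℤ)) (col : ℤ × ℤ → ℕ × ℤ × ℤ), T.card ≤ n.factorization p + 1 ∧
      (∀ u : ℤ × ℤ, a * u.1 ^ 2 + b * u.1 * u.2 + c * u.2 ^ 2 = n → col u ∈ T) ∧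
      ∀ u v : ℤ × ℤ, a * u.1 ^ 2 + b * u.1 * u.2 + c * u.2 ^ 2 = n →
        a * v.1 ^ 2 + b * v.1 * v.2 + c * v.2 ^ 2 = n → col u = col v →
        (p : ℤ) ^ (n.factorization p) ∣ (p : ℤ) ^ 0 * (u.1 * v.2 - v.1 * u.2) := by
  have hp' := Nat.prime_iff_prime_int.1 hp
  obtain ⟨ε, hε1, hε⟩ := two_classes a b c D hD p hp' hpD
  have key : ∀ u : ℤ × ℤ, ∃ (j : ℕ) (x' y' : ℤ), a * u.1 ^ 2 + b * u.1 * u.2 + c * u.2 ^ 2 = n →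
      u.1 = (p : ℤ) ^ j * x' ∧ u.2 = (p : ℤ) ^ j * y' ∧ ¬ ((p : ℤ) ∣ x' ∧ (p : ℤ) ∣ y') := by
    intro u
    by_cases hu : a * u.1 ^ 2 + b * u.1 * u.2 + c * u.2 ^ 2 = n
    · obtain ⟨j, x', y', h⟩ := prim_decomp p hp' u.1 u.2 (ne00 a b c n hn _ _ hu)
      exact ⟨j, x', y', fun _ => h⟩
    · exact ⟨0, 0, 0, fun h => (hu h).elim⟩
  choose j X Y hXY using key
  set k := n.factorization p with hk
  refine ⟨(Finset.range (k + 1)).map ⟨fun i => (i, (0 : ℤ), (0 : ℤ)), fun i i' h => by simpa using h⟩,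
    fun u => (2 * j u + if 2 * j u = k then 0 else ε (X u) (Y u), 0, 0), by simp, ?_, ?_⟩
  · intro u hu
    obtain ⟨h1, h2, h3⟩ := hXY u hu
    obtain ⟨h4, h5⟩ := prim_rep a b c p hp n hn _ _ _ _ (j u) hu h1 h2
    rw [Finset.mem_map]
    refine ⟨_, ?_, rfl⟩
    rw [Finset.mem_range]
    have := hε1 (X u) (Y u)
    split_ifs <;> omega
  · intro u v hu hv huv
    obtain ⟨h1, h2, h3⟩ := hXY u hu
    obtain ⟨h4, h5⟩ := prim_rep a b c p hp n hn _ _ _ _ (j u) hu h1 h2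
    obtain ⟨g1, g2, g3⟩ := hXY v hv
    obtain ⟨g4, g5⟩ := prim_rep a b c p hp n hn _ _ _ _ (j v) hv g1 g2
    have hh : 2 * j u + (if 2 * j u = k then 0 else ε (X u) (Y u)) =
        2 * j v + if 2 * j v = k then 0 else ε (X v) (Y v) := (Prod.mk.inj huv).1
    have e1 := hε1 (X u) (Y u)
    have e2 := hε1 (X v) (Y v)
    have hj : j v = j u := by split_ifs at hh <;> omega
    rw [hj] at g1 g2 g5 hh
    refine det_lift p k 0 (j u) h4 _ _ _ _ _ _ _ _ h1 h2 g1 g2 ?_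
    by_cases hl : 2 * j u = k
    · rw [hl]; simp
    · rw [if_neg hl, if_neg hl] at hh
      have hl1 : k - 2 * j u ≠ 0 := by omega
      refine hensel a b c D hD p hp' 0 _ (by simpa using hpD) _ _ _ _ h3 g3 h5 g5 ?_
      simpa using hε _ _ _ _ h3 g3 ((dvd_pow_self _ hl1).trans h5) ((dvd_pow_self _ hl1).trans g5) (by omega)

lemma color_ram (a b c D : ℤ) (hD : b ^ 2 - 4 * a * c = D) (p : ℕ) (hp : p.Prime) (n : ℕ) (hn : n ≠ 0)
    (d : ℕ) (hpD : ¬ (p : ℤ) ^ (d + 1) ∣ D) :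
    ∃ (T : Finset (ℕ × ℤ × ℤ)) (col : ℤ × ℤ → ℕ × ℤ × ℤ),
      T.card ≤ (n.factorization p + 1) * (p ^ (d + 1)) ^ 2 ∧
      (∀ u : ℤ × ℤ, a * u.1 ^ 2 + b * u.1 * u.2 + c * u.2 ^ 2 = n → col u ∈ T) ∧
      ∀ u v : ℤ × ℤ, a * u.1 ^ 2 + b * u.1 * u.2 + c * u.2 ^ 2 = n →
        a * v.1 ^ 2 + b * v.1 * v.2 + c * v.2 ^ 2 = n → col u = col v →
        (p : ℤ) ^ (n.factorization p) ∣ (p : ℤ) ^ d * (u.1 * v.2 - v.1 * u.2) := by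
  have hp' := Nat.prime_iff_prime_int.1 hp
  have key : ∀ u : ℤ × ℤ, ∃ (j : ℕ) (x' y' : ℤ), a * u.1 ^ 2 + b * u.1 * u.2 + c * u.2 ^ 2 = n →
      u.1 = (p : ℤ) ^ j * x' ∧ u.2 = (p : ℤ) ^ j * y' ∧ ¬ ((p : ℤ) ∣ x' ∧ (p : ℤ) ∣ y') := by
    intro u
    by_cases hu : a * u.1 ^ 2 + b * u.1 * u.2 + c * u.2 ^ 2 = n
    · obtain ⟨j, x', y', h⟩ := prim_decomp p hp' u.1 u.2 (ne00 a b c n hn _ _ hu)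
      exact ⟨j, x', y', fun _ => h⟩
    · exact ⟨0, 0, 0, fun h => (hu h).elim⟩
  choose j X Y hXY using key
  set k := n.factorization p with hk
  have hq : (0 : ℤ) < (p : ℤ) ^ (d + 1) := by have := hp.pos; positivity
  refine ⟨Finset.range (k + 1) ×ˢ (Finset.Ico (0 : ℤ) ((p : ℤ) ^ (d + 1)) ×ˢ Finset.Ico (0 : ℤ) ((p : ℤ) ^ (d + 1))),
    fun u => (j u, X u % (p : ℤ) ^ (d + 1), Y u % (p : ℤ) ^ (d + 1)), ?_, ?_, ?_⟩
  · rw [Finset.card_product, Finset.card_product, Finset.card_range, Int.card_Ico, pow_two (p ^ (d + 1))]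
    have : ((p : ℤ) ^ (d + 1) - 0).toNat = p ^ (d + 1) := by
      rw [sub_zero]; exact_mod_cast Int.toNat_natCast (p ^ (d + 1))
    rw [this]
  · intro u hu
    obtain ⟨h1, h2, h3⟩ := hXY u hu
    obtain ⟨h4, h5⟩ := prim_rep a b c p hp n hn _ _ _ _ (j u) hu h1 h2
    simp only [Finset.mem_product, Finset.mem_range, Finset.mem_Ico]
    exact ⟨by omega, ⟨Int.emod_nonneg _ hq.ne', Int.emod_lt_of_pos _ hq⟩, Int.emod_nonneg _ hq.ne', Int.emod_lt_of_pos _ hq⟩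
  · intro u v hu hv huv
    obtain ⟨h1, h2, h3⟩ := hXY u hu
    obtain ⟨h4, h5⟩ := prim_rep a b c p hp n hn _ _ _ _ (j u) hu h1 h2
    obtain ⟨g1, g2, g3⟩ := hXY v hv
    obtain ⟨g4, g5⟩ := prim_rep a b c p hp n hn _ _ _ _ (j v) hv g1 g2
    obtain ⟨hj, hh⟩ := Prod.mk.inj huv
    obtain ⟨hX, hY⟩ := Prod.mk.inj hh
    rw [← hj] at g1 g2 g5
    refine det_lift p k d (j u) h4 _ _ _ _ _ _ _ _ h1 h2 g1 g2 ?_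
    refine hensel a b c D hD p hp' d _ hpD _ _ _ _ h3 g3 h5 g5 ?_
    have e1 : (p : ℤ) ^ (d + 1) ∣ X v - X u := Int.ModEq.dvd hX
    have e2 : (p : ℤ) ^ (d + 1) ∣ Y v - Y u := Int.ModEq.dvd hY
    rw [show X u * Y v - X v * Y u = X u * (Y v - Y u) - (X v - X u) * Y u by ring]
    exact dvd_sub (e2.mul_left _) (e1.mul_right _)

lemma fiber_count (a b c D : ℤ) (hD : b ^ 2 - 4 * a * c = D) (hneg : D < 0) (n : ℕ) (hn : n ≠ 0)
    (S : Finset (ℤ × ℤ)) (hS : ∀ u ∈ S, a * u.1 ^ 2 + b * u.1 * u.2 + c * u.2 ^ 2 = n)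
    (hdet : ∀ u ∈ S, ∀ v ∈ S, (n : ℤ) ∣ D * (u.1 * v.2 - v.1 * u.2)) :
    S.card ≤ (4 * D.natAbs + 1) ^ 2 := by
  rcases S.eq_empty_or_nonempty with h | ⟨u, hu⟩
  · simp [h]
  have hn' : (n : ℤ) ≠ 0 := by exact_mod_cast hn
  have hu0 := hS u hu
  have ha : a ≠ 0 := by
    rintro rfl
    nlinarith [sq_nonneg b]
  have hB : ∀ v ∈ S, (n : ℤ) ∣ D * (2 * a * u.1 * v.1 + b * (u.1 * v.2 + v.1 * u.2) + 2 * c * u.2 * v.2) := by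
    intro v hv
    obtain ⟨γ, hγ⟩ := hdet u hu v hv
    rw [← Int.pow_dvd_pow_iff two_ne_zero]
    refine ⟨4 * D ^ 2 + D * γ ^ 2, ?_⟩
    have hv0 := hS v hv
    have : (D * (2 * a * u.1 * v.1 + b * (u.1 * v.2 + v.1 * u.2) + 2 * c * u.2 * v.2)) ^ 2 =
      4 * D ^ 2 * ((a * u.1 ^ 2 + b * u.1 * u.2 + c * u.2 ^ 2) * (a * v.1 ^ 2 + b * v.1 * v.2 + c * v.2 ^ 2)) +
      D * (D * (u.1 * v.2 - v.1 * u.2)) ^ 2 := by rw [← hD]; ring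
    rw [this, hγ, hu0, hv0]; ring
  have hcard : (Finset.Icc (-2 * (D.natAbs : ℤ)) (2 * D.natAbs) ×ˢ Finset.Icc (-2 * (D.natAbs : ℤ)) (2 * D.natAbs)).card
      = (4 * D.natAbs + 1) ^ 2 := by
    rw [Finset.card_product, Int.card_Icc, pow_two]
    have : (2 * (D.natAbs : ℤ) + 1 - -2 * (D.natAbs : ℤ)).toNat = 4 * D.natAbs + 1 := by omega
    rw [this]
  rw [← hcard]
  refine Finset.card_le_card_of_injOn (fun v =>
    ((D * (2 * a * u.1 * v.1 + b * (u.1 * v.2 + v.1 * u.2) + 2 * c * u.2 * v.2)) / n, D * (u.1 * v.2 - v.1 * u.2) / n)) ?_ ?_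
  · intro v hv
    obtain ⟨γ, hγ⟩ := hdet u hu v hv
    obtain ⟨β, hβ⟩ := hB v hv
    simp only [hγ, hβ, Int.mul_ediv_cancel_left _ hn']
    have hv0 := hS v hv
    have e : (n : ℤ) ^ 2 * (β ^ 2 - D * γ ^ 2) = (n : ℤ) ^ 2 * (4 * D ^ 2) := by
      have : (D * (2 * a * u.1 * v.1 + b * (u.1 * v.2 + v.1 * u.2) + 2 * c * u.2 * v.2)) ^ 2 =
      4 * D ^ 2 * ((a * u.1 ^ 2 + b * u.1 * u.2 + c * u.2 ^ 2) * (a * v.1 ^ 2 + b * v.1 * v.2 + c * v.2 ^ 2)) +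
      D * (D * (u.1 * v.2 - v.1 * u.2)) ^ 2 := by rw [← hD]; ring
      rw [hγ, hβ, hu0, hv0] at this
      linear_combination this
    have e' := mul_left_cancel₀ (pow_ne_zero 2 hn') e
    have hDa : (D.natAbs : ℤ) = -D := by omega
    rw [hDa]
    have b1 : β ^ 2 ≤ (2 * -D) ^ 2 := by nlinarith [mul_nonneg (neg_nonneg.2 hneg.le) (sq_nonneg γ)]
    have b2 : γ ^ 2 ≤ (2 * -D) ^ 2 := by
      nlinarith [mul_nonneg (show (0:ℤ) ≤ -D - 1 by omega) (sq_nonneg γ), sq_nonneg β]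
    have c1 := abs_le_of_sq_le_sq' b1 (by omega)
    have c2 := abs_le_of_sq_le_sq' b2 (by omega)
    simp only [Finset.coe_product, Finset.coe_Icc, Set.mem_prod, Set.mem_Icc]
    omega
  · intro v hv w hw hvw
    obtain ⟨h1, h2⟩ := Prod.mk.inj hvw
    have h1' := (Int.ediv_left_inj (hB v hv) (hB w hw)).1 h1
    have h2' := (Int.ediv_left_inj (hdet u hu v hv) (hdet u hu w hw)).1 h2
    have h1'' := mul_left_cancel₀ hneg.ne h1'
    have h2'' := mul_left_cancel₀ hneg.ne h2'
    have hz : (n : ℤ) * (a * (v.1 - w.1) ^ 2 + b * (v.1 - w.1) * (v.2 - w.2) + c * (v.2 - w.2) ^ 2) = 0 := by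
      have e : 4 * ((a * u.1 ^ 2 + b * u.1 * u.2 + c * u.2 ^ 2) * (a * (v.1 - w.1) ^ 2 + b * (v.1 - w.1) * (v.2 - w.2) + c * (v.2 - w.2) ^ 2)) =
        ((2 * a * u.1 * v.1 + b * (u.1 * v.2 + v.1 * u.2) + 2 * c * u.2 * v.2) - (2 * a * u.1 * w.1 + b * (u.1 * w.2 + w.1 * u.2) + 2 * c * u.2 * w.2)) ^ 2
        - D * ((u.1 * v.2 - v.1 * u.2) - (u.1 * w.2 - w.1 * u.2)) ^ 2 := by rw [← hD]; ring
      rw [h1'', h2'', hu0] at e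
      simp only [sub_self] at e
      linarith
    have hz' := (mul_eq_zero.1 hz).resolve_left hn'
    have e : (2 * a * (v.1 - w.1) + b * (v.2 - w.2)) ^ 2 + (-D) * (v.2 - w.2) ^ 2 = 0 := by
      rw [← hD]; linear_combination 4 * a * hz'
    have p1 := sq_nonneg (2 * a * (v.1 - w.1) + b * (v.2 - w.2))
    have p2 := mul_nonneg (neg_nonneg.2 hneg.le) (sq_nonneg (v.2 - w.2))
    have q2 : (-D) * (v.2 - w.2) ^ 2 = 0 := by linarith
    have q1 : (2 * a * (v.1 - w.1) + b * (v.2 - w.2)) ^ 2 = 0 := by linarith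
    have r2 : v.2 - w.2 = 0 := by
      rcases mul_eq_zero.1 q2 with h | h
      · omega
      · exact pow_eq_zero_iff two_ne_zero |>.1 h
    have r1 := pow_eq_zero_iff two_ne_zero |>.1 q1
    rw [r2, mul_zero, add_zero] at r1
    have r3 := (mul_eq_zero.1 r1).resolve_left (mul_ne_zero two_ne_zero ha)
    exact Prod.ext (by omega) (by omega)

lemma color_all (a b c D : ℤ) (hD : b ^ 2 - 4 * a * c = D) (hneg : D < 0) (P : Set ℕ)
    (hin : ∀ p : ℕ, p.Prime → p ∉ P → ∀ x y : ℤ,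
      (p : ℤ) ∣ a * x ^ 2 + b * x * y + c * y ^ 2 → (p : ℤ) ∣ x ∧ (p : ℤ) ∣ y)
    (hP : ∀ p : ℕ, p.Prime → (p : ℤ) ∣ D → p ∈ P)
    (p : ℕ) (hp : p.Prime) (n : ℕ) (hn : n ≠ 0) :
    ∃ (T : Finset (ℕ × ℤ × ℤ)) (col : ℤ × ℤ → ℕ × ℤ × ℤ),
      T.card ≤ (if p ∈ P then n.factorization p + 1 else 1) *
        (if (p : ℤ) ∣ D then (p ^ (D.natAbs.factorization p + 1)) ^ 2 else 1) ∧
      (∀ u : ℤ × ℤ, a * u.1 ^ 2 + b * u.1 * u.2 + c * u.2 ^ 2 = n → col u ∈ T) ∧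
      ∀ u v : ℤ × ℤ, a * u.1 ^ 2 + b * u.1 * u.2 + c * u.2 ^ 2 = n →
        a * v.1 ^ 2 + b * v.1 * v.2 + c * v.2 ^ 2 = n → col u = col v →
        (p : ℤ) ^ (n.factorization p) ∣ (p : ℤ) ^ (D.natAbs.factorization p) * (u.1 * v.2 - v.1 * u.2) := by
  by_cases hpP : p ∈ P
  · rw [if_pos hpP]
    by_cases hpD : (p : ℤ) ∣ D
    · rw [if_pos hpD]
      apply color_ram a b c D hD p hp n hn
      intro h
      have h' : p ^ (D.natAbs.factorization p + 1) ∣ D.natAbs := by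
        rw [← Int.natCast_dvd]; exact_mod_cast h
      exact Nat.pow_succ_factorization_not_dvd (by omega) hp h'
    · rw [if_neg hpD, mul_one]
      have h0 : D.natAbs.factorization p = 0 :=
        Nat.factorization_eq_zero_of_not_dvd (fun h => hpD (Int.natCast_dvd.2 h))
      rw [h0]
      exact color_split a b c D hD p hp n hn hpD
  · have hpD : ¬ (p : ℤ) ∣ D := fun h => hpP (hP p hp h)
    rw [if_neg hpP, if_neg hpD, mul_one]
    exact color_inert a b c p hp n hn _ (hin p hp hpP)

lemma global_count (a b c D : ℤ) (hD : b ^ 2 - 4 * a * c = D) (hneg : D < 0) (P : Set ℕ)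
    (hin : ∀ p : ℕ, p.Prime → p ∉ P → ∀ x y : ℤ,
      (p : ℤ) ∣ a * x ^ 2 + b * x * y + c * y ^ 2 → (p : ℤ) ∣ x ∧ (p : ℤ) ∣ y)
    (hP : ∀ p : ℕ, p.Prime → (p : ℤ) ∣ D → p ∈ P)
    (n : ℕ) (hn : n ≠ 0) (S : Finset (ℤ × ℤ))
    (hS : ∀ u ∈ S, a * u.1 ^ 2 + b * u.1 * u.2 + c * u.2 ^ 2 = n) :
    S.card ≤ (4 * D.natAbs + 1) ^ 2 * ∏ p ∈ n.primeFactors, ((if p ∈ P then n.factorization p + 1 else 1) *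
        (if (p : ℤ) ∣ D then (p ^ (D.natAbs.factorization p + 1)) ^ 2 else 1)) := by
  have key : ∀ p : ℕ, ∃ (T : Finset (ℕ × ℤ × ℤ)) (col : ℤ × ℤ → ℕ × ℤ × ℤ), p.Prime →
      T.card ≤ (if p ∈ P then n.factorization p + 1 else 1) *
        (if (p : ℤ) ∣ D then (p ^ (D.natAbs.factorization p + 1)) ^ 2 else 1) ∧
      (∀ u : ℤ × ℤ, a * u.1 ^ 2 + b * u.1 * u.2 + c * u.2 ^ 2 = n → col u ∈ T) ∧
      ∀ u v : ℤ × ℤ, a * u.1 ^ 2 + b * u.1 * u.2 + c * u.2 ^ 2 = n →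
        a * v.1 ^ 2 + b * v.1 * v.2 + c * v.2 ^ 2 = n → col u = col v →
        (p : ℤ) ^ (n.factorization p) ∣ (p : ℤ) ^ (D.natAbs.factorization p) * (u.1 * v.2 - v.1 * u.2) := by
    intro p
    by_cases hp : p.Prime
    · obtain ⟨T, col, h⟩ := color_all a b c D hD hneg P hin hP p hp n hn
      exact ⟨T, col, fun _ => h⟩
    · exact ⟨∅, fun _ => (0, 0, 0), fun h => (hp h).elim⟩
  choose T col hT using key
  have h1 : S.card ≤ (4 * D.natAbs + 1) ^ 2 * (n.primeFactors.pi T).card := by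
    refine Finset.card_le_mul_card_image_of_maps_to (f := fun u => fun p (_ : p ∈ n.primeFactors) => col p u) ?_ _ ?_
    · intro u hu
      rw [Finset.mem_pi]
      intro p hp
      exact (hT p (Nat.prime_of_mem_primeFactors hp)).2.1 u (hS u hu)
    · intro t _
      refine fiber_count a b c D hD hneg n hn _ (fun u hu => hS u (Finset.mem_filter.1 hu).1) ?_
      intro u hu v hv
      obtain ⟨hu1, hu2⟩ := Finset.mem_filter.1 hu
      obtain ⟨hv1, hv2⟩ := Finset.mem_filter.1 hv
      rw [Int.natCast_dvd, Nat.dvd_iff_prime_pow_dvd_dvd]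
      intro p i hp hi
      rcases Nat.eq_zero_or_pos i with h0 | h0
      · simp [h0]
      have hpn : p ∈ n.primeFactors := by
        rw [Nat.mem_primeFactors]
        exact ⟨hp, (dvd_pow_self p h0.ne').trans hi, hn⟩
      have hc : col p u = col p v := by
        have := congrFun (congrFun (hu2.trans hv2.symm) p) hpn
        exact this
      have h3 := (hT p hp).2.2 u v (hS u hu1) (hS v hv1) hc
      have h4 : i ≤ n.factorization p := (hp.pow_dvd_iff_le_factorization hn).1 hi
      have h5 : (p : ℤ) ^ (D.natAbs.factorization p) ∣ D := by
        have := Int.natCast_dvd.2 (Nat.ordProj_dvd D.natAbs p)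
        exact_mod_cast this
      rw [← Int.natCast_dvd]
      push_cast
      exact (pow_dvd_pow _ h4).trans (h3.trans (mul_dvd_mul_right h5 _))
  refine h1.trans (Nat.mul_le_mul_left _ ?_)
  rw [Finset.card_pi]
  exact Finset.prod_le_prod' (fun p hp => (hT p (Nat.prime_of_mem_primeFactors hp)).1)

lemma tau_bound (P : Set ℕ) (n : ℕ) (hn : n ≠ 0) :
    ∏ p ∈ n.primeFactors, (if p ∈ P then n.factorization p + 1 else 1) ≤
      (n.divisors.filter (fun e => inSpan P e)).card := by
  set F := n.factorization.filter (· ∈ P) with hF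
  have hFs : ∀ p ∈ F.support, p.Prime := by
    intro p hp
    rw [hF, Finsupp.support_filter] at hp
    exact Nat.prime_of_mem_primeFactors (Finset.mem_filter.1 hp).1
  set n1 := F.prod (· ^ ·) with hn1
  have hfac : n1.factorization = F := Nat.prod_pow_factorization_eq_self hFs
  have hn10 : n1 ≠ 0 := by
    rw [hn1, Finsupp.prod, Finset.prod_ne_zero_iff]
    intro p hp
    exact pow_ne_zero _ (hFs p hp).ne_zero
  have hdvd : n1 ∣ n := by
    rw [← Nat.factorization_le_iff_dvd hn10 hn, hfac, hF]
    intro p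
    rw [Finsupp.filter_apply]
    split_ifs <;> simp
  have hsub : n1.divisors ⊆ n.divisors.filter (fun e => inSpan P e) := by
    intro e he
    rw [Nat.mem_divisors] at he
    rw [Finset.mem_filter, Nat.mem_divisors]
    refine ⟨⟨he.1.trans hdvd, hn⟩, ?_⟩
    intro p hp hpe
    by_contra hpP
    have h0 : n1.factorization p = 0 := by
      rw [hfac, hF, Finsupp.filter_apply, if_neg hpP]
    have h1 := hp.factorization_pos_of_dvd hn10 (hpe.trans he.1)
    omega
  refine le_trans (le_of_eq ?_) (Finset.card_le_card hsub)
  rw [Nat.card_divisors hn10, ← Nat.support_factorization n1, hfac, hF, Finsupp.support_filter,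
    Finset.prod_filter, Nat.support_factorization]
  refine Finset.prod_congr rfl fun p hp => ?_
  by_cases h : p ∈ P
  · rw [if_pos h, if_pos h, Finsupp.filter_apply, if_pos h]
  · rw [if_neg h, if_neg h]

lemma sum_bound (P : Set ℕ) (n : ℕ) (hn : n ≠ 0) (hev : ∀ p : ℕ, p.Prime → p ∉ P → ∃ j, n.factorization p = 2 * j) :
    ∃ m ∈ n.divisors, inSpan ({p : ℕ | p.Prime} \ P) m ∧ m ^ 2 ∣ n ∧ inSpan P (n / m ^ 2) := by
  set F := (n.factorization.filter (· ∉ P)).mapRange (· / 2) (by simp) with hF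
  have hFs : ∀ p ∈ F.support, p.Prime := by
    intro p hp
    have := Finsupp.support_mapRange hp
    rw [Finsupp.support_filter] at this
    exact Nat.prime_of_mem_primeFactors (Finset.mem_filter.1 this).1
  set m := F.prod (· ^ ·) with hm
  have hfac : m.factorization = F := Nat.prod_pow_factorization_eq_self hFs
  have hm0 : m ≠ 0 := by
    rw [hm, Finsupp.prod, Finset.prod_ne_zero_iff]
    intro p hp
    exact pow_ne_zero _ (hFs p hp).ne_zero
  have hFa : ∀ p, F p = if p ∉ P then n.factorization p / 2 else 0 := by
    intro p
    rw [hF, Finsupp.mapRange_apply, Finsupp.filter_apply]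
    split_ifs <;> simp
  have hsq : m ^ 2 ∣ n := by
    rw [← Nat.factorization_le_iff_dvd (pow_ne_zero 2 hm0) hn, Nat.factorization_pow, hfac]
    intro p
    rw [Finsupp.smul_apply, hFa, smul_eq_mul]
    split_ifs <;> omega
  refine ⟨m, Nat.mem_divisors.2 ⟨(dvd_pow_self m two_ne_zero).trans hsq, hn⟩, ?_, hsq, ?_⟩
  · intro p hp hpm
    refine ⟨hp, fun hpP => ?_⟩
    have h1 := hp.factorization_pos_of_dvd hm0 hpm
    rw [hfac, hFa, if_neg (by simpa using hpP)] at h1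
    omega
  · intro p hp hpd
    by_contra hpP
    have h0 : n / m ^ 2 ≠ 0 := by
      have := Nat.div_pos (Nat.le_of_dvd (Nat.pos_of_ne_zero hn) hsq) (by positivity)
      omega
    have h1 := hp.factorization_pos_of_dvd h0 hpd
    rw [Nat.factorization_div hsq, Nat.factorization_pow, hfac, Finsupp.tsub_apply, Finsupp.smul_apply, hFa, if_pos hpP,
      smul_eq_mul] at h1
    obtain ⟨j, hj⟩ := hev p hp hpP
    omega

lemma prime_card_tendsto :
    Tendsto (fun x : ℕ => (((Finset.range x).filter Nat.Prime).card : ℝ)) atTop atTop := by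
  have h : Tendsto (fun x : ℕ => ((Finset.range x).filter Nat.Prime).card) atTop atTop := by
    have := Nat.tendsto_primeCounting'
    refine this.congr fun x => ?_
    rw [Nat.primeCounting', Nat.count_eq_card_filter_range]
  exact tendsto_natCast_atTop_atTop.comp h

lemma density_add (P Q : ℕ → Prop) [DecidablePred P] [DecidablePred Q] (K : ℕ) (L : ℝ) (hQP : ∀ p, Q p → P p)
    (hK : ∀ x, ((Finset.range x).filter P).card ≤ ((Finset.range x).filter Q).card + K)
    (hQ : Tendsto (fun x : ℕ => (((Finset.range x).filter Q).card : ℝ) /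
      (((Finset.range x).filter Nat.Prime).card : ℝ)) atTop (nhds L)) :
    Tendsto (fun x : ℕ => (((Finset.range x).filter P).card : ℝ) /
      (((Finset.range x).filter Nat.Prime).card : ℝ)) atTop (nhds L) := by
  have hlim : Tendsto (fun x : ℕ => (((Finset.range x).filter Q).card : ℝ) /
      (((Finset.range x).filter Nat.Prime).card : ℝ) + (K : ℝ) / (((Finset.range x).filter Nat.Prime).card : ℝ))
      atTop (nhds L) := by
    have := hQ.add (prime_card_tendsto.const_div_atTop (K : ℝ))
    rwa [add_zero] at this
  refine tendsto_of_tendsto_of_tendsto_of_le_of_le hQ hlim (fun x => ?_) (fun x => ?_)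
  · refine div_le_div_of_nonneg_right ?_ (Nat.cast_nonneg _)
    exact Nat.cast_le.2 (Finset.card_le_card (Finset.monotone_filter_right _ (fun p _ h => hQP p h)))
  · simp only [← add_div]
    refine div_le_div_of_nonneg_right ?_ (Nat.cast_nonneg _)
    exact_mod_cast hK x

/-- Matthiesen's divisor-type majorant for the representation
function of a PDBQF of discriminant D. -/
theorem statement10 (D : ℤ) (hD : D < 0) (hD4 : D % 4 = 0 ∨ D % 4 = 1) :
    ∃ P : Set ℕ,
      (∀ p ∈ P, Nat.Prime p) ∧
      (∀ p q : ℕ, p.Prime → q.Prime → p ∈ P → p % D.natAbs = q % D.natAbs → q ∈ P) ∧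
      Tendsto (fun x : ℕ =>
          (((Finset.range x).filter (fun p => p.Prime ∧ p ∈ P)).card : ℝ) /
            (((Finset.range x).filter Nat.Prime).card : ℝ)) atTop (nhds (1 / 2)) ∧
      ∃ C : ℝ, 0 < C ∧
        ∀ f : PDBQF, f.disc = D → ∀ n : ℕ, 1 ≤ n →
          (f.R (n : ℤ) : ℝ) ≤
            C * ((n.divisors.filter (fun e => inSpan P e)).card : ℝ) *
              ∑ m ∈ n.divisors,
                (if inSpan ({p : ℕ | p.Prime} \ (P ∪ {p : ℕ | p.Prime ∧ (p : ℤ) ∣ D})) m ∧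
                    m ^ 2 ∣ n ∧
                    inSpan (P ∪ {p : ℕ | p.Prime ∧ (p : ℤ) ∣ D}) (n / m ^ 2)
                 then (1 : ℝ) else 0) := by
  haveI : NeZero D.natAbs := ⟨by omega⟩
  obtain ⟨Hs, hHu, hHc, hH⟩ := char_exists D hD hD4
  set P : Set ℕ := {p : ℕ | p.Prime ∧ ((p : ZMod D.natAbs) ∈ Hs ∨ (p : ℤ) ∣ D)} with hPdef
  have hPD : P ∪ {p : ℕ | p.Prime ∧ (p : ℤ) ∣ D} = P := by
    ext p
    simp only [hPdef, Set.mem_union, Set.mem_setOf_eq]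
    tauto
  refine ⟨P, fun p hp => hp.1, ?_, ?_, ?_⟩
  · rintro p q hp hq ⟨_, h | h⟩ hpq
    · refine ⟨hq, Or.inl ?_⟩
      rwa [← (ZMod.natCast_eq_natCast_iff' p q D.natAbs).2 hpq]
    · have h1 : p ∣ D.natAbs := Int.natCast_dvd.1 h
      have h2 : p ∣ q := by
        rw [← Nat.dvd_mod_iff h1, ← hpq, Nat.dvd_mod_iff h1]
      have h3 := (Nat.prime_dvd_prime_iff_eq hp hq).1 h2
      subst h3
      exact ⟨hp, Or.inr h⟩
  · have h0 := density_classes D.natAbs Hs hHu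
    have hL : ((Hs.card : ℝ) / (D.natAbs.totient : ℝ)) = 1 / 2 := by
      have hpos : (0 : ℝ) < D.natAbs.totient := by
        exact_mod_cast Nat.totient_pos.2 (by omega)
      rw [← hHc] at hpos ⊢
      push_cast at hpos ⊢
      have : (Hs.card : ℝ) ≠ 0 := by
        intro h; rw [h] at hpos; norm_num at hpos
      field_simp
    rw [hL] at h0
    have hfinal := density_add (fun p => p.Prime ∧ p ∈ P) (fun p => p.Prime ∧ (p : ZMod D.natAbs) ∈ Hs)
      D.natAbs.primeFactors.card (1 / 2) (fun p hp => ⟨hp.1, hp.1, Or.inl hp.2⟩) ?_ ?_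
    · convert hfinal
    · intro x
      refine le_trans (Finset.card_le_card ?_) (Finset.card_union_le _ _)
      intro p hp
      obtain ⟨hpx, hp1, _, hp2⟩ := Finset.mem_filter.1 hp
      rw [Finset.mem_union, Finset.mem_filter, Nat.mem_primeFactors]
      rcases hp2 with h | h
      · exact Or.inl ⟨hpx, hp1, h⟩
      · exact Or.inr ⟨hp1, Int.natCast_dvd.1 h, by omega⟩
    · convert h0
  · refine ⟨((4 * D.natAbs + 1) ^ 2 * ∏ p ∈ D.natAbs.primeFactors, (p ^ (D.natAbs.factorization p + 1)) ^ 2 : ℕ), ?_, ?_⟩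
    · have : 0 < (4 * D.natAbs + 1) ^ 2 * ∏ p ∈ D.natAbs.primeFactors, (p ^ (D.natAbs.factorization p + 1)) ^ 2 := by
        refine Nat.mul_pos (by positivity) (Finset.prod_pos fun p hp => ?_)
        have := (Nat.prime_of_mem_primeFactors hp).pos
        positivity
      exact_mod_cast this
    · intro f hf n hn1
      have hn : n ≠ 0 := by omega
      rw [hPD]
      have hdisc : f.b ^ 2 - 4 * f.a * f.c = D := hf
      have hin : ∀ p : ℕ, p.Prime → p ∉ P → ∀ x y : ℤ,
          (p : ℤ) ∣ f.a * x ^ 2 + f.b * x * y + f.c * y ^ 2 → (p : ℤ) ∣ x ∧ (p : ℤ) ∣ y := by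
        intro p hp hpP
        have hpD : ¬ (p : ℤ) ∣ D := fun h => hpP ⟨hp, Or.inr h⟩
        refine inert_lemma f.a f.b f.c D hdisc p hp hpD ?_
        rintro ⟨h1, h2⟩
        exact hpP ⟨hp, Or.inl (hH p hp hpD h1 h2)⟩
      have hPin : ∀ p : ℕ, p.Prime → (p : ℤ) ∣ D → p ∈ P := fun p hp h => ⟨hp, Or.inr h⟩
      have hsum0 : ∀ m ∈ n.divisors, (0 : ℝ) ≤ (if inSpan ({p : ℕ | p.Prime} \ P) m ∧ m ^ 2 ∣ n ∧ inSpan P (n / m ^ 2)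
                 then (1 : ℝ) else 0) := by
        intro m _
        split_ifs <;> norm_num
      by_cases hR : f.R (n : ℤ) = 0
      · rw [hR, Nat.cast_zero]
        exact mul_nonneg (by positivity) (Finset.sum_nonneg hsum0)
      have hne : {p : ℤ × ℤ | f.form p.1 p.2 = n}.Nonempty := by
        rw [Set.nonempty_iff_ne_empty]
        intro h
        apply hR
        rw [PDBQF.R, h, Set.ncard_empty]
      have hfin : {p : ℤ × ℤ | f.form p.1 p.2 = n}.Finite := by
        by_contra h
        exact hR (Set.Infinite.ncard h)
      obtain ⟨u, hu⟩ := hne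
      have hev : ∀ p : ℕ, p.Prime → p ∉ P → ∃ j, n.factorization p = 2 * j := by
        intro p hp hpP
        obtain ⟨j, _, _, hj, _⟩ := inert_even f.a f.b f.c p hp n hn (hin p hp hpP) u.1 u.2 hu
        exact ⟨j, hj⟩
      obtain ⟨m, hm, hm2⟩ := sum_bound P n hn hev
      have hsum1 : (1 : ℝ) ≤ ∑ m ∈ n.divisors, (if inSpan ({p : ℕ | p.Prime} \ P) m ∧ m ^ 2 ∣ n ∧ inSpan P (n / m ^ 2)
                 then (1 : ℝ) else 0) := by
        refine le_trans (le_of_eq ?_) (Finset.single_le_sum hsum0 hm)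
        rw [if_pos hm2]
      have hRle : f.R (n : ℤ) ≤ (4 * D.natAbs + 1) ^ 2 * (∏ p ∈ D.natAbs.primeFactors, (p ^ (D.natAbs.factorization p + 1)) ^ 2)
          * (n.divisors.filter (fun e => inSpan P e)).card := by
        rw [PDBQF.R, Set.ncard_eq_toFinset_card _ hfin]
        refine (global_count f.a f.b f.c D hdisc hD P hin hPin n hn _
          (fun v hv => by simpa [PDBQF.form] using hv)).trans ?_
        rw [Finset.prod_mul_distrib, mul_assoc]
        refine Nat.mul_le_mul_left _ ?_
        rw [mul_comm]
        refine Nat.mul_le_mul ?_ (tau_bound P n hn)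
        rw [← Finset.prod_filter]
        refine Finset.prod_le_prod_of_subset_of_one_le' ?_ ?_
        · intro p hp
          obtain ⟨h1, h2⟩ := Finset.mem_filter.1 hp
          rw [Nat.mem_primeFactors]
          exact ⟨Nat.prime_of_mem_primeFactors h1, Int.natCast_dvd.1 h2, by omega⟩
        · intro p hp _
          have := (Nat.prime_of_mem_primeFactors hp).pos
          exact Nat.one_le_iff_ne_zero.2 (by positivity)
      have hRle' : (f.R (n : ℤ) : ℝ) ≤ (((4 * D.natAbs + 1) ^ 2 * (∏ p ∈ D.natAbs.primeFactors, (p ^ (D.natAbs.factorization p + 1)) ^ 2) : ℕ) : ℝ)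
          * ((n.divisors.filter (fun e => inSpan P e)).card : ℝ) := by
        rw [← Nat.cast_mul]
        exact Nat.cast_le.2 hRle
      refine hRle'.trans ?_
      refine le_trans (le_mul_of_one_le_right (by positivity) hsum1) (le_of_eq ?_)
      rfl
end

section
/- Let Ψ = (ψ_1,…,ψ_t) be a system of affine-linear forms in d variables with integer coefficients, with t ≥ 2, and let p be a prime such that the system reduced modulo p has finite complexity, i.e. no two of the forms are affinely related modulo p. Then for all nonnegative integers a_1,…,a_t, α_Ψ(p^{a_1},…,p^{a_t}) ≤ p^{−max_{i≠j}(a_i + a_j)}. -/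
structure AffineForm (d : ℕ) where
  coeff : Fin d → ℤ
  const : ℤ

def AffineForm.eval {d : ℕ} (ψ : AffineForm d) (n : Fin d → ℤ) : ℤ :=
  (∑ i, ψ.coeff i * n i) + ψ.const

/-- Local divisor density α_Ψ(d_1,…,d_t). -/
noncomputable def localDensity {d t : ℕ} (Ψ : Fin t → AffineForm d) (D : Fin t → ℕ) : ℝ :=
  (∑ n : Fin d → Fin (Finset.univ.lcm D),
      if ∀ i, ((Ψ i).eval (fun k => (n k : ℤ))) % (D i : ℤ) = 0 then (1 : ℝ) else 0)
    / ((Finset.univ.lcm D : ℕ) : ℝ) ^ d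

/-- Two integer vectors are proportional modulo p. -/
def ProportionalMod (p : ℕ) {d : ℕ} (u v : Fin d → ℤ) : Prop :=
  ∃ a b : ZMod p, (a ≠ 0 ∨ b ≠ 0) ∧ ∀ k, a * (u k : ZMod p) = b * (v k : ZMod p)

theorem exists_minor {p d : ℕ} (hp : p.Prime) (u v : Fin d → ℤ) (h : ¬ ProportionalMod p u v) :
    ∃ k l, ¬ (p : ℤ) ∣ u k * v l - u l * v k := by
  haveI := Fact.mk hp
  by_contra! hc
  apply h
  by_cases hu : ∀ k, (u k : ZMod p) = 0
  · exact ⟨1, 0, Or.inl one_ne_zero, fun k => by simp [hu k]⟩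
  · push Not at hu
    obtain ⟨k, hk⟩ := hu
    refine ⟨v k, u k, Or.inr hk, fun l => ?_⟩
    have := (ZMod.intCast_zmod_eq_zero_iff_dvd _ p).2 (hc k l)
    push_cast at this
    linear_combination -this

theorem fin_eq_of_dvd {q : ℕ} {δ : ℤ} (hc : IsCoprime (q : ℤ) δ) (x y : Fin q)
    (h : (q : ℤ) ∣ ((x : ℤ) - (y : ℤ)) * δ) : x = y := by
  have h1 := hc.dvd_of_dvd_mul_right h
  have h2 := Int.eq_zero_of_abs_lt_dvd h1 (by
    have := x.2; have := y.2
    rw [abs_lt]; constructor <;> omega)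
  apply Fin.ext; omega

theorem count_bound {d M q r : ℕ} [NeZero M] (φ ψ : AffineForm d) (hq : q ∣ M) (hr : r ∣ M)
    (k l : Fin d)
    (hcq : IsCoprime (q : ℤ) (φ.coeff k * ψ.coeff l - φ.coeff l * ψ.coeff k))
    (hcr : IsCoprime (r : ℤ) (φ.coeff k * ψ.coeff l - φ.coeff l * ψ.coeff k))
    (S : Finset (Fin d → Fin M))
    (hS : ∀ n ∈ S, (q : ℤ) ∣ φ.eval (fun k => (n k : ℤ)) ∧ (r : ℤ) ∣ ψ.eval (fun k => (n k : ℤ))) :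
    S.card * (q * r) ≤ M ^ d := by
  set δ := φ.coeff k * ψ.coeff l - φ.coeff l * ψ.coeff k with hδ
  let e : Fin d → ℤ := fun m => (if m = k then ψ.coeff l else 0) - (if m = l then ψ.coeff k else 0)
  let f : Fin d → ℤ := fun m => (if m = l then φ.coeff k else 0) - (if m = k then φ.coeff l else 0)
  have h1 : ∑ m, φ.coeff m * e m = δ := by
    simp [e, mul_sub, Finset.sum_sub_distrib, hδ]
  have h2 : ∑ m, ψ.coeff m * e m = 0 := by
    simp [e, mul_sub, Finset.sum_sub_distrib]; ring
  have h3 : ∑ m, φ.coeff m * f m = 0 := by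
    simp [f, mul_sub, Finset.sum_sub_distrib]; ring
  have h4 : ∑ m, ψ.coeff m * f m = δ := by
    simp [f, mul_sub, Finset.sum_sub_distrib, hδ]; ring
  let F : S × Fin q × Fin r → (Fin d → ZMod M) := fun z m =>
    (((z.1.1 m : ℕ) + (z.2.1 : ℕ) * e m + (z.2.2 : ℕ) * f m : ℤ) : ZMod M)
  have hF : Function.Injective F := by
    rintro ⟨⟨n, hn⟩, x, y⟩ ⟨⟨n', hn'⟩, x', y'⟩ h
    have hm : ∀ m, (M : ℤ) ∣ ((n m : ℤ) + (x : ℤ) * e m + (y : ℤ) * f m)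
        - ((n' m : ℤ) + (x' : ℤ) * e m + (y' : ℤ) * f m) := by
      intro m
      have := congrFun h m
      exact (ZMod.intCast_eq_intCast_iff_dvd_sub _ _ _).1 this.symm
    have key : ∀ (χ : AffineForm d), (M : ℤ) ∣ χ.eval (fun k => (n k : ℤ))
        - χ.eval (fun k => (n' k : ℤ)) + ((x : ℤ) - x') * (∑ m, χ.coeff m * e m)
        + ((y : ℤ) - y') * (∑ m, χ.coeff m * f m) := by
      intro χ
      have : (M : ℤ) ∣ ∑ m, χ.coeff m * (((n m : ℤ) + (x : ℤ) * e m + (y : ℤ) * f m)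
        - ((n' m : ℤ) + (x' : ℤ) * e m + (y' : ℤ) * f m)) :=
        Finset.dvd_sum fun m _ => Dvd.dvd.mul_left (hm m) _
      convert this using 1
      simp only [AffineForm.eval, add_sub_add_right_eq_sub, Finset.mul_sum]
      rw [← Finset.sum_sub_distrib, ← Finset.sum_add_distrib, ← Finset.sum_add_distrib]
      exact Finset.sum_congr rfl fun m _ => by ring
    have hx : x = x' := by
      apply fin_eq_of_dvd hcq
      have := (Int.natCast_dvd_natCast.2 hq).trans (key φ)
      rw [h1, h3, mul_zero, add_zero] at this
      exact (dvd_add_right (dvd_sub (hS n hn).1 (hS n' hn').1)).1 this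
    have hy : y = y' := by
      apply fin_eq_of_dvd hcr
      have := (Int.natCast_dvd_natCast.2 hr).trans (key ψ)
      rw [h2, h4, mul_zero, add_zero] at this
      exact (dvd_add_right (dvd_sub (hS n hn).2 (hS n' hn').2)).1 this
    subst hx hy
    have : n = n' := by
      funext m
      apply fin_eq_of_dvd (isCoprime_one_right)
      have := hm m
      convert this using 1
      ring
    subst this
    rfl
  have := Fintype.card_le_of_injective F hF
  simpa [ZMod.card] using this

/-- bound for local divisor densities of a system of finite
complexity modulo p. The conclusion, stated for every pair i ≠ j, is
equivalent to α_Ψ(p^{a_1},…,p^{a_t}) ≤ p^{−max_{i≠j}(a_i+a_j)}. -/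
theorem statement17 (d t : ℕ) (ht : 2 ≤ t) (Ψ : Fin t → AffineForm d)
    (p : ℕ) (hp : p.Prime)
    (hfc : ∀ i j, i ≠ j → ¬ ProportionalMod p (Ψ i).coeff (Ψ j).coeff)
    (a : Fin t → ℕ) :
    ∀ i j, i ≠ j →
      localDensity Ψ (fun k => p ^ a k) ≤ ((p : ℝ) ^ (a i + a j))⁻¹ := by
  intro i j hij
  obtain ⟨k, l, hkl⟩ := exists_minor hp _ _ (hfc i j hij)
  have hcop : ∀ n : ℕ, IsCoprime ((p ^ n : ℕ) : ℤ)
      ((Ψ i).coeff k * (Ψ j).coeff l - (Ψ i).coeff l * (Ψ j).coeff k) := by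
    intro n
    push_cast
    exact IsCoprime.pow_left (((Nat.prime_iff_prime_int.1 hp).coprime_iff_not_dvd).2 hkl)
  unfold localDensity
  have hM : Finset.univ.lcm (fun k => p ^ a k) ≠ 0 := by
    rw [Ne, Finset.lcm_eq_zero_iff]
    simp [hp.ne_zero]
  have hi : p ^ a i ∣ Finset.univ.lcm (fun k => p ^ a k) :=
    Finset.dvd_lcm (f := fun k => p ^ a k) (Finset.mem_univ i)
  have hj : p ^ a j ∣ Finset.univ.lcm (fun k => p ^ a k) :=
    Finset.dvd_lcm (f := fun k => p ^ a k) (Finset.mem_univ j)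
  generalize Finset.univ.lcm (fun k => p ^ a k) = M at *
  haveI : NeZero M := ⟨hM⟩
  rw [Finset.sum_boole]
  have := count_bound (Ψ i) (Ψ j) hi hj k l (hcop _) (hcop _)
    (Finset.univ.filter fun n : Fin d → Fin M =>
      ∀ i, ((Ψ i).eval (fun k => (n k : ℤ))) % ((p ^ a i : ℕ) : ℤ) = 0) (by
    intro n hn
    have hn := (Finset.mem_filter.1 hn).2
    exact ⟨Int.dvd_of_emod_eq_zero (hn i), Int.dvd_of_emod_eq_zero (hn j)⟩)
  have hp0 : (0 : ℝ) < (p : ℝ) ^ (a i + a j) := pow_pos (by exact_mod_cast hp.pos) _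
  have hM0 : (0 : ℝ) < (M : ℝ) ^ d := pow_pos (by exact_mod_cast Nat.pos_of_ne_zero hM) _
  rw [div_le_iff₀ hM0, inv_mul_eq_div, le_div_iff₀ hp0, pow_add]
  exact_mod_cast this
end
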